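/- arXiv:1507.01912 — 3 statements merged into one kernel-verified Lean document; each statement's English description precedes it below -/
import Mathlib

section
/- Let n > m > 1 be natural numbers, and let H be the subgroup of SL(n,ℝ) consisting of all block matrices diag(A, I_{n−m}) with A ∈ SL(m,ℝ) (the image of the standard top-left-corner embedding of SL(m,ℝ) into SL(n,ℝ)). Suppose Γ is a virtually solvable subgroup of SL(n,ℝ) whose action by left translations on the coset space SL(n,ℝ)/H is proper, in the sense that for every compact subset C of SL(n,ℝ)/H the set {γ ∈ Γ : γ·C ∩ C ≠ ∅} has compact closure in SL(n,ℝ). Then the double quotient Γ\(SL(n,ℝ)/H) is not compact. -/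
/-!
Suppose `Γ` is virtually solvable and acts properly and cocompactly on `SL(n, ℝ) / H`.

**Bounded data.** A coset `g H` is determined by the columns of `g` and the rows of `g⁻¹` with index
at least `m`. As these dual systems of vectors and covectors can be completed to matrices of
determinant one of controlled size (`exists_completion`), properness and cocompactness become
quantitative statements `Prp` and `Coc` about the boundedness of these data. In particular every
pair of a vector `v` and a covector `f` with `f v = 1` can be moved by `Γ` into a fixed bounded set
(`VecCoc`).

**Triangularization.** A solvable group of complex linear maps has a common eigenvector after
passing to a subgroup of finite index (`exists_virtual_eigenvector`). Applied to complex valued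
functionals on an invariant real subspace, this gives an eigenfunctional, which `VecCoc` forces to
have real rank one (`not_surjective_of_vecCoc`); so its kernel is an invariant hyperplane. By
induction, a subgroup of finite index is conjugate to a group of real upper triangular matrices
(`exists_triangular`), and one may replace `Γ` by the latter.

**The unipotent part.** `VecCoc` also yields `γ0 ∈ Γ` whose diagonal entries have pairwise distinct
absolute values (`exists_regular`). Conjugating regular elements to their diagonal part, one finds
that the subgroup `N` of unipotent elements of `Γ` is still cocompact on unitriangular matrices
modulo the data (`unipotent_cocompact`). These data can be computed on affine slices, so `N` acts
properly and cocompactly on a space `ℝ ^ P`, preserving volume, while a triangular matrix `b` scales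
volume by an explicit product `kappa b` of ratios of diagonal entries.

**Two slices.** The same holds for the index set obtained from `{m, …, n - 1}` by exchanging `m`
and `m - 1`, since exchanging these indices is right multiplication by a signed permutation matrix
(`exists_exch`). Thus `N` acts properly and cocompactly on two slices, and the elements of `Γ`
normalize `N`. Double counting in the product of the slices, combined with the polynomial growth of
`N`, shows that the two scaling factors of `b ∈ Γ` agree up to a constant that does not depend on `b`
(`Slice.transport`). Applied to all powers of `γ0`, the factors of `γ0` must be equal. Their quotient,
however, is `(|λ| / |μ|) ^ (m - 1)` for the consecutive diagonal entries `λ` and `μ` of `γ0` in the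
positions `m - 1` and `m` (`kappa_ratio`). As `m > 1`, this contradicts the choice of `γ0`
(`triangular_false`).
-/


/-- Topology on `SL(k, ℝ)`, as a subspace of the space of `k × k` real matrices. -/
instance (k : ℕ) : TopologicalSpace (Matrix.SpecialLinearGroup (Fin k) ℝ) :=
  TopologicalSpace.induced
    (fun g => (g : Matrix (Fin k) (Fin k) ℝ)) inferInstance

/-! ### Representations of solvable groups -/

section VirtualEigenvector
open scoped commutatorElement

/-- A subgroup is of finite index if its left cosets are unions of fibres of a map with finite range. -/
theorem finiteIndex_of_fun {G α : Type*} [Group G] (H : Subgroup G) (F : G → α)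
    (hF : (Set.range F).Finite) (h : ∀ g g', F g = F g' → g⁻¹ * g' ∈ H) : H.FiniteIndex := by
  have : Finite (Set.range F) := hF
  have hs : Function.Surjective
      (fun y : Set.range F => (QuotientGroup.mk y.2.choose : G ⧸ H)) := by
    intro q
    obtain ⟨g, rfl⟩ := QuotientGroup.mk_surjective q
    refine ⟨⟨F g, g, rfl⟩, ?_⟩
    have h2 : ∃ y, F y = F g := ⟨g, rfl⟩
    exact QuotientGroup.eq.2 (h _ _ h2.choose_spec)
  have : Finite (G ⧸ H) := Finite.of_surjective _ hs
  exact H.finiteIndex_of_finite_quotient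

section LieKolchin

variable {G E : Type*} [Group G] [AddCommGroup E] [Module ℂ E] [FiniteDimensional ℂ E]

/-- Commuting operators on a nonzero finite-dimensional complex space have a common eigenvector: take
a nonzero invariant subspace of minimal dimension. -/
theorem exists_common_eigenvector [Nontrivial E] (S : Set (Module.End ℂ E))
    (hS : ∀ f ∈ S, ∀ g ∈ S, f * g = g * f) :
    ∃ z : E, z ≠ 0 ∧ ∀ f ∈ S, ∃ c : ℂ, f z = c • z := by
  classical
  let P : ℕ → Prop := fun d => ∃ W : Submodule ℂ E, W ≠ ⊥ ∧ (∀ f ∈ S, ∀ w ∈ W, f w ∈ W) ∧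
    Module.finrank ℂ W = d
  have hP : ∃ d, P d := ⟨_, ⊤, top_ne_bot, fun _ _ _ _ => trivial, rfl⟩
  obtain ⟨W, hW0, hWS, hWd⟩ := Nat.find_spec hP
  obtain ⟨z, hz, hz0⟩ := W.ne_bot_iff.1 hW0
  refine ⟨z, hz0, fun f hf => ?_⟩
  have : Nontrivial W := Submodule.nontrivial_iff_ne_bot.2 hW0
  obtain ⟨c, hc⟩ := Module.End.exists_eigenvalue (f.restrict (hWS f hf))
  obtain ⟨v, hv⟩ := hc.exists_hasEigenvector
  have hv' : f (v : E) = c • (v : E) := congrArg Subtype.val hv.apply_eq_smul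
  have hv0 : (v : E) ≠ 0 := fun h => hv.2 (Subtype.ext h)
  -- the part of the eigenspace inside `W` is invariant, hence all of `W` by minimality
  let W' : Submodule ℂ E := W ⊓ Module.End.eigenspace f c
  have hW'0 : W' ≠ ⊥ := by
    rw [Submodule.ne_bot_iff]
    exact ⟨v, ⟨v.2, Module.End.mem_eigenspace_iff.2 hv'⟩, hv0⟩
  have hW'S : ∀ g ∈ S, ∀ w ∈ W', g w ∈ W' := by
    rintro g hg w ⟨hw1, hw2⟩
    refine ⟨hWS g hg w hw1, Module.End.mem_eigenspace_iff.2 ?_⟩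
    have := Module.End.mem_eigenspace_iff.1 hw2
    have h2 := congrArg (fun k : Module.End ℂ E => k w) (hS f hf g hg)
    simp only [Module.End.mul_apply] at h2
    rw [h2, this, map_smul]
  have hle : Module.finrank ℂ W ≤ Module.finrank ℂ W' := by
    rw [hWd]
    exact Nat.find_min' hP ⟨W', hW'0, hW'S, rfl⟩
  have heq : W' = W := Submodule.eq_of_le_of_finrank_le inf_le_left hle
  have : z ∈ W' := heq ▸ hz
  exact ⟨c, Module.End.mem_eigenspace_iff.1 this.2⟩

/-- The image of `B` under `ρ` is finite up to scalars: every `ρ b` is a multiple of a member of a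
fixed finite set of operators. -/
def ProjFinite (ρ : G →* Module.End ℂ E) (B : Subgroup G) : Prop :=
  ∃ Φ : Set (Module.End ℂ E), Φ.Finite ∧ ∀ b ∈ B, ∃ c : ℂ, ∃ φ ∈ Φ, ρ b = c • φ

/-- No subgroup of finite index preserves a proper nonzero subspace. -/
def StronglyIrred (ρ : G →* Module.End ℂ E) : Prop :=
  ∀ G1 : Subgroup G, G1.FiniteIndex → ∀ W : Submodule ℂ E,
    (∀ g ∈ G1, ∀ w ∈ W, ρ g w ∈ W) → W = ⊥ ∨ W = ⊤

omit [FiniteDimensional ℂ E] in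
theorem rho_inv_mul (ρ : G →* Module.End ℂ E) (g : G) : ρ g⁻¹ * ρ g = 1 := by
  rw [← map_mul, inv_mul_cancel, map_one]

omit [FiniteDimensional ℂ E] in
theorem rho_mul_inv (ρ : G →* Module.End ℂ E) (g : G) : ρ g * ρ g⁻¹ = 1 := by
  rw [← map_mul, mul_inv_cancel, map_one]

/-- The linear span of the image of `B` is spanned by the images of finitely many elements of `B`. -/
theorem exists_finite_span (ρ : G →* Module.End ℂ E) (B : Subgroup G) :
    ∃ (d : ℕ) (b : Fin d → G), (∀ i, b i ∈ B) ∧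
      ∀ x ∈ B, ρ x ∈ Submodule.span ℂ (Set.range fun i => ρ (b i)) := by
  obtain ⟨f, hf, hspan, -⟩ := Submodule.exists_fun_fin_finrank_span_eq ℂ (ρ '' (B : Set G))
  choose b hbB hb using hf
  refine ⟨_, b, hbB, fun x hx => ?_⟩
  have : (fun i => ρ (b i)) = f := funext hb
  rw [this, hspan]
  exact Submodule.subset_span ⟨x, hx, rfl⟩

/-- Commutators have determinant one, so on `⁅B, B⁆` only finitely many scalars can occur. -/
theorem finite_image_of_projFinite (ρ : G →* Module.End ℂ E) [Nontrivial E] (B : Subgroup G)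
    (h : ProjFinite ρ ⁅B, B⁆) : (ρ '' (⁅B, B⁆ : Subgroup G)).Finite := by
  obtain ⟨Φ, hΦ, hB⟩ := h
  let D : G →* ℂˣ := (MonoidHom.comp LinearMap.det ρ).toHomUnits
  have hdet : ∀ x ∈ ⁅B, B⁆, LinearMap.det (ρ x) = 1 := by
    have : ⁅B, B⁆ ≤ D.ker := by
      rw [Subgroup.commutator_le]
      intro g _ g' _
      rw [MonoidHom.mem_ker, map_commutatorElement]
      exact commutatorElement_eq_one_iff_mul_comm.2 (mul_comm _ _)
    intro x hx
    have h1 := congrArg Units.val (MonoidHom.mem_ker.1 (this hx))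
    simpa [D] using h1
  have hd : 0 < Module.finrank ℂ E := Module.finrank_pos
  have hfin : (⋃ φ ∈ Φ, (fun c : ℂ => c • φ) ''
      {c | c ^ Module.finrank ℂ E = (LinearMap.det φ)⁻¹}).Finite := by
    refine hΦ.biUnion fun φ _ => Set.Finite.image _ ?_
    refine Set.Finite.subset (Multiset.finite_toSet
      (Polynomial.nthRoots (Module.finrank ℂ E) (LinearMap.det φ)⁻¹)) ?_
    intro c hc
    exact (Polynomial.mem_nthRoots hd).2 hc
  refine hfin.subset ?_
  rintro _ ⟨x, hx, rfl⟩
  obtain ⟨c, φ, hφ, hxc⟩ := hB x hx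
  refine Set.mem_biUnion hφ ⟨c, ?_, hxc.symm⟩
  have := hdet x hx
  rw [hxc, LinearMap.det_smul] at this
  exact eq_inv_of_mul_eq_one_left this

/-- One step down the derived series. Let `Z` be the subgroup of those elements of the normal subgroup
`B` whose image commutes with that of `B`. Since the image of `⁅B, B⁆` is finite, `Z` has finite index in `B` up
to elements acting trivially; and a weight of `Z` is fixed by a subgroup of finite index of `G`, so
strong irreducibility forces `Z` to act by scalars. -/
theorem projFinite_step (ρ : G →* Module.End ℂ E) [Nontrivial E] (hρ : StronglyIrred ρ)
    (B : Subgroup G) [hBn : B.Normal] (h : ProjFinite ρ ⁅B, B⁆) : ProjFinite ρ B := by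
  classical
  have hfin := finite_image_of_projFinite ρ B h
  obtain ⟨d, b, hbB, hbspan⟩ := exists_finite_span ρ B
  -- the elements of `B` acting centrally
  let Z : Subgroup G :=
    { carrier := {x | x ∈ B ∧ ∀ y ∈ B, ρ x * ρ y = ρ y * ρ x}
      one_mem' := ⟨B.one_mem, by simp⟩
      mul_mem' := by
        rintro x x' ⟨hx, hx2⟩ ⟨hx', hx2'⟩
        refine ⟨B.mul_mem hx hx', fun y hy => ?_⟩
        rw [map_mul, mul_assoc, hx2' y hy, ← mul_assoc, hx2 y hy, mul_assoc]
      inv_mem' := by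
        rintro x ⟨hx, hx2⟩
        refine ⟨B.inv_mem hx, fun y hy => ?_⟩
        calc ρ x⁻¹ * ρ y = ρ x⁻¹ * (ρ y * ρ x) * ρ x⁻¹ := by
              rw [mul_assoc, mul_assoc, rho_mul_inv, mul_one]
          _ = ρ y * ρ x⁻¹ := by rw [← hx2 y hy, ← mul_assoc, rho_inv_mul, one_mul] }
  have hZB : ∀ x ∈ Z, x ∈ B := fun x hx => hx.1
  have hZc : ∀ x ∈ Z, ∀ y ∈ B, ρ x * ρ y = ρ y * ρ x := fun x hx => hx.2
  have hZn : ∀ g : G, ∀ x ∈ Z, g⁻¹ * x * g ∈ Z := by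
    intro g x hx
    have hconj : ∀ y ∈ B, g⁻¹ * y * g ∈ B := fun y hy => by
      simpa using hBn.conj_mem y hy g⁻¹
    refine ⟨hconj x hx.1, fun y hy => ?_⟩
    have hy' := hBn.conj_mem y hy g
    have e := hx.2 _ hy'
    rw [← map_mul, ← map_mul] at e ⊢
    have e2 := congrArg (fun k => ρ g⁻¹ * k * ρ g) e
    simp only [← map_mul] at e2
    convert e2 using 2 <;> group
  -- `F` takes finitely many values on `B`, and elements with equal values agree modulo `Z`
  let F : G → (Fin d → Module.End ℂ E) := fun x i => ρ ⁅x, b i⁆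
  have hFfin : (F '' (B : Set G)).Finite := by
    refine Set.Finite.subset (Set.Finite.pi' (fun _ : Fin d => hfin)) ?_
    rintro _ ⟨x, hx, rfl⟩ i
    exact ⟨_, Subgroup.commutator_mem_commutator hx (hbB i), rfl⟩
  have hFZ : ∀ x ∈ B, ∀ x' ∈ B, F x = F x' → x⁻¹ * x' ∈ Z := by
    intro x hx x' hx' hxx
    refine ⟨B.mul_mem (B.inv_mem hx) hx', fun y hy => ?_⟩
    have key : ∀ i, ρ (x⁻¹ * x') * ρ (b i) = ρ (b i) * ρ (x⁻¹ * x') := by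
      intro i
      have e := congrFun hxx i
      simp only [F, commutatorElement_def] at e
      have e2 := congrArg (fun k => ρ x⁻¹ * k * ρ (b i * x')) e.symm
      simp only [← map_mul] at e2 ⊢
      convert e2 using 2 <;> group
    have hy2 := hbspan y hy
    generalize ρ y = k at hy2
    induction hy2 using Submodule.span_induction with
    | mem k hk => obtain ⟨i, rfl⟩ := hk; exact key i
    | zero => simp
    | add k k' _ _ h1 h2 => rw [mul_add, h1, h2, add_mul]
    | smul c k _ h1 => rw [mul_smul_comm, h1, smul_mul_assoc]
  -- a weight `χ` of `Z`; its values outside `Z` are irrelevant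
  obtain ⟨z, hz0, hz⟩ := exists_common_eigenvector (ρ '' (Z : Set G)) (by
    rintro _ ⟨x, hx, rfl⟩ _ ⟨y, hy, rfl⟩
    exact hZc x hx y (hZB y hy))
  have hz' : ∀ x : G, ∃ c : ℂ, x ∈ Z → ρ x z = c • z := by
    intro x
    by_cases hx : x ∈ Z
    · obtain ⟨c, hc⟩ := hz _ ⟨x, hx, rfl⟩
      exact ⟨c, fun _ => hc⟩
    · exact ⟨0, fun h => absurd h hx⟩
  choose χ hχ using hz'
  have hχu : ∀ x ∈ Z, ∀ c : ℂ, ρ x z = c • z → c = χ x := fun x hx c hc =>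
    smul_left_injective ℂ hz0 (hc.symm.trans (hχ x hx))
  -- the stabilizer of the weight
  let G' : Subgroup G :=
    { carrier := {g | ∀ x ∈ Z, χ (g⁻¹ * x * g) = χ x}
      one_mem' := by intro x _; simp
      mul_mem' := by
        intro g g' hg hg' x hx
        have e1 := hg' _ (hZn g x hx)
        have e2 := hg x hx
        rw [← e2, ← e1]; congr 1; group
      inv_mem' := by
        intro g hg x hx
        have hx' : g⁻¹⁻¹ * x * g⁻¹ ∈ Z := hZn g⁻¹ x hx
        have e := hg _ hx'
        rw [← e]; congr 1; group }
  obtain ⟨r, a, haZ, haspan⟩ := exists_finite_span ρ Z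
  have hG' : G'.FiniteIndex := by
    refine finiteIndex_of_fun G' (fun g => fun i : Fin r => χ (g⁻¹ * a i * g)) ?_ ?_
    · refine Set.Finite.subset (Set.Finite.pi'
        (fun i : Fin r => Module.End.finite_hasEigenvalue (ρ (a i)))) ?_
      rintro _ ⟨g, rfl⟩ i
      have e := hχ _ (hZn g _ (haZ i))
      have e2 : ρ (a i) (ρ g z) = χ (g⁻¹ * a i * g) • ρ g z := by
        rw [← map_smul, ← e, map_mul, map_mul]
        simp only [Module.End.mul_apply]
        rw [← Module.End.mul_apply (ρ g) (ρ g⁻¹), rho_mul_inv]; rfl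
      refine Module.End.hasEigenvalue_of_hasEigenvector (x := ρ g z)
        ⟨Module.End.mem_eigenspace_iff.2 e2, ?_⟩
      intro h0
      apply hz0
      have := congrArg (ρ g⁻¹) h0
      rwa [← Module.End.mul_apply, rho_inv_mul, map_zero] at this
    · intro g g' hgg x hx
      -- values of the two conjugate weights agree on the spanning family, hence everywhere
      have agree : ∀ y ∈ Z, χ (g⁻¹ * y * g) = χ (g'⁻¹ * y * g') := by
        have key : ∀ k ∈ Submodule.span ℂ (Set.range fun i => ρ (a i)), ∃ c : ℂ,
            (ρ g⁻¹ * k * ρ g) z = c • z ∧ (ρ g'⁻¹ * k * ρ g') z = c • z := by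
          intro k hk
          induction hk using Submodule.span_induction with
          | mem k hk =>
            obtain ⟨i, rfl⟩ := hk
            refine ⟨χ (g⁻¹ * a i * g), ?_, ?_⟩
            · rw [← hχ _ (hZn g _ (haZ i))]; simp [map_mul]
            · have := congrFun hgg i
              rw [show χ (g⁻¹ * a i * g) = χ (g'⁻¹ * a i * g') from this, ← hχ _ (hZn g' _ (haZ i))]
              simp [map_mul]
          | zero => exact ⟨0, by simp, by simp⟩
          | add k k' _ _ h1 h2 =>
            obtain ⟨c, h1, h1'⟩ := h1
            obtain ⟨c', h2, h2'⟩ := h2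
            exact ⟨c + c', by rw [mul_add, add_mul, LinearMap.add_apply, h1, h2, add_smul],
              by rw [mul_add, add_mul, LinearMap.add_apply, h1', h2', add_smul]⟩
          | smul c k _ h1 =>
            obtain ⟨c', h1, h1'⟩ := h1
            exact ⟨c * c', by rw [mul_smul_comm, smul_mul_assoc, LinearMap.smul_apply, h1, mul_smul],
              by rw [mul_smul_comm, smul_mul_assoc, LinearMap.smul_apply, h1', mul_smul]⟩
        intro y hy
        obtain ⟨c, h1, h2⟩ := key _ (haspan y hy)
        rw [← map_mul, ← map_mul] at h1 h2
        rw [← hχu _ (hZn g y hy) c h1, ← hχu _ (hZn g' y hy) c h2]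
      have hy : g * x * g⁻¹ ∈ Z := by simpa using hZn g⁻¹ x hx
      have e := agree _ hy
      calc χ ((g⁻¹ * g')⁻¹ * x * (g⁻¹ * g')) = χ (g'⁻¹ * (g * x * g⁻¹) * g') := by
            congr 1; group
        _ = χ (g⁻¹ * (g * x * g⁻¹) * g) := e.symm
        _ = χ x := by congr 1; group
  -- the weight space, which is invariant under the stabilizer
  let W : Submodule ℂ E :=
    { carrier := {w | ∀ x ∈ Z, ρ x w = χ x • w}
      zero_mem' := by intro x _; simp
      add_mem' := by
        intro w w' hw hw' x hx
        rw [map_add, hw x hx, hw' x hx, smul_add]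
      smul_mem' := by
        intro c w hw x hx
        rw [map_smul, hw x hx, smul_comm] }
  have hWtop : W = ⊤ := by
    refine (hρ G' hG' W ?_).resolve_left ?_
    · intro g hg w hw x hx
      have e : ρ x (ρ g w) = ρ g (ρ (g⁻¹ * x * g) w) := by
        rw [← Module.End.mul_apply, ← Module.End.mul_apply, ← map_mul, ← map_mul]
        congr 2; group
      rw [e, hw _ (hZn g x hx), hg x hx, map_smul]
    · rw [← Ne, Submodule.ne_bot_iff]
      exact ⟨z, fun x hx => hχ x hx, hz0⟩
  have hscal : ∀ x ∈ Z, ρ x = χ x • (1 : Module.End ℂ E) := by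
    intro x hx
    ext w
    have : w ∈ W := hWtop ▸ Submodule.mem_top
    simpa using this x hx
  choose! rep hrep using fun (y : Fin d → Module.End ℂ E) (hy : y ∈ F '' (B : Set G)) => hy
  refine ⟨(fun y => ρ (rep y)) '' (F '' (B : Set G)), hFfin.image _, fun x hx => ?_⟩
  have hy : F x ∈ F '' (B : Set G) := ⟨x, hx, rfl⟩
  have hZx := hFZ _ (hrep _ hy).1 x hx (hrep _ hy).2
  refine ⟨χ ((rep (F x))⁻¹ * x), _, ⟨F x, hy, rfl⟩, ?_⟩
  calc ρ x = ρ (rep (F x)) * ρ ((rep (F x))⁻¹ * x) := by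
        rw [← map_mul]; congr 1; group
    _ = _ := by rw [hscal _ hZx, mul_smul_comm, mul_one]

/-- In a strongly irreducible representation of a solvable group, a subgroup of finite index acts by
scalars: climb the derived series from the trivial group to `G` by `projFinite_step`. -/
theorem exists_scalar_subgroup [Group.IsSolvable G] [Nontrivial E] (ρ : G →* Module.End ℂ E)
    (hρ : StronglyIrred ρ) :
    ∃ G1 : Subgroup G, G1.FiniteIndex ∧ ∀ g ∈ G1, ∃ c : ℂ, ρ g = c • (1 : Module.End ℂ E) := by
  obtain ⟨k, hk⟩ := (Group.isSolvable_def G).1 ‹_›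
  have hall : ∀ j ≤ k, ProjFinite ρ (derivedSeries G (k - j)) := by
    intro j
    induction j with
    | zero =>
      intro _
      rw [Nat.sub_zero, hk]
      refine ⟨{1}, Set.finite_singleton _, fun b hb => ⟨1, 1, rfl, ?_⟩⟩
      rw [Subgroup.mem_bot.1 hb, map_one, one_smul]
    | succ j ih =>
      intro hj
      have h1 := ih (by omega)
      have e : k - j = (k - (j + 1)) + 1 := by omega
      rw [e, derivedSeries_succ] at h1
      have := derivedSeries_normal G (k - (j + 1))
      exact projFinite_step ρ hρ _ h1
  obtain ⟨Φ, hΦ, hB⟩ := hall k le_rfl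
  rw [Nat.sub_self, derivedSeries_zero] at hB
  have hB' := fun b : G => hB b trivial
  choose c φ hφ hcφ using hB'
  have hc0 : ∀ g, c g ≠ 0 := by
    intro g h0
    have := rho_inv_mul ρ g
    rw [hcφ g, h0, zero_smul, mul_zero] at this
    exact zero_ne_one this
  let G1 : Subgroup G :=
    { carrier := {g | ∃ c : ℂ, ρ g = c • (1 : Module.End ℂ E)}
      one_mem' := ⟨1, by rw [map_one, one_smul]⟩
      mul_mem' := by
        rintro g g' ⟨c, hc⟩ ⟨c', hc'⟩
        exact ⟨c * c', by rw [map_mul, hc, hc', smul_mul_smul_comm, mul_one]⟩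
      inv_mem' := by
        rintro g ⟨c, hc⟩
        have h1 := rho_inv_mul ρ g
        rw [hc, mul_smul_comm, mul_one] at h1
        have hc0 : c ≠ 0 := by
          rintro rfl
          rw [zero_smul] at h1
          exact zero_ne_one h1
        exact ⟨c⁻¹, by rw [← h1, smul_smul, inv_mul_cancel₀ hc0, one_smul]⟩ }
  refine ⟨G1, finiteIndex_of_fun G1 φ (hΦ.subset ?_) ?_, fun g hg => hg⟩
  · rintro _ ⟨g, rfl⟩
    exact hφ g
  · intro g g' hgg
    refine ⟨(c g)⁻¹ * c g', ?_⟩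
    have : ρ g' = ((c g)⁻¹ * c g') • ρ g := by
      rw [hcφ g', hcφ g, hgg, smul_smul, mul_right_comm, inv_mul_cancel₀ (hc0 g), one_mul]
    rw [map_mul, this, mul_smul_comm, rho_inv_mul]

/-- A solvable group of operators on a nonzero finite-dimensional complex vector space has, after
passing to a subgroup of finite index, a common eigenvector. No topology or algebraicity is needed:
a finite-index subgroup and an invariant subspace of minimal dimension give a strongly irreducible
representation. -/
theorem exists_virtual_eigenvector [Group.IsSolvable G] [Nontrivial E] (ρ : G →* Module.End ℂ E) :
    ∃ G1 : Subgroup G, G1.FiniteIndex ∧ ∃ z : E, z ≠ 0 ∧ ∀ g ∈ G1, ∃ c : ℂ, ρ g z = c • z := by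
  classical
  let P : ℕ → Prop := fun d => ∃ G1 : Subgroup G, G1.FiniteIndex ∧ ∃ W : Submodule ℂ E,
    W ≠ ⊥ ∧ (∀ g ∈ G1, ∀ w ∈ W, ρ g w ∈ W) ∧ Module.finrank ℂ W = d
  have hP : ∃ d, P d := ⟨_, ⊤, inferInstance, ⊤, top_ne_bot, fun _ _ _ _ => trivial, rfl⟩
  obtain ⟨G1, hG1, W, hW0, hWG, hWd⟩ := Nat.find_spec hP
  have : Nontrivial W := Submodule.nontrivial_iff_ne_bot.2 hW0
  let σ : G1 →* Module.End ℂ W :=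
    { toFun := fun g => (ρ g).restrict (hWG g g.2)
      map_one' := by ext w; simp
      map_mul' := by intro g g'; ext w; simp }
  have hσ : StronglyIrred σ := by
    intro G2 hG2 U hU
    by_cases hU0 : U = ⊥
    · exact Or.inl hU0
    right
    have h1 : P (Module.finrank ℂ (U.map W.subtype)) := by
      refine ⟨G2.map G1.subtype, ?_, U.map W.subtype, ?_, ?_, rfl⟩
      · rw [Subgroup.finiteIndex_iff, Subgroup.index_map_subtype]
        exact mul_ne_zero hG2.index_ne_zero hG1.index_ne_zero
      · intro h
        exact hU0 (Submodule.map_injective_of_injective W.subtype_injective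
          (h.trans (Submodule.map_bot _).symm))
      · rintro _ ⟨g, hg, rfl⟩ _ ⟨w, hw, rfl⟩
        exact ⟨_, hU g hg w hw, rfl⟩
    have h2 := Nat.find_min' hP h1
    rw [← hWd, Submodule.finrank_map_subtype_eq] at h2
    · exact Submodule.eq_top_of_finrank_eq (le_antisymm (Submodule.finrank_le _) h2)
  obtain ⟨G2, hG2, h⟩ := exists_scalar_subgroup σ hσ
  obtain ⟨z, hz0⟩ := exists_ne (0 : W)
  refine ⟨G2.map G1.subtype, ?_, z, fun h => hz0 (Subtype.ext h), ?_⟩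
  · rw [Subgroup.finiteIndex_iff, Subgroup.index_map_subtype]
    exact mul_ne_zero hG2.index_ne_zero hG1.index_ne_zero
  · rintro _ ⟨g, hg, rfl⟩
    obtain ⟨c, hc⟩ := h g hg
    refine ⟨c, ?_⟩
    have := congrArg Subtype.val (congrArg (fun k : Module.End ℂ W => k z) hc)
    simpa [σ] using this

end LieKolchin

end VirtualEigenvector

/-! ### Bounded matrices, cocompactness and properness -/

/-- `SL(n, ℝ)`. -/
abbrev SLR (n : ℕ) := Matrix.SpecialLinearGroup (Fin n) ℝ

/-- All entries have absolute value at most `R`. -/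
def EB {n : ℕ} (R : ℝ) (g : SLR n) : Prop := ∀ i j, |g.1 i j| ≤ R

/-- The columns of `g` and the rows of `g⁻¹` with index in `J` are bounded by `R`. For
`J = {m, …, n - 1}` this measures the size of the coset `g H`. -/
def QB {n : ℕ} (J : Set (Fin n)) (R : ℝ) (g : SLR n) : Prop :=
  ∀ j ∈ J, ∀ i, |g.1 i j| ≤ R ∧ |(g⁻¹).1 j i| ≤ R

/-- Uniform cocompactness of the action of `Γ`, expressed through `QB`. -/
def Coc {n : ℕ} (J : Set (Fin n)) (Γ : Subgroup (SLR n)) : Prop :=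
  ∃ R : ℝ, ∀ g, ∃ γ ∈ Γ, QB J R (γ * g)

/-- Properness of the action of `Γ`, expressed through `QB`. -/
def Prp {n : ℕ} (J : Set (Fin n)) (Γ : Subgroup (SLR n)) : Prop :=
  ∀ R : ℝ, ∃ C : ℝ, ∀ γ ∈ Γ, ∀ g, QB J R g → QB J R (γ * g) → EB C γ

section Basic
variable {n : ℕ}

theorem EB.mono {R R' : ℝ} (h : R ≤ R') {g : SLR n} (hg : EB R g) : EB R' g :=
  fun i j => (hg i j).trans h

theorem QB.mono {J : Set (Fin n)} {R R' : ℝ} (h : R ≤ R') {g : SLR n} (hg : QB J R g) :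
    QB J R' g := fun j hj i => ⟨(hg j hj i).1.trans h, (hg j hj i).2.trans h⟩

theorem abs_sum_mul_le (a b : Fin n → ℝ) (A B : ℝ) (ha : ∀ i, |a i| ≤ A) (hb : ∀ i, |b i| ≤ B) :
    |∑ i, a i * b i| ≤ n * A * B := by
  calc |∑ i, a i * b i| ≤ ∑ i, |a i * b i| := Finset.abs_sum_le_sum_abs _ _
    _ ≤ ∑ _i : Fin n, A * B := Finset.sum_le_sum fun i _ => by
        rw [abs_mul]
        exact mul_le_mul (ha i) (hb i) (abs_nonneg _) ((abs_nonneg _).trans (ha i))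
    _ = n * A * B := by simp [mul_assoc]

theorem mul_entry (g h : SLR n) (i j : Fin n) : (g * h).1 i j = ∑ l, g.1 i l * h.1 l j := by
  change (g.1 * h.1) i j = _
  rw [Matrix.mul_apply]

theorem EB.mul {A B : ℝ} {g h : SLR n} (hg : EB A g) (hh : EB B h) : EB (n * A * B) (g * h) := by
  intro i j
  rw [mul_entry]
  exact abs_sum_mul_le _ _ _ _ (hg i) fun l => hh l j

theorem EB.inv {A : ℝ} {g : SLR n} (hg : EB A g) :
    EB (n.factorial * (max A 1) ^ n) g⁻¹ := by
  intro i j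
  rw [Matrix.SpecialLinearGroup.coe_inv, Matrix.adjugate_apply]
  have := Matrix.det_le (A := (g.1.updateRow j (Pi.single i 1))) (abv := AbsoluteValue.abs)
    (x := max A 1) (by
      intro k l
      rw [Matrix.updateRow_apply]
      split_ifs
      · rw [Pi.single_apply]
        split_ifs <;> simp
      · exact (hg k l).trans (le_max_left _ _))
  simpa using this

/-- Bounded matrices act boundedly on the quantities measured by `QB`. -/
theorem QB.mul_left {J : Set (Fin n)} {A A' R : ℝ} {b g : SLR n} (hb : EB A b) (hb' : EB A' b⁻¹)
    (hg : QB J R g) : QB J (max (n * A * R) (n * R * A')) (b * g) := by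
  intro j hj i
  constructor
  · rw [mul_entry]
    exact (abs_sum_mul_le _ _ _ _ (hb i) fun l => (hg j hj l).1).trans (le_max_left _ _)
  · rw [mul_inv_rev, mul_entry]
    exact (abs_sum_mul_le _ _ _ _ (fun l => (hg j hj l).2) fun l => hb' l i).trans
      (le_max_right _ _)

theorem EB.qb {J : Set (Fin n)} {A A' : ℝ} {g : SLR n} (hg : EB A g) (hg' : EB A' g⁻¹) :
    QB J (max A A') g := fun j _ i =>
  ⟨(hg i j).trans (le_max_left _ _), (hg' j i).trans (le_max_right _ _)⟩

theorem exists_EB (g : SLR n) : ∃ R, EB R g := by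
  refine ⟨∑ i, ∑ j, |g.1 i j|, fun i j => ?_⟩
  calc |g.1 i j| ≤ ∑ j, |g.1 i j| :=
        Finset.single_le_sum (f := fun j => |g.1 i j|) (fun _ _ => abs_nonneg _) (Finset.mem_univ j)
    _ ≤ _ := Finset.single_le_sum (f := fun i => ∑ j, |g.1 i j|)
        (fun _ _ => Finset.sum_nonneg fun _ _ => abs_nonneg _) (Finset.mem_univ i)

theorem exists_EB_of_finite {ι : Type*} (s : Finset ι) (f : ι → SLR n) :
    ∃ R, ∀ i ∈ s, EB R (f i) := by
  choose R hR using fun i => exists_EB (f i)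
  refine ⟨∑ i ∈ s, |R i|, fun i hi => (hR i).mono ((le_abs_self _).trans ?_)⟩
  exact Finset.single_le_sum (f := fun i => |R i|) (fun _ _ => abs_nonneg _) hi

/-- Upper triangular elements. -/
def UT (g : SLR n) : Prop := ∀ i j, j < i → g.1 i j = 0

theorem UT.mul {g h : SLR n} (hg : UT g) (hh : UT h) : UT (g * h) := by
  intro i j hij
  rw [mul_entry]
  refine Finset.sum_eq_zero fun l _ => ?_
  rcases lt_or_ge l i with hl | hl
  · rw [hg i l hl, zero_mul]
  · rw [hh l j (hij.trans_le hl), mul_zero]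

theorem val_mul_inv (g : SLR n) : g.1 * (g⁻¹).1 = 1 :=
  congrArg Subtype.val (mul_inv_cancel g)

theorem val_inv_mul (g : SLR n) : (g⁻¹).1 * g.1 = 1 :=
  congrArg Subtype.val (inv_mul_cancel g)

theorem coe_inv_eq (g : SLR n) : (g⁻¹).1 = (g.1)⁻¹ := by
  symm
  exact Matrix.inv_eq_right_inv (val_mul_inv g)

theorem UT.inv {g : SLR n} (hg : UT g) : UT g⁻¹ := by
  intro i j hij
  rw [coe_inv_eq]
  have hg' : g.1.BlockTriangular id := fun i j h => hg i j h
  have hi : Invertible g.1 := ⟨(g⁻¹).1, val_inv_mul g, val_mul_inv g⟩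
  exact Matrix.blockTriangular_inv_of_blockTriangular hg' hij

theorem UT.one : UT (1 : SLR n) := by
  intro i j hij
  simp [hij.ne']

theorem UT.mul_diag {g h : SLR n} (hg : UT g) (hh : UT h) (i : Fin n) :
    (g * h).1 i i = g.1 i i * h.1 i i := by
  rw [mul_entry, Finset.sum_eq_single i]
  · intro l _ hl
    rcases lt_or_gt_of_ne hl with hl | hl
    · rw [hg i l hl, zero_mul]
    · rw [hh l i hl, mul_zero]
  · simp

theorem UT.diag_ne {g : SLR n} (hg : UT g) (i : Fin n) : g.1 i i ≠ 0 := by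
  intro h
  have := UT.mul_diag hg hg.inv i
  rw [mul_inv_cancel, h, zero_mul] at this
  simp at this

theorem UT.inv_diag {g : SLR n} (hg : UT g) (i : Fin n) : (g⁻¹).1 i i = (g.1 i i)⁻¹ := by
  have := UT.mul_diag hg hg.inv i
  rw [mul_inv_cancel] at this
  have h1 : (1 : SLR n).1 i i = 1 := by simp
  rw [h1] at this
  exact eq_inv_of_mul_eq_one_right this.symm

theorem UT.pow {g : SLR n} (hg : UT g) (k : ℕ) : UT (g ^ k) := by
  induction k with
  | zero => rw [pow_zero]; exact UT.one
  | succ k ih => rw [pow_succ]; exact ih.mul hg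

theorem UT.pow_diag {g : SLR n} (hg : UT g) (k : ℕ) (i : Fin n) :
    (g ^ k).1 i i = (g.1 i i) ^ k := by
  induction k with
  | zero => simp
  | succ k ih => rw [pow_succ, (hg.pow k).mul_diag hg, ih, pow_succ]

/-- Upper unitriangular elements. -/
def UU (g : SLR n) : Prop := UT g ∧ ∀ i, g.1 i i = 1

theorem UU.one : UU (1 : SLR n) := ⟨UT.one, fun i => by simp⟩

theorem UU.mul {g h : SLR n} (hg : UU g) (hh : UU h) : UU (g * h) :=
  ⟨hg.1.mul hh.1, fun i => by rw [hg.1.mul_diag hh.1, hg.2, hh.2, mul_one]⟩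

theorem UU.inv {g : SLR n} (hg : UU g) : UU g⁻¹ :=
  ⟨hg.1.inv, fun i => by rw [hg.1.inv_diag, hg.2, inv_one]⟩

theorem det_unitriangular (M : Matrix (Fin n) (Fin n) ℝ) (h1 : ∀ i j, j < i → M i j = 0)
    (h2 : ∀ i, M i i = 1) : M.det = 1 := by
  rw [Matrix.det_of_isUpperTriangular (fun i j h => h1 i j h)]
  simp [h2]

end Basic

/-! ### Slices -/

/-- Combinatorial data of a slice: a set of entries above the diagonal which parametrizes, up to
bounded error, the unitriangular matrices modulo the data measured by `QB J`. In column `l` the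
coordinates are the entries in the rows `c l, …, l - 1`. -/
structure Slice (n : ℕ) where
  /-- The first row that carries a coordinate in a given column. -/
  c : Fin n → ℕ
  /-- The columns, and rows of the inverse, that are controlled. -/
  J : Set (Fin n)
  /-- Columns with index in `J` are completely recorded. -/
  c_zero : ∀ j ∈ J, c j = 0
  /-- The coordinates determine the rows of the inverse with index in `J`. -/
  c_le : ∀ j ∈ J, ∀ l, j < l → c l ≤ j
  /-- Every coordinate is an entry of a column with index in `J`, or is, up to sign, an entry of the
  inverse next to the diagonal in a row with index in `J`. -/
  dich : ∀ i l : Fin n, c l ≤ i → i < l → l ∈ J ∨ (i ∈ J ∧ (l : ℕ) = i + 1)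

namespace Slice
variable {n : ℕ} (S : Slice n)

/-- Positions of the coordinates, ordered lexicographically. -/
abbrev P : Type := {p : Fin n ×ₗ Fin n // S.c (ofLex p).2 ≤ (ofLex p).1 ∧ (ofLex p).1 < (ofLex p).2}

noncomputable instance : Fintype S.P := Fintype.ofFinite _

/-- Row index of a position. -/
abbrev row (p : S.P) : Fin n := (ofLex p.1).1
/-- Column index of a position. -/
abbrev col (p : S.P) : Fin n := (ofLex p.1).2

/-- The position `(i, j)`. -/
def pos (i j : Fin n) (h1 : S.c j ≤ i) (h2 : i < j) : S.P := ⟨toLex (i, j), h1, h2⟩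

open Classical in
/-- The unitriangular matrix with prescribed coordinates, all other entries above the diagonal being
zero. -/
noncomputable def U (y : S.P → ℝ) : SLR n :=
  ⟨Matrix.of fun i j => if i = j then 1 else
    if h : S.c j ≤ i ∧ i < j then y (S.pos i j h.1 h.2) else 0, by
    apply det_unitriangular
    · intro i j hij
      simp only [Matrix.of_apply]
      rw [if_neg hij.ne', dif_neg]
      exact fun h => absurd h.2 hij.le.not_gt
    · intro i; simp⟩

theorem U_pos (y : S.P → ℝ) {i j : Fin n} (h1 : S.c j ≤ i) (h2 : i < j) :
    (S.U y).1 i j = y (S.pos i j h1 h2) := by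
  simp only [U, Matrix.of_apply]
  rw [if_neg h2.ne, dif_pos ⟨h1, h2⟩]

theorem U_apply (y : S.P → ℝ) (p : S.P) : (S.U y).1 (S.row p) (S.col p) = y p :=
  S.U_pos y p.2.1 p.2.2

theorem UU_U (y : S.P → ℝ) : UU (S.U y) := by
  constructor
  · intro i j hij
    simp only [U, Matrix.of_apply]
    rw [if_neg hij.ne', dif_neg]
    exact fun h => absurd h.2 hij.le.not_gt
  · intro i; simp [U]

theorem EB_U {y : S.P → ℝ} {R : ℝ} (hy : ‖y‖ ≤ R) : EB (max R 1) (S.U y) := by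
  intro i j
  simp only [U, Matrix.of_apply]
  split_ifs with h1 h2
  · simp
  · exact (Real.norm_eq_abs _ ▸ norm_le_pi_norm y _).trans (hy.trans (le_max_left _ _))
  · simp

/-- The action of an upper triangular matrix on the coordinates: multiply, renormalize the
diagonal on the right, and read off the coordinates. -/
noncomputable def T (b : SLR n) (y : S.P → ℝ) : S.P → ℝ :=
  fun p => (b * S.U y).1 (S.row p) (S.col p) * (b.1 (S.col p) (S.col p))⁻¹

/-- `T b` computes the columns of `b * U y`, rescaled, in all rows where coordinates are recorded. -/
theorem U_T {b : SLR n} (hb : UT b) (y : S.P → ℝ) {l j : Fin n} (h : S.c j ≤ l) :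
    (S.U (S.T b y)).1 l j = (b * S.U y).1 l j * (b.1 j j)⁻¹ := by
  rcases lt_trichotomy l j with hl | rfl | hl
  · rw [S.U_pos _ h hl]; rfl
  · rw [(S.UU_U _).2, hb.mul_diag (S.UU_U y).1, (S.UU_U y).2, mul_one, mul_inv_cancel₀ (hb.diag_ne l)]
  · rw [(S.UU_U _).1 l j hl, (hb.mul (S.UU_U y).1) l j hl, zero_mul]

theorem T_mul {b b' : SLR n} (hb : UT b) (hb' : UT b') (y : S.P → ℝ) :
    S.T (b * b') y = S.T b (S.T b' y) := by
  funext p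
  have key : (b * S.U (S.T b' y)).1 (S.row p) (S.col p) =
      (b * (b' * S.U y)).1 (S.row p) (S.col p) * (b'.1 (S.col p) (S.col p))⁻¹ := by
    rw [mul_entry, mul_entry, Finset.sum_mul]
    refine Finset.sum_congr rfl fun l _ => ?_
    rcases lt_or_ge l (S.row p) with hl | hl
    · rw [hb _ _ hl]; simp
    · rw [S.U_T hb' y (p.2.1.trans hl), mul_assoc]
  unfold T at key ⊢
  rw [key, hb.mul_diag hb', mul_inv_rev, mul_assoc b b', mul_assoc]

theorem T_one (y : S.P → ℝ) : S.T 1 y = y := by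
  funext p
  unfold T
  rw [one_mul, S.U_apply]
  simp

theorem T_inv_T {b : SLR n} (hb : UT b) (y : S.P → ℝ) : S.T b⁻¹ (S.T b y) = y := by
  rw [← S.T_mul hb.inv hb, inv_mul_cancel, T_one]

theorem T_T_inv {b : SLR n} (hb : UT b) (y : S.P → ℝ) : S.T b (S.T b⁻¹ y) = y := by
  rw [← S.T_mul hb hb.inv, mul_inv_cancel, T_one]

theorem norm_T_le {b : SLR n} (hb : UU b) {A R : ℝ} (hA : EB A b) {y : S.P → ℝ}
    (hy : ‖y‖ ≤ R) : ‖S.T b y‖ ≤ n * A * max R 1 := by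
  by_cases hP : IsEmpty S.P
  · have : ‖S.T b y‖ = 0 := by
      rw [norm_eq_zero]; exact Subsingleton.elim _ _
    rw [this]
    by_cases hn : Nonempty (Fin n)
    · obtain ⟨i⟩ := hn
      have : 0 ≤ A := (abs_nonneg _).trans (hA i i)
      positivity
    · have : n = 0 := by
        by_contra h
        exact hn ⟨⟨0, Nat.pos_of_ne_zero h⟩⟩
      simp [this]
  rw [not_isEmpty_iff] at hP
  refine (pi_norm_le_iff_of_nonempty _).2 fun p => ?_
  unfold T
  rw [hb.2, inv_one, mul_one, Real.norm_eq_abs]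
  exact hA.mul (S.EB_U hy) _ _

theorem norm_T_bounded {b : SLR n} (R : ℝ) : ∃ R', ∀ y : S.P → ℝ, ‖y‖ ≤ R → ‖S.T b y‖ ≤ R' := by
  obtain ⟨A, hA⟩ := exists_EB b
  refine ⟨∑ p : S.P, |n * A * max R 1 * (b.1 (S.col p) (S.col p))⁻¹|, fun y hy => ?_⟩
  refine (pi_norm_le_iff_of_nonneg (Finset.sum_nonneg fun _ _ => abs_nonneg _)).2 fun p => ?_
  refine le_trans ?_ (Finset.single_le_sum
    (f := fun p : S.P => |n * A * max R 1 * (b.1 (S.col p) (S.col p))⁻¹|)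
    (fun _ _ => abs_nonneg _) (Finset.mem_univ p))
  unfold T
  rw [Real.norm_eq_abs, abs_mul, abs_mul]
  exact mul_le_mul_of_nonneg_right ((hA.mul (S.EB_U hy) _ _).trans (le_abs_self _)) (abs_nonneg _)

/-- The factor by which `T b` scales volumes. -/
noncomputable def kappa (b : SLR n) : ℝ :=
  ∏ p : S.P, |b.1 (S.row p) (S.row p) * (b.1 (S.col p) (S.col p))⁻¹|

theorem kappa_pos {b : SLR n} (hb : UT b) : 0 < S.kappa b :=
  Finset.prod_pos fun _ _ => abs_pos.2 (mul_ne_zero (hb.diag_ne _) (inv_ne_zero (hb.diag_ne _)))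

theorem kappa_mul {b b' : SLR n} (hb : UT b) (hb' : UT b') :
    S.kappa (b * b') = S.kappa b * S.kappa b' := by
  unfold kappa
  rw [← Finset.prod_mul_distrib]
  refine Finset.prod_congr rfl fun p _ => ?_
  rw [hb.mul_diag hb', hb.mul_diag hb', ← abs_mul]
  congr 1
  rw [mul_inv]; ring

theorem kappa_UU {b : SLR n} (hb : UU b) : S.kappa b = 1 :=
  Finset.prod_eq_one fun p _ => by rw [hb.2, hb.2]; simp

open Classical in
/-- The linear part of `T b`. -/
noncomputable def lin (b : SLR n) : Matrix S.P S.P ℝ :=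
  Matrix.of fun p q => if S.col p = S.col q then
    b.1 (S.row p) (S.row q) * (b.1 (S.col p) (S.col p))⁻¹ else 0

theorem det_lin {b : SLR n} (hb : UT b) :
    (S.lin b).det = ∏ p : S.P, (b.1 (S.row p) (S.row p) * (b.1 (S.col p) (S.col p))⁻¹) := by
  classical
  have htri : (S.lin b).IsUpperTriangular := by
    intro p q hpq
    simp only [lin, Matrix.of_apply]
    split_ifs with h
    · rw [hb, zero_mul]
      have hlt : (q.1 : Fin n ×ₗ Fin n) < p.1 := hpq
      rcases Prod.Lex.lt_iff.1 hlt with h1 | ⟨-, h2⟩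
      · exact h1
      · exact absurd h h2.ne'
    · rfl
  convert Matrix.det_of_isUpperTriangular htri using 2
  simp [lin]

theorem T_eq {b : SLR n} (y : S.P → ℝ) :
    S.T b y = Matrix.toLin' (S.lin b) y + S.T b 0 := by
  classical
  funext p
  rw [Pi.add_apply, Matrix.toLin'_apply]
  simp only [T, Matrix.mulVec, dotProduct, mul_entry]
  rw [← sub_eq_iff_eq_add, ← sub_mul, ← Finset.sum_sub_distrib]
  rw [← Finset.sum_subset (Finset.subset_univ (Finset.univ.filter
    fun q : S.P => S.col p = S.col q))]
  · rw [← Finset.sum_subset (Finset.subset_univ (Finset.univ.filter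
      fun l : Fin n => S.c (S.col p) ≤ l ∧ l < S.col p)), Finset.sum_mul]
    · symm
      refine Finset.sum_bij (fun q _ => S.row q) ?_ ?_ ?_ ?_
      · intro q hq
        rw [Finset.mem_filter] at hq ⊢
        rw [hq.2]
        exact ⟨Finset.mem_univ _, q.2⟩
      · intro q hq q' hq' h
        rw [Finset.mem_filter] at hq hq'
        exact Subtype.ext (Prod.ext h (hq.2.symm.trans hq'.2))
      · intro l hl
        rw [Finset.mem_filter] at hl
        exact ⟨S.pos l (S.col p) hl.2.1 hl.2.2, Finset.mem_filter.2 ⟨Finset.mem_univ _, rfl⟩, rfl⟩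
      · intro q hq
        rw [Finset.mem_filter] at hq
        rw [hq.2, S.U_apply, S.U_apply]
        simp only [lin, Matrix.of_apply, if_pos hq.2, Pi.zero_apply, mul_zero, sub_zero]
        rw [hq.2]; ring
    · intro l _ hl
      rw [Finset.mem_filter] at hl
      have : ∀ y, (S.U y).1 l (S.col p) = if l = S.col p then 1 else 0 := by
        intro y
        simp only [U, Matrix.of_apply]
        split_ifs with h1 h2
        · rfl
        · exact absurd ⟨Finset.mem_univ _, h2⟩ hl
        · rfl
      rw [this, this, sub_self]
  · intro q _ hq
    simp only [Finset.mem_filter, Finset.mem_univ, true_and] at hq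
    simp [lin, if_neg hq]

open MeasureTheory in
/-- `T b` is affine with determinant `± kappa b`. -/
theorem volume_preimage {b : SLR n} (hb : UT b) (s : Set (S.P → ℝ)) :
    volume (S.T b ⁻¹' s) = ENNReal.ofReal (S.kappa b)⁻¹ * volume s := by
  classical
  have h1 : S.T b = (fun y => y + S.T b 0) ∘ Matrix.toLin' (S.lin b) := funext fun y => S.T_eq y
  have hdet : LinearMap.det (Matrix.toLin' (S.lin b)) = (S.lin b).det := LinearMap.det_toLin' _
  have hne : LinearMap.det (Matrix.toLin' (S.lin b)) ≠ 0 := by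
    rw [hdet, S.det_lin hb]
    exact Finset.prod_ne_zero_iff.2 fun p _ =>
      mul_ne_zero (hb.diag_ne _) (inv_ne_zero (hb.diag_ne _))
  rw [h1, Set.preimage_comp, Measure.addHaar_preimage_linearMap _ hne, measure_preimage_add_right,
    hdet, S.det_lin hb, abs_inv, Finset.abs_prod]
  rfl

theorem continuous_T (b : SLR n) : Continuous (S.T b) := by
  have h1 : S.T b = (fun y => y + S.T b 0) ∘ Matrix.toLin' (S.lin b) := funext fun y => S.T_eq y
  rw [h1]
  exact (continuous_add_const _).comp (LinearMap.continuous_of_finiteDimensional _)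

/-- If two unitriangular matrices have the same coordinates, then so do their columns with index
in `J` and the rows of their inverses with index in `J`. -/
theorem QB_congr {g g' : SLR n} (hg : UU g) (hg' : UU g')
    (h : ∀ i j : Fin n, S.c j ≤ i → i < j → g.1 i j = g'.1 i j) {R : ℝ} (hq : QB S.J R g) :
    QB S.J R g' := by
  have hcol : ∀ i j : Fin n, S.c j ≤ i → g.1 i j = g'.1 i j := by
    intro i j hij
    rcases lt_trichotomy i j with hl | rfl | hl
    · exact h i j hij hl
    · rw [hg.2, hg'.2]
    · rw [hg.1 i j hl, hg'.1 i j hl]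
  intro j hj i
  have hc : g'.1 i j = g.1 i j := (hcol i j (by rw [S.c_zero j hj]; exact Nat.zero_le _)).symm
  have hr : (g'⁻¹).1 j i = (g⁻¹).1 j i := by
    -- row `j` of `g⁻¹ * g'` is the `j`-th unit row
    have h1 : ∀ l, (g⁻¹ * g').1 j l = (1 : SLR n).1 j l := by
      intro l
      rw [← inv_mul_cancel g, mul_entry, mul_entry]
      refine Finset.sum_congr rfl fun q _ => ?_
      rcases lt_or_ge q j with hq | hq
      · rw [hg.inv.1 j q hq, zero_mul, zero_mul]
      · rcases lt_or_ge j l with hl | hl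
        · rw [hcol q l ((S.c_le j hj l hl).trans hq)]
        · rcases hl.eq_or_lt with rfl | hl
          · rw [hcol q l (by rw [S.c_zero l hj]; exact Nat.zero_le _)]
          · rw [hg.1 q l (hl.trans_le hq), hg'.1 q l (hl.trans_le hq)]
    have h2 : (g⁻¹).1 j i = ((g⁻¹ * g') * g'⁻¹).1 j i := by rw [mul_assoc, mul_inv_cancel, mul_one]
    rw [h2, mul_entry]
    simp_rw [h1]
    rw [← mul_entry, one_mul]
  rw [hc, hr]
  exact hq j hj i

/-- Conversely, the coordinates are bounded by the quantities measured by `QB`. -/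
theorem abs_le_of_QB {g : SLR n} (hg : UU g) {R : ℝ} (hq : QB S.J R g) {i l : Fin n}
    (h1 : S.c l ≤ i) (h2 : i < l) : |g.1 i l| ≤ R := by
  rcases S.dich i l h1 h2 with h | ⟨h, h'⟩
  · exact (hq l h i).1
  · have h3 := (hq i h l).2
    have h4 : (g⁻¹ * g).1 i l = 0 := by
      rw [inv_mul_cancel]; simp [h2.ne]
    rw [mul_entry, ← Finset.sum_subset (Finset.subset_univ {i, l}), Finset.sum_pair h2.ne,
      hg.inv.2, hg.2, one_mul, mul_one] at h4
    · rw [eq_neg_of_add_eq_zero_left h4, abs_neg]; exact h3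
    · intro q _ hq'
      simp only [Finset.mem_insert, Finset.mem_singleton, not_or] at hq'
      rcases lt_or_ge q i with hqi | hqi
      · rw [hg.inv.1 i q hqi, zero_mul]
      · rw [hg.1 q l, mul_zero]
        have : i < q := lt_of_le_of_ne hqi (Ne.symm hq'.1)
        rw [Fin.lt_def] at this ⊢
        have h5 : (q : ℕ) ≠ l := fun e => hq'.2 (Fin.ext e)
        omega

/-- Slices inherit cocompactness from `QB`-cocompactness on unitriangular matrices. -/
theorem cocompact {N : Subgroup (SLR n)} (hN : ∀ u ∈ N, UU u)
    (h : ∃ R, ∀ g : SLR n, UU g → ∃ u ∈ N, QB S.J R (u * g)) :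
    ∃ R, 0 < R ∧ ∀ y : S.P → ℝ, ∃ u ∈ N, ‖S.T u y‖ < R := by
  obtain ⟨R, h⟩ := h
  refine ⟨|R| + 1, by positivity, fun y => ?_⟩
  obtain ⟨u, hu, hq⟩ := h (S.U y) (S.UU_U y)
  refine ⟨u, hu, lt_of_le_of_lt ?_ (lt_add_one _)⟩
  refine (pi_norm_le_iff_of_nonneg (abs_nonneg _)).2 fun p => ?_
  unfold T
  rw [(hN u hu).2, inv_one, mul_one, Real.norm_eq_abs]
  exact (S.abs_le_of_QB ((hN u hu).mul (S.UU_U y)) hq p.2.1 p.2.2).trans (le_abs_self _)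

/-- Slices inherit properness: points of the slice with bounded coordinates lift to bounded
unitriangular matrices. -/
theorem proper {N : Subgroup (SLR n)} (hN : ∀ u ∈ N, UU u) (h : Prp S.J N) (R : ℝ) :
    ∃ C, ∀ u ∈ N, ∀ y : S.P → ℝ, ‖y‖ ≤ R → ‖S.T u y‖ ≤ R → EB C u := by
  have hb : ∀ y : S.P → ℝ, ‖y‖ ≤ R →
      QB S.J (max (max R 1) (n.factorial * (max (max R 1) 1) ^ n)) (S.U y) :=
    fun y hy => (S.EB_U hy).qb (S.EB_U hy).inv
  obtain ⟨C, hC⟩ := h (max (max R 1) (n.factorial * (max (max R 1) 1) ^ n))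
  refine ⟨C, fun u hu y hy hy' => hC u hu (S.U y) (hb y hy) ?_⟩
  refine S.QB_congr (S.UU_U (S.T u y)) ((hN u hu).mul (S.UU_U y)) ?_ (hb _ hy')
  intro i j hij _
  rw [S.U_T (hN u hu).1 y hij, (hN u hu).2, inv_one, mul_one]

end Slice

/-! ### Comparison of volumes -/

section Volume
open MeasureTheory

/-- Double counting: if `Q` relates `E` only to `F`, and its fibres over `X` are large while its
fibres over `Y` are small, then `F` is not much smaller than `E`. -/
theorem double_count {X Y : Type*} [MeasurableSpace X] [MeasurableSpace Y] (μ : Measure X)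
    (ν : Measure Y) [SFinite μ] [SFinite ν] {Q : Set (X × Y)} (hQ : MeasurableSet Q)
    {E : Set X} {F : Set Y} (hE : MeasurableSet E) (hF : MeasurableSet F) {α β : ENNReal}
    (hα : ∀ x, α ≤ ν {y | (x, y) ∈ Q}) (hβ : ∀ y, μ {x | (x, y) ∈ Q} ≤ β)
    (h : ∀ x y, (x, y) ∈ Q → x ∈ E → y ∈ F) : α * μ E ≤ β * ν F := by
  have hQE : MeasurableSet (Q ∩ E ×ˢ Set.univ) := hQ.inter (hE.prod MeasurableSet.univ)
  have hQF : MeasurableSet (Q ∩ Set.univ ×ˢ F) := hQ.inter (MeasurableSet.univ.prod hF)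
  calc α * μ E = ∫⁻ x in E, α ∂μ := by rw [setLIntegral_const]
    _ ≤ ∫⁻ x in E, ν (Prod.mk x ⁻¹' (Q ∩ E ×ˢ Set.univ)) ∂μ := by
        refine setLIntegral_mono' hE fun x hx => (hα x).trans (measure_mono fun y hy => ?_)
        exact ⟨hy, hx, trivial⟩
    _ ≤ ∫⁻ x, ν (Prod.mk x ⁻¹' (Q ∩ E ×ˢ Set.univ)) ∂μ := setLIntegral_le_lintegral _ _
    _ = (μ.prod ν) (Q ∩ E ×ˢ Set.univ) := (Measure.prod_apply hQE).symm
    _ ≤ (μ.prod ν) (Q ∩ Set.univ ×ˢ F) := measure_mono fun p hp =>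
        ⟨hp.1, trivial, h p.1 p.2 hp.1 hp.2.1⟩
    _ = ∫⁻ y, μ ((fun x => (x, y)) ⁻¹' (Q ∩ Set.univ ×ˢ F)) ∂ν := Measure.prod_apply_symm hQF
    _ ≤ ∫⁻ y, F.indicator (fun _ => β) y ∂ν := by
        refine lintegral_mono fun y => ?_
        by_cases hy : y ∈ F
        · rw [Set.indicator_of_mem hy]
          exact (measure_mono fun x hx => hx.1).trans (hβ y)
        · rw [Set.indicator_of_notMem hy]
          refine le_of_eq (measure_mono_null (t := ∅) (fun x hx => hy hx.2.2) measure_empty)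
    _ = β * ν F := by rw [lintegral_indicator hF, setLIntegral_const]

/-- A sequence of polynomial growth does not double at every second step. -/
theorem exists_not_doubling (a : ℕ → ℝ) (ha : 0 < a 0) (c : ℝ) (d : ℕ)
    (h : ∀ r, a r ≤ c * ((r : ℝ) + 1) ^ d) : ∃ r, 0 < a r ∧ a (r + 2) ≤ 2 * a r := by
  by_contra! hcon
  have hgrow : ∀ s : ℕ, 2 ^ s * a 0 ≤ a (2 * s) := by
    intro s
    induction s with
    | zero => simp
    | succ s ih =>
      have := hcon (2 * s) (lt_of_lt_of_le (by positivity) ih)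
      rw [pow_succ, show 2 * (s + 1) = 2 * s + 2 by ring]
      nlinarith
  have hlim : Filter.Tendsto (fun s : ℕ => ((s : ℝ)) ^ d / 2 ^ s) Filter.atTop (nhds 0) :=
    tendsto_pow_const_div_const_pow_of_one_lt d one_lt_two
  have hlim2 : Filter.Tendsto (fun s : ℕ => |c| * 3 ^ d * (((s : ℝ)) ^ d / 2 ^ s)) Filter.atTop
      (nhds 0) := by simpa using hlim.const_mul (|c| * 3 ^ d)
  obtain ⟨s, hs, hs1⟩ := ((hlim2.eventually (gt_mem_nhds ha)).and
    (Filter.eventually_ge_atTop 1)).exists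
  have hs1' : (1 : ℝ) ≤ s := by exact_mod_cast hs1
  have h1 := (hgrow s).trans (h (2 * s))
  have h2 : c * (((2 * s : ℕ) : ℝ) + 1) ^ d ≤ |c| * (3 * (s : ℝ)) ^ d := by
    refine mul_le_mul (le_abs_self c) ?_ (by positivity) (abs_nonneg c)
    refine pow_le_pow_left₀ (by positivity) ?_ d
    push_cast; linarith
  rw [mul_pow, ← mul_assoc] at h2
  have h3 : |c| * 3 ^ d * (s : ℝ) ^ d < 2 ^ s * a 0 := by
    rw [← mul_div_assoc, div_lt_iff₀ (by positivity)] at hs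
    linarith
  linarith

/-- Products of exactly `r` elements of `K`. -/
def Ball {n : ℕ} (K : Set (SLR n)) : ℕ → Set (SLR n)
  | 0 => {1}
  | r + 1 => {g | ∃ k ∈ K, ∃ w ∈ Ball K r, g = k * w}

/-- Products of bounded unitriangular matrices grow polynomially in the number of factors: the entries
at distance `e` from the diagonal grow like the `e`-th power. -/
theorem Ball_growth {n : ℕ} {K : Set (SLR n)} {C : ℝ} (hC : 1 ≤ C) (hK : ∀ u ∈ K, UU u ∧ EB C u) (r : ℕ) :
    ∀ w ∈ Ball K r, UU w ∧ ∀ i j : Fin n, i ≤ j →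
      |w.1 i j| ≤ (((r : ℝ) + 1) * (n * C)) ^ ((j : ℕ) - i) := by
  induction r with
  | zero =>
    intro w hw
    rw [show w = 1 from hw]
    refine ⟨UU.one, fun i j hij => ?_⟩
    have hn : (1 : ℝ) ≤ n := by exact_mod_cast (Fin.pos i)
    rcases hij.eq_or_lt with rfl | hij
    · simp
    · have : (1 : SLR n).1 i j = 0 := by simp [hij.ne]
      rw [this, abs_zero]
      positivity
  | succ r ih =>
    rintro _ ⟨k, hk, w, hw, rfl⟩
    obtain ⟨hkU, hkC⟩ := hK k hk
    obtain ⟨hwU, hwC⟩ := ih w hw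
    refine ⟨hkU.mul hwU, fun i j hij => ?_⟩
    have hn : (1 : ℝ) ≤ n := by exact_mod_cast (Fin.pos i)
    have hD : 1 ≤ (n : ℝ) * C := by nlinarith
    rcases hij.eq_or_lt with rfl | hij
    · rw [(hkU.mul hwU).2]; simp
    set D := (n : ℝ) * C with hDdef
    set X := ((r : ℝ) + 1) * D with hX
    have hX1 : 1 ≤ X := by nlinarith [(Nat.cast_nonneg r : (0 : ℝ) ≤ r)]
    obtain ⟨e, he⟩ : ∃ e, (j : ℕ) - i = e + 1 := ⟨(j : ℕ) - i - 1, by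
      rw [Fin.lt_def] at hij; omega⟩
    have hsplit : (k * w).1 i j = w.1 i j + ∑ l, (if l = i then 0 else k.1 i l) * w.1 l j := by
      rw [mul_entry, ← Finset.add_sum_erase _ _ (Finset.mem_univ i), hkU.2, one_mul]
      congr 1
      rw [← Finset.add_sum_erase (a := i) _ (fun l => (if l = i then 0 else k.1 i l) * w.1 l j)
        (Finset.mem_univ i)]
      rw [if_pos rfl, zero_mul, zero_add]
      refine Finset.sum_congr rfl fun l hl => ?_
      rw [if_neg (Finset.ne_of_mem_erase hl)]
    have hterm : ∀ l, |(if l = i then 0 else k.1 i l) * w.1 l j| ≤ C * X ^ e := by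
      intro l
      have h0 : 0 ≤ C * X ^ e := by positivity
      split_ifs with hli
      · simpa using h0
      · rcases lt_or_ge l i with h1 | h1
        · rw [hkU.1 i l h1]; simpa using h0
        · rcases lt_or_ge j l with h2 | h2
          · rw [hwU.1 l j h2]; simpa using h0
          · rw [abs_mul]
            have h3 : i < l := lt_of_le_of_ne h1 (Ne.symm hli)
            refine mul_le_mul (hkC i l) ((hwC l j h2).trans ?_) (abs_nonneg _) (by positivity)
            refine pow_le_pow_right₀ hX1 ?_
            rw [Fin.lt_def] at h3; omega
    have hsum : |∑ l, (if l = i then 0 else k.1 i l) * w.1 l j| ≤ D * X ^ e := by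
      refine (Finset.abs_sum_le_sum_abs _ _).trans ((Finset.sum_le_sum fun l _ => hterm l).trans ?_)
      simp [hDdef, mul_assoc]
    rw [hsplit, he]
    have h4 : X ^ e ≤ (X + D) ^ e := pow_le_pow_left₀ (by linarith) (by linarith) e
    have h5 : ((r + 1 : ℕ) : ℝ) + 1 = (r : ℝ) + 1 + 1 := by push_cast; ring
    rw [h5, add_mul ((r : ℝ) + 1), one_mul, ← hX]
    calc |w.1 i j + ∑ l, (if l = i then 0 else k.1 i l) * w.1 l j|
        ≤ X ^ (e + 1) + D * X ^ e := (abs_add_le _ _).trans (add_le_add (he ▸ hwC i j hij.le) hsum)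
      _ = (X + D) * X ^ e := by ring
      _ ≤ (X + D) * (X + D) ^ e := mul_le_mul_of_nonneg_left h4 (by linarith)
      _ = (X + D) ^ (e + 1) := by ring

/-- `N` acts properly on the coordinates of the slice (for the size `EB` of matrices), and every
orbit meets the ball of radius `R`. -/
structure Slice.Good {n : ℕ} (S : Slice n) (N : Subgroup (SLR n)) (R : ℝ) : Prop where
  pos : 0 < R
  cocompact : ∀ y : S.P → ℝ, ∃ u ∈ N, ‖S.T u y‖ < R
  proper : ∀ R' : ℝ, ∃ C, ∀ u ∈ N, ∀ y : S.P → ℝ, ‖y‖ ≤ R' → ‖S.T u y‖ ≤ R' → EB C u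

namespace Slice
variable {n : ℕ}

/-- Pairs of points of two slices which are carried simultaneously into the balls of radius `R`
by some element of the coset `b N`. -/
def Rel (S1 S2 : Slice n) (N : Subgroup (SLR n)) (R : ℝ) (b : SLR n) :
    Set ((S1.P → ℝ) × (S2.P → ℝ)) :=
  {p | ∃ u ∈ N, ‖S1.T (b * u) p.1‖ < R ∧ ‖S2.T (b * u) p.2‖ < R}

/-- Points that reach the ball of radius `R` by a product of `r` elements of `N` bounded
by `C`. -/
def Reach (S : Slice n) (N : Subgroup (SLR n)) (R C : ℝ) (r : ℕ) : Set (S.P → ℝ) :=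
  {x | ∃ w ∈ Ball {u | u ∈ N ∧ EB C u} r, ‖S.T w x‖ < R}

theorem isOpen_Rel (S1 S2 : Slice n) (N : Subgroup (SLR n)) (R : ℝ) (b : SLR n) :
    IsOpen (Rel S1 S2 N R b) := by
  have : Rel S1 S2 N R b = ⋃ u ∈ N, {p | ‖S1.T (b * u) p.1‖ < R ∧ ‖S2.T (b * u) p.2‖ < R} := by
    ext p; simp only [Rel, Set.mem_iUnion, Set.mem_ofPred_eq, exists_prop]
  rw [this]
  refine isOpen_biUnion fun u _ => ?_
  refine IsOpen.inter ?_ ?_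
  · exact isOpen_lt (((S1.continuous_T _).comp continuous_fst).norm) continuous_const
  · exact isOpen_lt (((S2.continuous_T _).comp continuous_snd).norm) continuous_const

theorem isOpen_Reach (S : Slice n) (N : Subgroup (SLR n)) (R C : ℝ) (r : ℕ) :
    IsOpen (S.Reach N R C r) := by
  have : S.Reach N R C r = ⋃ w ∈ Ball {u | u ∈ N ∧ EB C u} r, {x | ‖S.T w x‖ < R} := by
    ext p; simp [Reach]
  rw [this]
  exact isOpen_biUnion fun w _ => isOpen_lt ((S.continuous_T _).norm) continuous_const

theorem volume_norm_lt (S : Slice n) {b : SLR n} (hb : UT b) (R : ℝ) :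
    volume {y | ‖S.T b y‖ < R} = ENNReal.ofReal (S.kappa b)⁻¹ * volume (Metric.ball (0 : S.P → ℝ) R) := by
  rw [← S.volume_preimage hb]
  congr 1
  ext y; simp

variable {Γ N : Subgroup (SLR n)} (hΓ : ∀ γ ∈ Γ, UT γ) (hN : ∀ u, u ∈ N ↔ u ∈ Γ ∧ UU u)

include hΓ hN in
theorem conj_mem {b u : SLR n} (hb : b ∈ Γ) (hu : u ∈ N) : b * u * b⁻¹ ∈ N := by
  have hu' := (hN u).1 hu
  have hbT := hΓ b hb
  refine (hN _).2 ⟨Γ.mul_mem (Γ.mul_mem hb hu'.1) (Γ.inv_mem hb), (hbT.mul hu'.2.1).mul hbT.inv, ?_⟩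
  intro i
  rw [(hbT.mul hu'.2.1).mul_diag hbT.inv, hbT.mul_diag hu'.2.1, hu'.2.2, mul_one, hbT.inv_diag,
    mul_inv_cancel₀ (hbT.diag_ne i)]

include hΓ hN in
theorem kappa_mul_N (S : Slice n) {b u : SLR n} (hb : b ∈ Γ) (hu : u ∈ N) :
    S.kappa (b * u) = S.kappa b := by
  rw [S.kappa_mul (hΓ b hb) ((hN u).1 hu).2.1, S.kappa_UU ((hN u).1 hu).2, mul_one]

include hΓ hN in
/-- Translating by an element of `Γ` does not affect cocompactness, because `Γ` normalizes `N`. -/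
theorem fibre_point (S : Slice n) {R : ℝ} (hS : S.Good N R) {b : SLR n} (hb : b ∈ Γ)
    (x : S.P → ℝ) : ∃ u ∈ N, ‖S.T (b * u) x‖ < R := by
  obtain ⟨u, hu, h⟩ := hS.cocompact (S.T b x)
  have h2 := conj_mem hΓ hN (Γ.inv_mem hb) hu
  rw [inv_inv] at h2
  refine ⟨_, h2, ?_⟩
  rw [← S.T_mul ((hN u).1 hu).2.1 (hΓ b hb)] at h
  convert h using 3
  group

include hΓ hN in
/-- The fibres of `Rel` contain a preimage of a ball under a single transformation. -/
theorem fibre_lower (S1 S2 : Slice n) {R : ℝ} (h1 : S1.Good N R) {b : SLR n} (hb : b ∈ Γ)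
    (x : S1.P → ℝ) :
    ENNReal.ofReal (S2.kappa b)⁻¹ * volume (Metric.ball (0 : S2.P → ℝ) R) ≤
      volume {y | (x, y) ∈ Rel S1 S2 N R b} := by
  obtain ⟨u, hu, h⟩ := fibre_point hΓ hN S1 h1 hb x
  have hbu : UT (b * u) := (hΓ b hb).mul ((hN u).1 hu).2.1
  rw [← kappa_mul_N hΓ hN S2 hb hu, ← S2.volume_norm_lt hbu]
  exact measure_mono fun y hy => ⟨u, hu, h, hy⟩

include hΓ hN in
/-- By properness on the first slice, the elements of `b N` that contribute to a fibre of `Rel` differ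
by bounded ones; hence the fibre lies in a preimage of a ball, whose radius is independent of `b`. -/
theorem fibre_upper (S1 S2 : Slice n) {R : ℝ} (h1 : S1.Good N R) :
    ∃ A : ℝ, ∀ b ∈ Γ, ∀ x : S1.P → ℝ, volume {y | (x, y) ∈ Rel S1 S2 N R b} ≤
      ENNReal.ofReal (S2.kappa b)⁻¹ * volume (Metric.ball (0 : S2.P → ℝ) A) := by
  obtain ⟨C, hC⟩ := h1.proper R
  let C' : ℝ := n.factorial * (max C 1) ^ n
  refine ⟨n * C' * max R 1 + 1, fun b hb x => ?_⟩
  obtain ⟨u, hu, h⟩ := fibre_point hΓ hN S1 h1 hb x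
  have hbu : UT (b * u) := (hΓ b hb).mul ((hN u).1 hu).2.1
  rw [← kappa_mul_N hΓ hN S2 hb hu, ← S2.volume_norm_lt hbu]
  refine measure_mono ?_
  rintro y ⟨v, hv, hv1, hv2⟩
  -- the two elements of `b N` differ by an element `k` of `N` bounded by properness
  let k := b * (v * u⁻¹) * b⁻¹
  have hk : k ∈ N := conj_mem hΓ hN hb (N.mul_mem hv (N.inv_mem hu))
  have hkU := ((hN k).1 hk).2
  have hkv : b * v = k * (b * u) := by simp only [k]; group
  rw [hkv, S1.T_mul hkU.1 hbu] at hv1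
  rw [hkv, S2.T_mul hkU.1 hbu] at hv2
  have hkC := hC k hk _ h.le hv1.le
  have := S2.norm_T_le hkU.inv hkC.inv hv2.le
  rw [S2.T_inv_T hkU.1] at this
  exact lt_of_le_of_lt this (lt_add_one _)

include hΓ hN in
/-- For fixed `b`, related points have comparable word length. The constant depends on `b`, but it only
shifts the generating set and not the number `r + 1` of factors. -/
theorem reach_step (S1 S2 : Slice n) {R : ℝ} (h1 : S1.Good N R) (h2 : S2.Good N R)
    {b : SLR n} (hb : b ∈ Γ) :
    ∃ C : ℝ, ∀ C', C ≤ C' → ∀ r x y, (x, y) ∈ Rel S1 S2 N R b → x ∈ S1.Reach N R C' r →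
      y ∈ S2.Reach N R C' (r + 1) := by
  obtain ⟨R1, hR1⟩ := S1.norm_T_bounded (b := b⁻¹) R
  obtain ⟨R2, hR2⟩ := S2.norm_T_bounded (b := b⁻¹) R
  obtain ⟨C1, hC1⟩ := h1.proper (max R R1)
  let R3 : ℝ := n * (n.factorial * (max C1 1) ^ n) * max R2 1
  obtain ⟨C2, hC2⟩ := h2.proper (max R R3)
  refine ⟨C2, fun C' hC' r x y hxy hx => ?_⟩
  obtain ⟨u, hu, hu1, hu2⟩ := hxy
  obtain ⟨w, hw, hwx⟩ := hx
  have hBN : ∀ r, ∀ w ∈ Ball {u | u ∈ N ∧ EB C' u} r, w ∈ N := by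
    intro r
    induction r with
    | zero => intro w hw; rw [show w = 1 from hw]; exact N.one_mem
    | succ r ih => rintro _ ⟨k, hk, w, hw, rfl⟩; exact N.mul_mem hk.1 (ih w hw)
  have hwN := hBN r w hw
  have hwU := ((hN w).1 hwN).2
  have hbT := hΓ b hb
  let v := u * w⁻¹
  have hv : v ∈ N := N.mul_mem hu (N.inv_mem hwN)
  have hvU := ((hN v).1 hv).2
  have hbu : b * u = b * (v * w) := by simp [v]
  rw [hbu, S1.T_mul hbT (hvU.1.mul hwU.1), S1.T_mul hvU.1 hwU.1] at hu1
  rw [hbu, S2.T_mul hbT (hvU.1.mul hwU.1), S2.T_mul hvU.1 hwU.1] at hu2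
  have e1 := hR1 _ hu1.le
  rw [S1.T_inv_T hbT] at e1
  have hvC := hC1 v hv _ (hwx.le.trans (le_max_left _ _)) (e1.trans (le_max_right _ _))
  have e2 := hR2 _ hu2.le
  rw [S2.T_inv_T hbT] at e2
  have e3 := S2.norm_T_le hvU.inv hvC.inv e2
  rw [S2.T_inv_T hvU.1] at e3
  obtain ⟨k, hk, hk1⟩ := h2.cocompact (S2.T w y)
  have hkC := hC2 k hk _ (e3.trans (le_max_right _ _)) (hk1.le.trans (le_max_left _ _))
  refine ⟨k * w, ⟨k, ⟨hk, hkC.mono hC'⟩, w, hw, rfl⟩, ?_⟩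
  rwa [S2.T_mul ((hN k).1 hk).2.1 hwU.1]

include hN in
/-- The sets `Reach` have polynomially growing volume. -/
theorem reach_growth (S : Slice n) {R C : ℝ} (hC : 1 ≤ C) :
    ∃ (c : ℝ) (d : ℕ), ∀ r : ℕ, volume (S.Reach N R C r) ≤ ENNReal.ofReal (c * ((r : ℝ) + 1) ^ d) := by
  classical
  rcases Nat.eq_zero_or_pos n with hn | hn
  · have : IsEmpty S.P := by
      subst hn
      exact ⟨fun p => (S.row p).elim0⟩
    refine ⟨1, 0, fun r => (measure_mono (Set.subset_univ _)).trans ?_⟩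
    simp [volume_pi]
  have hn1 : (1 : ℝ) ≤ n := by exact_mod_cast hn
  let D : ℝ := n * C
  have hD : 1 ≤ D := by simp only [D]; nlinarith
  let M : ℝ := n * (n.factorial * (D ^ n) ^ n) * max R 1
  have hM : 0 ≤ M := by positivity
  refine ⟨(2 * M) ^ Fintype.card S.P, n * n * Fintype.card S.P, fun r => ?_⟩
  have hsub : S.Reach N R C r ⊆ Metric.closedBall 0 (M * ((r : ℝ) + 1) ^ (n * n)) := by
    rintro x ⟨w, hw, hwx⟩
    obtain ⟨hwU, hwC⟩ := Ball_growth hC (fun u hu => ⟨((hN u).1 hu.1).2, hu.2⟩) r w hw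
    have hX : 1 ≤ ((r : ℝ) + 1) * D := by nlinarith [(Nat.cast_nonneg r : (0 : ℝ) ≤ r)]
    have hEB : EB ((((r : ℝ) + 1) * D) ^ n) w := by
      intro i j
      rcases le_or_gt i j with hij | hij
      · refine (hwC i j hij).trans (pow_le_pow_right₀ hX ?_)
        omega
      · rw [hwU.1 i j hij, abs_zero]; positivity
    have h1 := S.norm_T_le hwU.inv hEB.inv hwx.le
    rw [S.T_inv_T hwU.1, max_eq_left (one_le_pow₀ hX)] at h1
    rw [mem_closedBall_zero_iff]
    refine h1.trans (le_of_eq ?_)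
    simp only [M]
    rw [mul_pow, mul_pow, ← pow_mul, ← pow_mul]
    ring
  refine (measure_mono hsub).trans ?_
  rw [Real.volume_pi_closedBall _ (by positivity)]
  refine ENNReal.ofReal_le_ofReal (le_of_eq ?_)
  rw [← mul_assoc, mul_pow, ← pow_mul]

include hΓ hN in
/-- The volume distortions of `b` in two slices on which `N` acts properly and cocompactly agree
up to a constant independent of `b`. Passing by double counting from `Reach r` in the first slice to
`Reach (r + 1)` in the second through `b`, and back to `Reach (r + 2)` in the first through `1`, costs
at most the factor `2` when `r` is chosen by `exists_not_doubling`; this `r` depends on `b`, the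
resulting constant does not. -/
theorem transport (S1 S2 : Slice n) {R : ℝ} (h1 : S1.Good N R) (h2 : S2.Good N R) :
    ∃ D : ℝ, ∀ b ∈ Γ, S1.kappa b ≤ D * S2.kappa b := by
  obtain ⟨A2, hA2⟩ := fibre_upper hΓ hN S1 S2 h1
  obtain ⟨A1, hA1⟩ := fibre_upper hΓ hN S2 S1 h2
  -- volumes of the relevant balls
  have hfin : ∀ (S : Slice n) (ρ : ℝ), volume (Metric.ball (0 : S.P → ℝ) ρ) ≠ ⊤ :=
    fun S ρ => measure_ball_lt_top.ne
  have hpos : ∀ S : Slice n, 0 < (volume (Metric.ball (0 : S.P → ℝ) R)).toReal := fun S =>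
    ENNReal.toReal_pos (Metric.measure_ball_pos volume _ h1.pos).ne' (hfin S R)
  set a1 := (volume (Metric.ball (0 : S1.P → ℝ) R)).toReal with ha1
  set a2 := (volume (Metric.ball (0 : S2.P → ℝ) R)).toReal with ha2
  set v1 := (volume (Metric.ball (0 : S1.P → ℝ) A1)).toReal with hv1
  set v2 := (volume (Metric.ball (0 : S2.P → ℝ) A2)).toReal with hv2
  have ha1p : 0 < a1 := hpos S1
  have ha2p : 0 < a2 := hpos S2
  refine ⟨2 * v1 * v2 / (a1 * a2), fun b hb => ?_⟩
  obtain ⟨C1, hC1⟩ := reach_step hΓ hN S1 S2 h1 h2 hb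
  obtain ⟨C2, hC2⟩ := reach_step hΓ hN S2 S1 h2 h1 Γ.one_mem
  let C := max 1 (max C1 C2)
  have hc1 : C1 ≤ C := (le_max_left _ _).trans (le_max_right _ _)
  have hc2 : C2 ≤ C := (le_max_right _ _).trans (le_max_right _ _)
  obtain ⟨c, d, hgr⟩ := reach_growth hN S1 (R := R) (C := C) (le_max_left _ _)
  obtain ⟨c', d', hgr'⟩ := reach_growth hN S2 (R := R) (C := C) (le_max_left _ _)
  have hf1 : ∀ r, volume (S1.Reach N R C r) ≠ ⊤ := fun r =>
    ((hgr r).trans_lt ENNReal.ofReal_lt_top).ne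
  have hf2 : ∀ r, volume (S2.Reach N R C r) ≠ ⊤ := fun r =>
    ((hgr' r).trans_lt ENNReal.ofReal_lt_top).ne
  have hE0 : S1.Reach N R C 0 = Metric.ball 0 R := by
    ext x
    rw [mem_ball_zero_iff]
    constructor
    · rintro ⟨w, hw, h⟩
      rw [show w = 1 from hw, S1.T_one] at h
      exact h
    · intro h
      exact ⟨1, rfl, by rwa [S1.T_one]⟩
  obtain ⟨r, hrp, hr⟩ := exists_not_doubling (fun r => (volume (S1.Reach N R C r)).toReal)
    (by simpa only [hE0] using ha1p) (max c 0) d (fun r => by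
      refine ENNReal.toReal_le_of_le_ofReal (by positivity) ((hgr r).trans ?_)
      refine ENNReal.ofReal_le_ofReal (mul_le_mul_of_nonneg_right (le_max_left _ _) (by positivity)))
  have hk1 := S1.kappa_pos (hΓ b hb)
  have hk2 := S2.kappa_pos (hΓ b hb)
  have m1 : (S2.kappa b)⁻¹ * a2 * (volume (S1.Reach N R C r)).toReal ≤
      (S1.kappa b)⁻¹ * v1 * (volume (S2.Reach N R C (r + 1))).toReal := by
    have := double_count volume volume (isOpen_Rel S1 S2 N R b).measurableSet
      (isOpen_Reach S1 N R C r).measurableSet (isOpen_Reach S2 N R C (r + 1)).measurableSet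
      (fibre_lower hΓ hN S1 S2 h1 hb) (fun y => (measure_mono (by
        rintro x ⟨u, hu, e1, e2⟩
        exact ⟨u, hu, e2, e1⟩)).trans (hA1 b hb y))
      (hC1 C hc1 r)
    have h3 := ENNReal.toReal_mono (ENNReal.mul_ne_top (ENNReal.mul_ne_top ENNReal.ofReal_ne_top
      (hfin _ _)) (hf2 _)) this
    rwa [ENNReal.toReal_mul, ENNReal.toReal_mul, ENNReal.toReal_mul, ENNReal.toReal_mul,
      ENNReal.toReal_ofReal (inv_pos.2 hk2).le, ENNReal.toReal_ofReal (inv_pos.2 hk1).le] at h3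
  have m2 : a1 * (volume (S2.Reach N R C (r + 1))).toReal ≤
      v2 * (volume (S1.Reach N R C (r + 2))).toReal := by
    have := double_count volume volume (isOpen_Rel S2 S1 N R 1).measurableSet
      (isOpen_Reach S2 N R C (r + 1)).measurableSet (isOpen_Reach S1 N R C (r + 2)).measurableSet
      (fibre_lower hΓ hN S2 S1 h2 Γ.one_mem) (fun y => (measure_mono (by
        rintro x ⟨u, hu, e1, e2⟩
        exact ⟨u, hu, e2, e1⟩)).trans (hA2 1 Γ.one_mem y))
      (hC2 C hc2 (r + 1))
    rw [S1.kappa_UU UU.one, S2.kappa_UU UU.one, inv_one, ENNReal.ofReal_one, one_mul, one_mul] at this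
    have h3 := ENNReal.toReal_mono (ENNReal.mul_ne_top (hfin _ _) (hf1 _)) this
    rwa [ENNReal.toReal_mul, ENNReal.toReal_mul] at h3
  have hv1p : 0 ≤ v1 := ENNReal.toReal_nonneg
  have hv2p : 0 ≤ v2 := ENNReal.toReal_nonneg
  set E := (volume (S1.Reach N R C r)).toReal
  set F := (volume (S2.Reach N R C (r + 1))).toReal
  set E' := (volume (S1.Reach N R C (r + 2))).toReal
  have m3 : S1.kappa b * (a2 * E) ≤ S2.kappa b * (v1 * F) := by
    rw [mul_assoc, mul_assoc, inv_mul_le_iff₀ hk2] at m1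
    calc S1.kappa b * (a2 * E)
        ≤ S1.kappa b * (S2.kappa b * ((S1.kappa b)⁻¹ * (v1 * F))) :=
          mul_le_mul_of_nonneg_left m1 hk1.le
      _ = S2.kappa b * (v1 * F) := by field_simp
  have m4 : S1.kappa b * (a1 * a2) * E ≤ 2 * v1 * v2 * S2.kappa b * E := by
    calc S1.kappa b * (a1 * a2) * E = a1 * (S1.kappa b * (a2 * E)) := by ring
      _ ≤ a1 * (S2.kappa b * (v1 * F)) := mul_le_mul_of_nonneg_left m3 ha1p.le
      _ = S2.kappa b * v1 * (a1 * F) := by ring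
      _ ≤ S2.kappa b * v1 * (v2 * (2 * E)) := by
          refine mul_le_mul_of_nonneg_left (m2.trans ?_) (by positivity)
          exact mul_le_mul_of_nonneg_left hr hv2p
      _ = 2 * v1 * v2 * S2.kappa b * E := by ring
  rw [div_mul_eq_mul_div, le_div_iff₀ (by positivity)]
  exact le_of_mul_le_mul_right m4 hrp

end Slice

end Volume

/-! ### Triangular groups -/

/-- If each of finitely many conditions excludes at most one exponent, some exponent not exceeding the
number of conditions is allowed. -/
theorem exists_avoid {ι : Type*} (F : Finset ι) (bad : ι → ℕ → Prop)
    (h : ∀ p ∈ F, ∀ a b, bad p a → bad p b → a = b) : ∃ a ≤ F.card, ∀ p ∈ F, ¬ bad p a := by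
  classical
  by_contra! hcon
  have hsub : Finset.range (F.card + 1) ⊆
      F.biUnion fun p => (Finset.range (F.card + 1)).filter (bad p) := by
    intro a ha
    obtain ⟨p, hp, hbad⟩ := hcon a (Nat.lt_succ_iff.1 (Finset.mem_range.1 ha))
    exact Finset.mem_biUnion.2 ⟨p, hp, Finset.mem_filter.2 ⟨ha, hbad⟩⟩
  have h1 := (Finset.card_le_card hsub).trans (Finset.card_biUnion_le_card_mul _ _ 1 fun p hp =>
    Finset.card_le_one.2 fun a ha b hb =>
      h p hp a b (Finset.mem_filter.1 ha).2 (Finset.mem_filter.1 hb).2)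
  rw [Finset.card_range] at h1
  omega

section Triangular
variable {n : ℕ}

/-- If `γ` separates two diagonal positions in absolute value, then so do all `γ ^ a * δ`, with at
most one exception. -/
theorem bad_unique {γ δ : SLR n} (hγ : UT γ) (hδ : UT δ) {i j : Fin n}
    (h : |γ.1 i i| ≠ |γ.1 j j|) (a b : ℕ) (ha : |(γ ^ a * δ).1 i i| = |(γ ^ a * δ).1 j j|)
    (hb : |(γ ^ b * δ).1 i i| = |(γ ^ b * δ).1 j j|) : a = b := by
  rw [(hγ.pow _).mul_diag hδ, (hγ.pow _).mul_diag hδ, hγ.pow_diag, hγ.pow_diag, abs_mul, abs_mul,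
    abs_pow, abs_pow] at ha hb
  have hi := abs_pos.2 (hγ.diag_ne i)
  have hj := abs_pos.2 (hγ.diag_ne j)
  have hi' := abs_pos.2 (hδ.diag_ne i)
  have hj' := abs_pos.2 (hδ.diag_ne j)
  have ha' : (|γ.1 i i| / |γ.1 j j|) ^ a = |δ.1 j j| / |δ.1 i i| := by
    rw [div_pow, div_eq_div_iff (by positivity) (by positivity), ha, mul_comm]
  have hb' : (|γ.1 i i| / |γ.1 j j|) ^ b = |δ.1 j j| / |δ.1 i i| := by
    rw [div_pow, div_eq_div_iff (by positivity) (by positivity), hb, mul_comm]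
  refine pow_right_injective₀ (div_pos hi hj) ?_ (ha'.trans hb'.symm)
  rw [Ne, div_eq_one_iff_eq hj.ne']
  exact h

variable {Γ : Subgroup (SLR n)} (hΓ : ∀ γ ∈ Γ, UT γ)

/-- Uniform cocompactness on pairs of a vector `v` and a covector `f` with `f v = 1`. -/
def VecCoc (Γ : Subgroup (SLR n)) : Prop := ∃ R : ℝ, ∀ v f : Fin n → ℝ, f ⬝ᵥ v = 1 → ∃ γ ∈ Γ,
  (∀ i, |(γ.1.mulVec v) i| ≤ R) ∧ ∀ i, |(Matrix.vecMul f (γ⁻¹).1) i| ≤ R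

include hΓ in
/-- If `|γ i i| = |γ j j|` for all `γ`, then the pairs `(e i + t e j, e i)` cannot all be moved into a
bounded set: `t` is bounded by the product of a coordinate of the vector and one of the covector. -/
theorem exists_abs_ne (hP : VecCoc Γ) {i j : Fin n} (hij : i < j) :
    ∃ γ ∈ Γ, |γ.1 i i| ≠ |γ.1 j j| := by
  by_contra! hcon
  obtain ⟨R, hR⟩ := hP
  obtain ⟨γ, hγ, h1, h2⟩ := hR (Pi.single i 1 + (R ^ 2 + 1) • Pi.single j 1) (Pi.single i 1) (by
    simp [hij.ne])
  have hT := hΓ γ hγ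
  have h3 := h1 j
  have h4 := h2 i
  rw [Matrix.mulVec_add, Matrix.mulVec_smul] at h3
  simp only [Matrix.mulVec_single_one, Pi.add_apply, Pi.smul_apply, smul_eq_mul, Matrix.col_apply,
    hT j i hij, zero_add, abs_mul] at h3
  simp only [Matrix.single_one_vecMul, Matrix.row_apply, hT.inv_diag, abs_inv] at h4
  rw [abs_of_pos (by positivity : 0 < R ^ 2 + 1)] at h3
  rw [hcon γ hγ] at h4
  have hpos := abs_pos.2 (hT.diag_ne j)
  have h5 : R ^ 2 + 1 ≤ R * R := by
    calc R ^ 2 + 1 = (R ^ 2 + 1) * |γ.1 j j| * |γ.1 j j|⁻¹ := by field_simp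
      _ ≤ R * R := mul_le_mul h3 h4 (by positivity) (by
          exact (mul_nonneg (by positivity) hpos.le).trans h3)
  nlinarith

include hΓ in
/-- Some element of `Γ` has diagonal entries of pairwise distinct absolute values. -/
theorem exists_regular (hP : VecCoc Γ) :
    ∃ γ ∈ Γ, ∀ i j, i < j → |γ.1 i i| ≠ |γ.1 j j| := by
  classical
  have key : ∀ F : Finset (Fin n × Fin n), (∀ p ∈ F, p.1 < p.2) →
      ∃ γ ∈ Γ, ∀ p ∈ F, |γ.1 p.1 p.1| ≠ |γ.1 p.2 p.2| := by
    intro F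
    induction F using Finset.induction_on with
    | empty => exact fun _ => ⟨1, Γ.one_mem, by simp⟩
    | insert q F _ ih =>
      intro hF
      obtain ⟨γ, hγ, h⟩ := ih fun p hp => hF p (Finset.mem_insert_of_mem hp)
      by_cases hq : |γ.1 q.1 q.1| = |γ.1 q.2 q.2|
      · obtain ⟨δ, hδ, hδq⟩ := exists_abs_ne hΓ hP (hF q (Finset.mem_insert_self _ _))
        obtain ⟨a, -, ha⟩ := exists_avoid F
          (fun p a => |(γ ^ a * δ).1 p.1 p.1| = |(γ ^ a * δ).1 p.2 p.2|)
          (fun p hp a b => bad_unique (hΓ γ hγ) (hΓ δ hδ) (h p hp) a b)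
        refine ⟨γ ^ a * δ, Γ.mul_mem (Γ.pow_mem hγ a) hδ, fun p hp => ?_⟩
        rcases Finset.mem_insert.1 hp with rfl | hp
        · intro e
          rw [((hΓ γ hγ).pow _).mul_diag (hΓ δ hδ), ((hΓ γ hγ).pow _).mul_diag (hΓ δ hδ),
            (hΓ γ hγ).pow_diag, (hΓ γ hγ).pow_diag, abs_mul, abs_mul, abs_pow, abs_pow, hq] at e
          exact hδq (mul_left_cancel₀ (pow_ne_zero _ (abs_pos.2 ((hΓ γ hγ).diag_ne _)).ne') e)
        · exact ha p hp
      · refine ⟨γ, hγ, fun p hp => ?_⟩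
        rcases Finset.mem_insert.1 hp with rfl | hp
        · exact hq
        · exact h p hp
  obtain ⟨γ, hγ, h⟩ := key (Finset.univ.filter fun p => p.1 < p.2) (by simp)
  exact ⟨γ, hγ, fun i j hij => h (i, j) (by simpa using hij)⟩

/-- An upper triangular matrix with distinct diagonal entries is diagonalized by a unitriangular
matrix. -/
theorem exists_diagonalize {b : SLR n} (hb : UT b) (hd : ∀ i j, i < j → b.1 i i ≠ b.1 j j) :
    ∃ w : SLR n, UU w ∧ ∀ i j, (b * w).1 i j = w.1 i j * b.1 j j := by
  classical
  let Λ : Matrix (Fin n) (Fin n) ℝ := Matrix.diagonal fun i => b.1 i i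
  let V : Submodule ℝ (Matrix (Fin n) (Fin n) ℝ) :=
    { carrier := {M | ∀ i j, j ≤ i → M i j = 0}
      zero_mem' := fun _ _ _ => rfl
      add_mem' := fun ha hb i j h => by rw [Matrix.add_apply, ha i j h, hb i j h, add_zero]
      smul_mem' := fun c M hM i j h => by rw [Matrix.smul_apply, hM i j h, smul_zero] }
  let L0 : Matrix (Fin n) (Fin n) ℝ →ₗ[ℝ] Matrix (Fin n) (Fin n) ℝ :=
    LinearMap.mulLeft ℝ b.1 - LinearMap.mulRight ℝ Λ
  have hL0 : ∀ M i j, L0 M i j = ∑ l, b.1 i l * M l j - M i j * b.1 j j := by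
    intro M i j
    simp only [L0, LinearMap.sub_apply, LinearMap.mulLeft_apply, LinearMap.mulRight_apply,
      Matrix.sub_apply, Λ, Matrix.mul_diagonal]
    rw [Matrix.mul_apply]
  have hV : ∀ M ∈ V, L0 M ∈ V := by
    intro M hM i j hij
    rw [hL0, hM i j hij, zero_mul, sub_zero]
    refine Finset.sum_eq_zero fun l _ => ?_
    rcases lt_or_ge l i with hl | hl
    · rw [hb i l hl, zero_mul]
    · rw [hM l j (hij.trans hl), mul_zero]
  let L : V →ₗ[ℝ] V := L0.restrict hV
  have hinj : Function.Injective L := by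
    rw [← LinearMap.ker_eq_bot, LinearMap.ker_eq_bot']
    rintro ⟨M, hM⟩ h
    have h0 : L0 M = 0 := congrArg Subtype.val h
    by_contra hne
    have hM0 : M ≠ 0 := fun e => hne (Subtype.ext e)
    obtain ⟨i, j, hij⟩ : ∃ i j, M i j ≠ 0 := by
      by_contra! hcon
      exact hM0 (Matrix.ext hcon)
    -- the lowest nonzero entry of column `j`
    obtain ⟨k, hk, hkmax⟩ := (Finset.univ.filter fun i => M i j ≠ 0).exists_maximal
      ⟨i, by simpa using hij⟩
    have hk0 : M k j ≠ 0 := by simpa using hk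
    have hkj : k < j := by
      by_contra hc
      exact hk0 (hM k j (not_lt.1 hc))
    have h1 := congrFun (congrFun h0 k) j
    rw [hL0, Finset.sum_eq_single k] at h1
    · have h2 : (b.1 k k - b.1 j j) * M k j = 0 := by
        have h3 : b.1 k k * M k j - M k j * b.1 j j = 0 := h1
        linarith
      rcases mul_eq_zero.1 h2 with h | h
      · exact hd k j hkj (sub_eq_zero.1 h)
      · exact hk0 h
    · intro l _ hl
      rcases lt_or_gt_of_ne hl with hl | hl
      · rw [hb k l hl, zero_mul]
      · have : M l j = 0 := by
          by_contra hc
          exact absurd (hkmax (by simpa using hc) hl.le) hl.not_ge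
        rw [this, mul_zero]
    · simp
  have hsurj := LinearMap.injective_iff_surjective.1 hinj
  have htarget : Λ - b.1 ∈ V := by
    intro i j hij
    rcases hij.eq_or_lt with rfl | hij
    · simp [Λ]
    · simp [Λ, hb i j hij, Matrix.diagonal_apply_ne _ hij.ne']
  obtain ⟨⟨M, hM⟩, hLM⟩ := hsurj ⟨_, htarget⟩
  have hLM' : L0 M = Λ - b.1 := congrArg Subtype.val hLM
  have e1 : ∀ i j, j < i → (1 + M) i j = 0 := by
    intro i j hij
    rw [Matrix.add_apply, hM i j hij.le, Matrix.one_apply_ne hij.ne', add_zero]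
  have e2 : ∀ i, (1 + M) i i = 1 := by
    intro i
    rw [Matrix.add_apply, hM i i le_rfl, Matrix.one_apply_eq, add_zero]
  refine ⟨⟨1 + M, det_unitriangular _ e1 e2⟩, ⟨e1, e2⟩, fun i j => ?_⟩
  have h3 : b.1 * (1 + M) = (1 + M) * Λ := by
    have : b.1 * M - M * Λ = Λ - b.1 := hLM'
    rw [mul_add, add_mul, mul_one, one_mul]
    rw [sub_eq_iff_eq_add] at this
    rw [this]; abel
  change (b.1 * (1 + M)) i j = (1 + M) i j * b.1 j j
  rw [h3, Matrix.mul_diagonal]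

include hΓ in
/-- The unipotent part of a triangular group inherits cocompactness. Given `γ` bringing `g` to a bounded
position, a small power of `γ0` makes `β = γ0 ^ a * γ` regular, with bounded diagonal entries at the
positions in `J`. Diagonalize `β` by a unitriangular `w` and bring `w` to a bounded position by `δ`.
Then `k = δ * β * δ⁻¹` moves `δ * w` boundedly, so `k` is bounded by properness, and `k⁻¹ * β` is
unipotent because `k` has the same diagonal as `β`. -/
theorem unipotent_cocompact {J : Set (Fin n)} (hC : Coc J Γ) (hpr : Prp J Γ) {γ0 : SLR n}
    (hγ0 : γ0 ∈ Γ) (hreg : ∀ i j, i < j → |γ0.1 i i| ≠ |γ0.1 j j|) :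
    ∃ R, ∀ g : SLR n, UU g → ∃ u ∈ Γ, UU u ∧ QB J R (u * g) := by
  classical
  obtain ⟨R0, hR0⟩ := hC
  let R := max R0 1
  have hR1 : 1 ≤ R := le_max_right _ _
  let F : Finset (Fin n × Fin n) := Finset.univ.filter fun p => p.1 < p.2
  obtain ⟨A, hA⟩ := exists_EB_of_finite (Finset.range (F.card + 1)) fun a => γ0 ^ a
  obtain ⟨A', hA'⟩ := exists_EB_of_finite (Finset.range (F.card + 1)) fun a => (γ0 ^ a)⁻¹
  let B := max 1 (max A A') * R
  have hB : R ≤ B := by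
    have : 1 * R ≤ max 1 (max A A') * R :=
      mul_le_mul_of_nonneg_right (le_max_left _ _) (by linarith)
    simpa [B] using this
  obtain ⟨C, hC⟩ := hpr (B * B)
  -- bounds for `k⁻¹ * γ0 ^ a` and its inverse
  let C' : ℝ := n.factorial * (max C 1) ^ n
  let D := n * C' * A
  let D' := n * A' * C
  refine ⟨max (n * D * R) (n * R * D'), fun g hg => ?_⟩
  obtain ⟨γ, hγ, hq⟩ := hR0 g
  have hq : QB J R (γ * g) := hq.mono (le_max_left _ _)
  obtain ⟨a, haF, ha⟩ := exists_avoid F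
    (fun p a => |(γ0 ^ a * γ).1 p.1 p.1| = |(γ0 ^ a * γ).1 p.2 p.2|)
    (fun p hp a b => bad_unique (hΓ γ0 hγ0) (hΓ γ hγ) (hreg _ _ (by simpa [F] using hp)) a b)
  have haR : a ∈ Finset.range (F.card + 1) := Finset.mem_range.2 (Nat.lt_succ_of_le haF)
  have hAa := hA a haR
  have hAa' := hA' a haR
  set β := γ0 ^ a * γ with hβ
  have hβΓ : β ∈ Γ := Γ.mul_mem (Γ.pow_mem hγ0 a) hγ
  have hβT := hΓ β hβΓ
  have hγT := hΓ γ hγ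
  have hpT := (hΓ γ0 hγ0).pow a
  -- diagonal entries of `β` at the positions in `J`
  have hdiag : ∀ j ∈ J, |β.1 j j| ≤ B ∧ |(β.1 j j)⁻¹| ≤ B := by
    intro j hj
    have h1 := (hq j hj j).1
    have h2 := (hq j hj j).2
    rw [hγT.mul_diag hg.1, hg.2, mul_one] at h1
    rw [(hγT.mul hg.1).inv_diag, hγT.mul_diag hg.1, hg.2, mul_one] at h2
    constructor
    · rw [hβ, hpT.mul_diag hγT, abs_mul]
      refine mul_le_mul ((hAa j j).trans ?_) h1 (abs_nonneg _) (by positivity)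
      exact (le_max_left _ _).trans (le_max_right _ _)
    · rw [hβ, hpT.mul_diag hγT, mul_inv, abs_mul, ← hpT.inv_diag]
      refine mul_le_mul ((hAa' j j).trans ?_) h2 (abs_nonneg _) (by positivity)
      exact (le_max_right _ _).trans (le_max_right _ _)
  obtain ⟨w, hw, hbw⟩ := exists_diagonalize hβT fun i j hij e => ha (i, j)
    (by simpa [F] using hij) (by rw [e])
  obtain ⟨δ, hδ, hqδ⟩ := hR0 w
  have hqδ : QB J R (δ * w) := hqδ.mono (le_max_left _ _)
  have hδT := hΓ δ hδ
  let k := δ * β * δ⁻¹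
  have hkΓ : k ∈ Γ := Γ.mul_mem (Γ.mul_mem hδ hβΓ) (Γ.inv_mem hδ)
  have hbw' : ∀ i j, ((β * w)⁻¹).1 j i = (β.1 j j)⁻¹ * (w⁻¹).1 j i := by
    -- `(β * w)⁻¹` is `w⁻¹` with rows rescaled
    have h1 : (β * w).1 = w.1 * Matrix.diagonal fun j => β.1 j j := by
      ext i j; rw [hbw, Matrix.mul_diagonal]
    have h2 : ((β * w)⁻¹).1 = (Matrix.diagonal fun j => (β.1 j j)⁻¹) * (w⁻¹).1 := by
      rw [coe_inv_eq]
      refine Matrix.inv_eq_left_inv ?_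
      rw [h1, Matrix.mul_assoc, ← Matrix.mul_assoc (w⁻¹).1, val_inv_mul, Matrix.one_mul,
        Matrix.diagonal_mul_diagonal]
      rw [← Matrix.diagonal_one]
      congr 1
      funext j
      exact inv_mul_cancel₀ (hβT.diag_ne j)
    intro i j
    rw [h2, Matrix.diagonal_mul]
  have hkq : QB J (B * B) (k * (δ * w)) := by
    have e : k * (δ * w) = δ * (β * w) := by simp only [k]; group
    rw [e]
    intro j hj i
    obtain ⟨d1, d2⟩ := hdiag j hj
    obtain ⟨q1, q2⟩ := hqδ j hj i
    constructor
    · have : (δ * (β * w)).1 i j = (δ * w).1 i j * β.1 j j := by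
        rw [mul_entry, mul_entry, Finset.sum_mul]
        exact Finset.sum_congr rfl fun l _ => by rw [hbw, mul_assoc]
      rw [this, abs_mul]
      exact mul_le_mul (q1.trans hB) d1 (abs_nonneg _) (by linarith)
    · have : ((δ * (β * w))⁻¹).1 j i = (β.1 j j)⁻¹ * ((δ * w)⁻¹).1 j i := by
        rw [mul_inv_rev, mul_inv_rev δ w, mul_entry (β * w)⁻¹, mul_entry w⁻¹, Finset.mul_sum]
        exact Finset.sum_congr rfl fun l _ => by rw [hbw', mul_assoc]
      rw [this, abs_mul]
      exact mul_le_mul d2 (q2.trans hB) (abs_nonneg _) (by linarith)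
  have hB1 : R ≤ B * B := by nlinarith
  have hkC : EB C k := hC k hkΓ _ (hqδ.mono hB1) hkq
  refine ⟨k⁻¹ * β, Γ.mul_mem (Γ.inv_mem hkΓ) hβΓ, ⟨(hΓ k hkΓ).inv.mul hβT, fun i => ?_⟩, ?_⟩
  · rw [(hΓ k hkΓ).inv.mul_diag hβT, (hΓ k hkΓ).inv_diag, (hδT.mul hβT).mul_diag hδT.inv,
      hδT.mul_diag hβT, hδT.inv_diag]
    have := hδT.diag_ne i
    have := hβT.diag_ne i
    field_simp
  · have e : k⁻¹ * β * g = (k⁻¹ * γ0 ^ a) * (γ * g) := by rw [hβ]; group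
    rw [e]
    refine QB.mul_left (hkC.inv.mul hAa) ?_ hq
    rw [mul_inv_rev, inv_inv]
    exact hAa'.mul hkC

end Triangular

section Final
variable {n m : ℕ}

/-- The slice adapted to the index set `{m, …, n - 1}`. -/
def slice0 (n m : ℕ) : Slice n where
  c j := if m ≤ j then 0 else j
  J := {j | m ≤ (j : ℕ)}
  c_zero := fun _ hj => if_pos hj
  c_le := by
    intro j hj l hl
    have hj' : m ≤ (j : ℕ) := hj
    rw [Fin.lt_def] at hl
    rw [if_pos (by omega)]
    exact Nat.zero_le _
  dich := by
    intro i l h1 h2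
    rw [Fin.lt_def] at h2
    left
    change m ≤ (l : ℕ)
    by_contra hc
    rw [if_neg hc] at h1
    omega

/-- The slice adapted to the index set `{m - 1, m + 1, …, n - 1}`. -/
def slice1 (n m : ℕ) (hm : 1 < m) : Slice n where
  c j := if m < j ∨ (j : ℕ) + 1 = m then 0 else if (j : ℕ) = m then m - 1 else j
  J := {j | m < (j : ℕ) ∨ (j : ℕ) + 1 = m}
  c_zero := fun _ hj => if_pos hj
  c_le := by
    intro j hj l hl
    have hj' : m < (j : ℕ) ∨ (j : ℕ) + 1 = m := hj
    rw [Fin.lt_def] at hl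
    split_ifs <;> omega
  dich := by
    intro i l h1 h2
    rw [Fin.lt_def] at h2
    change (m < (l : ℕ) ∨ (l : ℕ) + 1 = m) ∨ ((m < (i : ℕ) ∨ (i : ℕ) + 1 = m) ∧ _)
    split_ifs at h1 <;> omega

open Classical in
/-- `kappa` as a product over all pairs of indices. -/
theorem kappa_eq_prod (S : Slice n) (b : SLR n) : S.kappa b = ∏ j : Fin n, ∏ i : Fin n,
    if S.c j ≤ i ∧ i < j then |b.1 i i * (b.1 j j)⁻¹| else 1 := by
  rw [← Finset.prod_product_right' Finset.univ Finset.univ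
    (fun i j : Fin n => if S.c j ≤ i ∧ i < j then |b.1 i i * (b.1 j j)⁻¹| else 1)]
  rw [← Finset.prod_filter]
  unfold Slice.kappa
  refine Finset.prod_bij (fun p _ => (S.row p, S.col p)) ?_ ?_ ?_ ?_
  · intro p _
    exact Finset.mem_filter.2 ⟨Finset.mem_univ _, p.2⟩
  · intro p _ q _ h
    exact Subtype.ext h
  · rintro ⟨i, j⟩ h
    have h' := (Finset.mem_filter.1 h).2
    exact ⟨S.pos i j h'.1 h'.2, Finset.mem_univ _, rfl⟩
  · intro p _; rfl

/-- The two slices are scaled differently by a triangular matrix. They differ only in the entries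
`(i, m)` and `(i, m - 1)` with `i < m - 1`, so the exponent is `m - 1`. -/
theorem kappa_ratio (hm : 1 < m) (hmn : m < n) : ∃ e, 0 < e ∧
    (∀ b : SLR n, UT b → (slice0 n m).kappa b = (slice1 n m hm).kappa b *
      (|b.1 ⟨m - 1, by omega⟩ ⟨m - 1, by omega⟩| / |b.1 ⟨m, hmn⟩ ⟨m, hmn⟩|) ^ e) := by
  classical
  let a0 : Fin n := ⟨m - 1, by omega⟩
  let a1 : Fin n := ⟨m, hmn⟩
  have h01 : a0 ≠ a1 := by
    intro h
    have := congrArg Fin.val h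
    simp only [a0, a1] at this
    omega
  refine ⟨(Finset.univ.filter fun i : Fin n => (i : ℕ) + 1 < m).card, ?_, fun b hb => ?_⟩
  · exact Finset.card_pos.2 ⟨⟨0, by omega⟩, by simpa using hm⟩
  change _ = _ * (|b.1 a0 a0| / |b.1 a1 a1|) ^ _
  rw [kappa_eq_prod, kappa_eq_prod]
  set t := |b.1 a0 a0| / |b.1 a1 a1| with ht
  have hsplit : ∀ f : Fin n → ℝ, ∏ j, f j = (∏ j ∈ Finset.univ \ {a0, a1}, f j) * (f a0 * f a1) := by
    intro f
    rw [← Finset.prod_sdiff (Finset.subset_univ {a0, a1}), Finset.prod_pair h01]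
  let F : Slice n → Fin n → ℝ := fun S j =>
    ∏ i : Fin n, if S.c j ≤ i ∧ i < j then |b.1 i i * (b.1 j j)⁻¹| else 1
  change ∏ j, F (slice0 n m) j = (∏ j, F (slice1 n m hm) j) * _
  rw [hsplit (F (slice0 n m)), hsplit (F (slice1 n m hm)), mul_assoc]
  congr 1
  · refine Finset.prod_congr rfl fun j hj => Finset.prod_congr rfl fun i _ => ?_
    have hc : (slice0 n m).c j = (slice1 n m hm).c j := by
      simp only [Finset.mem_sdiff, Finset.mem_univ, true_and, Finset.mem_insert,
        Finset.mem_singleton, not_or, Fin.ext_iff, a0, a1] at hj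
      simp only [slice0, slice1]
      split_ifs <;> omega
    rw [hc]
  · simp only [F]
    rw [← Finset.prod_const, Finset.prod_filter, ← Finset.prod_mul_distrib,
      ← Finset.prod_mul_distrib, ← Finset.prod_mul_distrib]
    refine Finset.prod_congr rfl fun i _ => ?_
    have d0 := abs_pos.2 (hb.diag_ne a0)
    have d1 := abs_pos.2 (hb.diag_ne a1)
    have c1 : (slice0 n m).c a0 = m - 1 := by
      simp only [slice0, a0]; split_ifs <;> omega
    have c2 : (slice0 n m).c a1 = 0 := by
      simp only [slice0, a1]; split_ifs <;> omega
    have c3 : (slice1 n m hm).c a0 = 0 := by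
      simp only [slice1, a0]; split_ifs <;> omega
    have c4 : (slice1 n m hm).c a1 = m - 1 := by
      simp only [slice1, a1]; split_ifs <;> omega
    rw [c1, c2, c3, c4]
    simp only [Fin.lt_def, a0, a1, abs_mul, abs_inv]
    change _ at ht
    rcases lt_trichotomy ((i : ℕ) + 1) m with h | h | h
    · rw [if_neg (by omega), if_pos (by omega), if_pos (by omega), if_neg (by omega), if_pos h, ht]
      simp only [a0, a1] at d0 d1 ⊢
      field_simp
    · rw [if_neg (by omega), if_pos (by omega), if_neg (by omega), if_pos (by omega),
        if_neg (by omega)]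
      ring
    · rw [if_neg (by omega), if_neg (by omega), if_neg (by omega), if_neg (by omega),
        if_neg (by omega)]
      ring

theorem kappa_pow (S : Slice n) {b : SLR n} (hb : UT b) (k : ℕ) :
    S.kappa (b ^ k) = S.kappa b ^ k := by
  induction k with
  | zero => rw [pow_zero, pow_zero, S.kappa_UU UU.one]
  | succ k ih => rw [pow_succ, pow_succ, S.kappa_mul (hb.pow k) hb, ih]

theorem le_of_pow_bounded {x y D : ℝ} (hy : 0 < y) (h : ∀ k : ℕ, x ^ k ≤ D * y ^ k) :
    x ≤ y := by
  by_contra! hc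
  obtain ⟨k, hk⟩ := pow_unbounded_of_one_lt D ((one_lt_div hy).2 hc)
  rw [div_pow, lt_div_iff₀ (pow_pos hy k)] at hk
  exact (h k).not_gt hk

theorem Prp.subgroup {J : Set (Fin n)} {Γ Δ : Subgroup (SLR n)} (h : Prp J Γ) (hle : Δ ≤ Γ) :
    Prp J Δ := fun R => (h R).imp fun _ hC γ hγ => hC γ (hle hγ)

/-- The contradiction for triangular groups: the scaling factors of the powers of a regular element on
the two slices are comparable, hence equal, which contradicts regularity. -/
theorem triangular_false (hm : 1 < m) (hmn : m < n) {Γ : Subgroup (SLR n)}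
    (hΓ : ∀ γ ∈ Γ, UT γ) (hP : VecCoc Γ)
    (hC0 : Coc (slice0 n m).J Γ) (hp0 : Prp (slice0 n m).J Γ)
    (hC1 : Coc (slice1 n m hm).J Γ) (hp1 : Prp (slice1 n m hm).J Γ) : False := by
  obtain ⟨γ0, hγ0, hreg⟩ := exists_regular hΓ hP
  let N : Subgroup (SLR n) :=
    { carrier := {u | u ∈ Γ ∧ UU u}
      one_mem' := ⟨Γ.one_mem, UU.one⟩
      mul_mem' := fun ha hb => ⟨Γ.mul_mem ha.1 hb.1, ha.2.mul hb.2⟩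
      inv_mem' := fun ha => ⟨Γ.inv_mem ha.1, ha.2.inv⟩ }
  have hN : ∀ u, u ∈ N ↔ u ∈ Γ ∧ UU u := fun u => Iff.rfl
  have hNU : ∀ u ∈ N, UU u := fun u hu => hu.2
  have good : ∀ S : Slice n, Coc S.J Γ → Prp S.J Γ → ∃ R, S.Good N R := by
    intro S hC hp
    obtain ⟨R0, h0⟩ := unipotent_cocompact hΓ hC hp hγ0 hreg
    obtain ⟨R, hR, h⟩ := S.cocompact hNU ⟨R0, fun g hg =>
      let ⟨u, a, b, c⟩ := h0 g hg
      ⟨u, ⟨a, b⟩, c⟩⟩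
    exact ⟨R, hR, h, S.proper hNU (hp.subgroup fun u hu => hu.1)⟩
  obtain ⟨R0, g0⟩ := good _ hC0 hp0
  obtain ⟨R1, g1⟩ := good _ hC1 hp1
  have mono : ∀ {S : Slice n} {R R'}, S.Good N R → R ≤ R' → S.Good N R' := fun h hR =>
    ⟨h.pos.trans_le hR, fun y => (h.cocompact y).imp fun u hu => ⟨hu.1, hu.2.trans_le hR⟩, h.proper⟩
  have g0 := mono g0 (le_max_left R0 R1)
  have g1 := mono g1 (le_max_right R0 R1)
  obtain ⟨D, hD⟩ := Slice.transport hΓ hN _ _ g0 g1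
  obtain ⟨D', hD'⟩ := Slice.transport hΓ hN _ _ g1 g0
  have hT := hΓ γ0 hγ0
  have p0 := (slice0 n m).kappa_pos hT
  have p1 := (slice1 n m hm).kappa_pos hT
  have heq : (slice0 n m).kappa γ0 = (slice1 n m hm).kappa γ0 := by
    apply le_antisymm
    · refine le_of_pow_bounded (D := D) p1 fun k => ?_
      rw [← kappa_pow _ hT, ← kappa_pow _ hT]
      exact hD _ (Γ.pow_mem hγ0 k)
    · refine le_of_pow_bounded (D := D') p0 fun k => ?_
      rw [← kappa_pow _ hT, ← kappa_pow _ hT]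
      exact hD' _ (Γ.pow_mem hγ0 k)
  obtain ⟨e, he, h⟩ := kappa_ratio hm hmn
  have h1 := h γ0 hT
  rw [heq] at h1
  have h2 := (mul_eq_left₀ p1.ne').1 h1.symm
  have h3 := (pow_eq_one_iff_of_nonneg (div_nonneg (abs_nonneg _) (abs_nonneg _)) he.ne').1 h2
  rw [div_eq_one_iff_eq (abs_pos.2 (hT.diag_ne _)).ne'] at h3
  exact hreg ⟨m - 1, by omega⟩ ⟨m, hmn⟩ (by rw [Fin.lt_def]; change m - 1 < m; omega) h3

end Final

/-! ### Triangularization -/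

section Triangularization
variable {n : ℕ}

/-- `Δ` is a subgroup of `Γ` of finite index, expressed through a finite set of translates (the
elements of `F` need not belong to `Γ`). -/
def VFin (Δ Γ : Subgroup (SLR n)) : Prop :=
  Δ ≤ Γ ∧ ∃ F : Finset (SLR n), ∀ γ ∈ Γ, ∃ r ∈ F, r * γ ∈ Δ

theorem VFin.refl (Γ : Subgroup (SLR n)) : VFin Γ Γ :=
  ⟨le_rfl, {1}, fun γ hγ => ⟨1, by simp, by simpa using hγ⟩⟩

theorem VFin.trans {Γ Δ Θ : Subgroup (SLR n)} (h : VFin Θ Δ) (h' : VFin Δ Γ) : VFin Θ Γ := by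
  classical
  obtain ⟨h1, F, hF⟩ := h
  obtain ⟨h1', F', hF'⟩ := h'
  refine ⟨h1.trans h1', (F ×ˢ F').image fun p => p.1 * p.2, fun γ hγ => ?_⟩
  obtain ⟨r', hr', hr'2⟩ := hF' γ hγ
  obtain ⟨r, hr, hr2⟩ := hF _ hr'2
  exact ⟨r * r', Finset.mem_image.2 ⟨(r, r'), Finset.mem_product.2 ⟨hr, hr'⟩, rfl⟩,
    by rwa [mul_assoc]⟩

theorem VFin.of_finiteIndex {Γ : Subgroup (SLR n)} (G : Subgroup Γ) (hG : G.FiniteIndex) :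
    VFin (G.map Γ.subtype) Γ := by
  classical
  refine ⟨Subgroup.map_subtype_le _, ?_⟩
  have : Finite (Γ ⧸ G) := inferInstance
  have := Fintype.ofFinite (Γ ⧸ G)
  refine ⟨Finset.univ.image fun q : Γ ⧸ G => ((Quotient.out q : Γ) : SLR n)⁻¹, fun γ hγ => ?_⟩
  refine ⟨_, Finset.mem_image.2 ⟨((⟨γ⁻¹, Γ.inv_mem hγ⟩⁻¹ : Γ) : Γ ⧸ G), Finset.mem_univ _, rfl⟩, ?_⟩
  refine ⟨(Quotient.out ((⟨γ⁻¹, Γ.inv_mem hγ⟩⁻¹ : Γ) : Γ ⧸ G))⁻¹ * ⟨γ⁻¹, Γ.inv_mem hγ⟩⁻¹, ?_, ?_⟩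
  · exact QuotientGroup.eq.1 (QuotientGroup.out_eq' _)
  · simp

theorem VFin.coc {J : Set (Fin n)} {Γ Δ : Subgroup (SLR n)} (h : VFin Δ Γ) (hC : Coc J Γ) :
    Coc J Δ := by
  obtain ⟨-, F, hF⟩ := h
  obtain ⟨R, hR⟩ := hC
  obtain ⟨A, hA⟩ := exists_EB_of_finite F fun r => r
  obtain ⟨A', hA'⟩ := exists_EB_of_finite F fun r => r⁻¹
  refine ⟨max (n * A * R) (n * R * A'), fun g => ?_⟩
  obtain ⟨γ, hγ, hq⟩ := hR g
  obtain ⟨r, hr, hrΔ⟩ := hF γ hγ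
  exact ⟨r * γ, hrΔ, (mul_assoc r γ g).symm ▸ QB.mul_left (hA r hr) (hA' r hr) hq⟩

theorem VFin.vecCoc {Γ Δ : Subgroup (SLR n)} (h : VFin Δ Γ) (hC : VecCoc Γ) : VecCoc Δ := by
  obtain ⟨-, F, hF⟩ := h
  obtain ⟨R, hR⟩ := hC
  obtain ⟨A, hA⟩ := exists_EB_of_finite F fun r => r
  obtain ⟨A', hA'⟩ := exists_EB_of_finite F fun r => r⁻¹
  refine ⟨max (n * A * R) (n * R * A'), fun v f hvf => ?_⟩
  obtain ⟨γ, hγ, h1, h2⟩ := hR v f hvf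
  obtain ⟨r, hr, hrΔ⟩ := hF γ hγ
  refine ⟨r * γ, hrΔ, fun i => ?_, fun i => ?_⟩
  · have : (r * γ).1.mulVec v = r.1.mulVec (γ.1.mulVec v) := by
      rw [Matrix.mulVec_mulVec]; rfl
    rw [this]
    exact (abs_sum_mul_le _ _ _ _ (hA r hr i) h1).trans (le_max_left _ _)
  · have : Matrix.vecMul f ((r * γ)⁻¹).1 = Matrix.vecMul (Matrix.vecMul f (γ⁻¹).1) (r⁻¹).1 := by
      rw [Matrix.vecMul_vecMul, mul_inv_rev]; rfl
    rw [this]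
    exact (abs_sum_mul_le _ _ _ _ h2 fun l => hA' r hr l i).trans (le_max_right _ _)

theorem functional_eq_sum {E : Type*} [AddCommGroup E] [Module ℝ E]
    (q : (Fin n → ℝ) →ₗ[ℝ] E) (x : Fin n → ℝ) : q x = ∑ i, x i • q (Pi.single i 1) := by
  conv_lhs => rw [pi_eq_sum_univ' x]
  rw [map_sum]
  refine Finset.sum_congr rfl fun i _ => ?_
  rw [map_smul]

/-- A linear functional is bounded on bounded vectors. -/
theorem functional_bound {E : Type*} [NormedAddCommGroup E] [NormedSpace ℝ E]
    (q : (Fin n → ℝ) →ₗ[ℝ] E) :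
    ∃ K, 0 ≤ K ∧ ∀ R x, (∀ i, |x i| ≤ R) → ‖q x‖ ≤ K * R := by
  refine ⟨∑ i, ‖q (Pi.single i 1)‖, Finset.sum_nonneg fun _ _ => norm_nonneg _, fun R x hx => ?_⟩
  rw [functional_eq_sum q x, Finset.sum_mul]
  refine (norm_sum_le _ _).trans (Finset.sum_le_sum fun i _ => ?_)
  rw [norm_smul, mul_comm]
  exact mul_le_mul_of_nonneg_left (hx i) (norm_nonneg _)

/-- A semi-invariant complex valued functional on an invariant subspace is not surjective. If it were,
let `p a1 = 1` and `p a2 = I`, and move `(a1 + s a2, Re p)` by `γ` to a bounded pair. The eigenvalue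
`c` then has `‖c‖ ‖1 + s I‖` bounded, while the covector controls both the real and the imaginary part
of `c⁻¹`; this is impossible for large `s`. -/
theorem not_surjective_of_vecCoc {Γ : Subgroup (SLR n)} (hP : VecCoc Γ)
    (W : Submodule ℝ (Fin n → ℝ)) (hW : ∀ γ ∈ Γ, ∀ w ∈ W, γ.1.mulVec w ∈ W) (p : W →ₗ[ℝ] ℂ)
    (hp : ∀ γ (hγ : γ ∈ Γ), ∃ c : ℂ, ∀ w : W, p ⟨γ.1.mulVec w.1, hW γ hγ _ w.2⟩ = c * p w) :
    ¬ Function.Surjective p := by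
  intro hs
  obtain ⟨a1, h1⟩ := hs 1
  obtain ⟨a2, h2⟩ := hs Complex.I
  obtain ⟨q, hq⟩ := p.exists_extend
  obtain ⟨K, hK0, hK⟩ := functional_bound q
  have hqw : ∀ w : W, q w = p w := fun w => LinearMap.congr_fun hq w
  let f : Fin n → ℝ := fun i => (q (Pi.single i 1)).re
  have hf : ∀ x, f ⬝ᵥ x = (q x).re := by
    intro x
    rw [functional_eq_sum q x, Complex.re_sum]
    exact Finset.sum_congr rfl fun i _ => by simp [f, mul_comm]
  obtain ⟨R, hR⟩ := hP
  obtain ⟨L, hL⟩ : ∃ L, ∀ i, |a1.1 i| ≤ L ∧ |a2.1 i| ≤ L :=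
    ⟨∑ i, (|a1.1 i| + |a2.1 i|), fun i => by
      have := Finset.single_le_sum (f := fun i => |a1.1 i| + |a2.1 i|)
        (fun i _ => add_nonneg (abs_nonneg _) (abs_nonneg _)) (Finset.mem_univ i)
      have := abs_nonneg (a1.1 i)
      have := abs_nonneg (a2.1 i)
      constructor <;> linarith⟩
  let B := n * R * L + n * R * L
  -- large enough to exceed the bound `K * R * B` obtained for `‖1 + s I‖`
  let s := K * R * B + 1
  obtain ⟨γ, hγ, hv, hfγ⟩ := hR (a1 + s • a2 : W) f (by
    rw [hf, hqw, map_add, map_smul, h1, h2]; simp)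
  obtain ⟨c, hc⟩ := hp γ hγ
  obtain ⟨d, hd⟩ := hp γ⁻¹ (Γ.inv_mem hγ)
  have hcd : c * d = 1 := by
    have e := hc ⟨(γ⁻¹).1.mulVec a1.1, hW _ (Γ.inv_mem hγ) _ a1.2⟩
    rw [hd a1, h1, mul_one] at e
    rw [← e, ← h1]
    congr 1
    apply Subtype.ext
    change γ.1.mulVec ((γ⁻¹).1.mulVec a1.1) = a1.1
    rw [Matrix.mulVec_mulVec, val_mul_inv, Matrix.one_mulVec]
  have hc1 : ‖c‖ * ‖(1 : ℂ) + s * Complex.I‖ ≤ K * R := by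
    have := hK R _ hv
    rw [show γ.1.mulVec (a1 + s • a2 : W).1 =
      ((⟨_, hW γ hγ _ (a1 + s • a2 : W).2⟩ : W) : Fin n → ℝ) from rfl, hqw, hc, norm_mul,
      map_add, map_smul, h1, h2] at this
    simpa using this
  have key : ∀ w : W, (∀ i, |w.1 i| ≤ L) → |(d * p w).re| ≤ n * R * L := by
    intro w hw
    have e : Matrix.vecMul f (γ⁻¹).1 ⬝ᵥ w.1 = (d * p w).re := by
      rw [← Matrix.dotProduct_mulVec, hf, ← hd w, ← hqw]
    rw [← e]
    exact abs_sum_mul_le _ _ _ _ hfγ hw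
  have hd1 : ‖d‖ ≤ B := by
    have k1 := key a1 fun i => (hL i).1
    have k2 := key a2 fun i => (hL i).2
    rw [h1, mul_one] at k1
    rw [h2] at k2
    have : (d * Complex.I).re = - d.im := by simp
    rw [this, abs_neg] at k2
    exact (Complex.norm_le_abs_re_add_abs_im d).trans (add_le_add k1 k2)
  have hs1 : s ≤ ‖(1 : ℂ) + s * Complex.I‖ := by
    have := Complex.abs_im_le_norm ((1 : ℂ) + s * Complex.I)
    simp at this
    exact (le_abs_self s).trans this
  have hcd' : ‖c‖ * ‖d‖ = 1 := by rw [← norm_mul, hcd, norm_one]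
  have hKR : 0 ≤ K * R := (mul_nonneg (norm_nonneg _) (norm_nonneg _)).trans hc1
  have : ‖(1 : ℂ) + s * Complex.I‖ ≤ K * R * B := by
    calc ‖(1 : ℂ) + s * Complex.I‖ = (‖c‖ * ‖(1 : ℂ) + s * Complex.I‖) * ‖d‖ := by
          rw [mul_right_comm, hcd', one_mul]
      _ ≤ K * R * B := mul_le_mul hc1 hd1 (norm_nonneg _) hKR
  have : s ≤ K * R * B := hs1.trans this
  simp only [s] at this
  linarith

end Triangularization

section Triangularization
variable {n : ℕ}

/-- A virtual eigenfunctional with complex values has real rank one, so its kernel is an invariant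
hyperplane. -/
theorem exists_hyperplane {Γ : Subgroup (SLR n)} (hs : Group.IsSolvable Γ) (hP : VecCoc Γ)
    (W : Submodule ℝ (Fin n → ℝ)) (hW : ∀ γ ∈ Γ, ∀ w ∈ W, γ.1.mulVec w ∈ W) (hW0 : W ≠ ⊥) :
    ∃ Γ1, VFin Γ1 Γ ∧ ∃ W' ≤ W, (∀ γ ∈ Γ1, ∀ w ∈ W', γ.1.mulVec w ∈ W') ∧
      Module.finrank ℝ W' + 1 = Module.finrank ℝ W := by
  have hfin : FiniteDimensional ℂ (W →ₗ[ℝ] ℂ) := Module.Finite.of_restrictScalars_finite ℝ ℂ _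
  have hnt : Nontrivial (W →ₗ[ℝ] ℂ) := by
    obtain ⟨w, hw, hw0⟩ := W.ne_bot_iff.1 hW0
    obtain ⟨i, hi⟩ := Function.ne_iff.1 hw0
    refine ⟨Complex.ofRealCLM.toLinearMap ∘ₗ LinearMap.proj i ∘ₗ W.subtype, 0, fun h => hi ?_⟩
    exact Complex.ofReal_eq_zero.1 (LinearMap.congr_fun h ⟨w, hw⟩)
  let act : Γ → W →ₗ[ℝ] W := fun γ => (Matrix.mulVecLin γ.1.1).restrict fun w hw => hW γ.1 γ.2 w hw
  have act_mul : ∀ γ δ, act (γ * δ) = act γ ∘ₗ act δ := by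
    intro γ δ
    ext w : 2
    change (γ.1.1 * δ.1.1).mulVec w.1 = γ.1.1.mulVec (δ.1.1.mulVec w.1)
    rw [Matrix.mulVec_mulVec]
  have act_one : act 1 = LinearMap.id := by
    ext w : 2
    exact Matrix.one_mulVec _
  let ρ : Γ →* Module.End ℂ (W →ₗ[ℝ] ℂ) :=
    { toFun := fun γ =>
        { toFun := fun p => p ∘ₗ act γ⁻¹
          map_add' := fun _ _ => rfl
          map_smul' := fun _ _ => rfl }
      map_one' := by
        ext p w
        change p (act 1⁻¹ w) = p w
        rw [inv_one, act_one]; rfl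
      map_mul' := by
        intro γ δ
        ext p w
        change p (act (γ * δ)⁻¹ w) = p (act δ⁻¹ (act γ⁻¹ w))
        rw [mul_inv_rev, act_mul]; rfl }
  obtain ⟨G, hG, p, hp0, hp⟩ := exists_virtual_eigenvector ρ
  have hV := VFin.of_finiteIndex G hG
  have hp' : ∀ γ (hγ : γ ∈ G.map Γ.subtype), ∃ c : ℂ,
      ∀ w : W, p ⟨γ.1.mulVec w.1, hW γ (hV.1 hγ) _ w.2⟩ = c * p w := by
    rintro _ ⟨γ, hγ, rfl⟩
    obtain ⟨c, hc⟩ := hp γ⁻¹ (G.inv_mem hγ)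
    refine ⟨c, fun w => ?_⟩
    have := LinearMap.congr_fun hc w
    change p (act γ⁻¹⁻¹ w) = c * p w at this
    rw [inv_inv] at this
    exact this
  have hns := not_surjective_of_vecCoc (hV.vecCoc hP) W (fun γ hγ => hW γ (hV.1 hγ)) p hp'
  refine ⟨_, hV, p.ker.map W.subtype, Submodule.map_subtype_le _ _, ?_, ?_⟩
  · rintro γ hγ _ ⟨w, hw, rfl⟩
    obtain ⟨c, hc⟩ := hp' γ hγ
    refine ⟨⟨γ.1.mulVec w.1, hW γ (hV.1 hγ) _ w.2⟩, ?_, rfl⟩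
    have hw : p w = 0 := hw
    change p _ = 0
    rw [hc, hw, mul_zero]
  · have h1 := p.finrank_range_add_finrank_ker
    have h2 : Module.finrank ℝ p.range ≤ 1 := by
      have := Submodule.finrank_lt (s := p.range) fun h => hns (LinearMap.range_eq_top.1 h)
      rw [Complex.finrank_real_complex] at this
      omega
    have h3 : Module.finrank ℝ p.range ≠ 0 := by
      intro h
      exact hp0 (LinearMap.range_eq_bot.1 (Submodule.finrank_eq_zero.1 h))
    rw [Submodule.finrank_map_subtype_eq]
    omega

/-- A full flag in `W` that is invariant under a subgroup of finite index, given by an adapted basis. -/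
theorem exists_flag (k : ℕ) : ∀ {Γ : Subgroup (SLR n)}, Group.IsSolvable Γ → VecCoc Γ →
    ∀ W : Submodule ℝ (Fin n → ℝ), (∀ γ ∈ Γ, ∀ w ∈ W, γ.1.mulVec w ∈ W) →
    Module.finrank ℝ W = k → ∃ Γ1, VFin Γ1 Γ ∧ ∃ e : Fin k → (Fin n → ℝ), LinearIndependent ℝ e ∧
      (∀ i, e i ∈ W) ∧
      ∀ γ ∈ Γ1, ∀ i, γ.1.mulVec (e i) ∈ Submodule.span ℝ (e '' {j | j ≤ i}) := by
  induction k with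
  | zero =>
    intro Γ _ _ W _ _
    exact ⟨Γ, VFin.refl Γ, Fin.elim0, linearIndependent_empty_type, fun i => i.elim0,
      fun _ _ i => i.elim0⟩
  | succ k ih =>
    intro Γ hs hP W hW hk
    obtain ⟨Γ1, hV1, W', hle, hW', hk'⟩ := exists_hyperplane hs hP W hW (by
      rintro rfl
      simp at hk)
    have hs1 : Group.IsSolvable Γ1 := Group.isSolvable_of_isSolvable_injective (Subgroup.inclusion_injective hV1.1)
    obtain ⟨Γ2, hV2, e, he, heW, hinv⟩ := ih hs1 (hV1.vecCoc hP) W' hW' (by omega)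
    have hlt : W' < W := lt_of_le_of_ne hle (by rintro rfl; omega)
    obtain ⟨w, hwW, hwW'⟩ := SetLike.exists_of_lt hlt
    have hspan : Submodule.span ℝ (Set.range e) = W' := by
      apply Submodule.eq_of_le_of_finrank_eq
      · rw [Submodule.span_le]; rintro _ ⟨i, rfl⟩; exact heW i
      · rw [finrank_span_eq_card he, Fintype.card_fin]; omega
    have he' : LinearIndependent ℝ (Fin.snoc e w : Fin (k + 1) → (Fin n → ℝ)) :=
      linearIndependent_finSnoc.2 ⟨he, by rwa [hspan]⟩
    have heW' : ∀ i, (Fin.snoc e w : Fin (k + 1) → (Fin n → ℝ)) i ∈ W := by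
      intro i
      refine Fin.lastCases ?_ (fun i => ?_) i
      · rwa [Fin.snoc_last]
      · rw [Fin.snoc_castSucc]; exact hle (heW i)
    refine ⟨Γ2, hV2.trans hV1, Fin.snoc e w, he', heW', fun γ hγ i => ?_⟩
    have hspan' : Submodule.span ℝ (Set.range (Fin.snoc e w : Fin (k + 1) → (Fin n → ℝ))) = W := by
      apply Submodule.eq_of_le_of_finrank_eq
      · rw [Submodule.span_le]; rintro _ ⟨i, rfl⟩; exact heW' i
      · rw [finrank_span_eq_card he', Fintype.card_fin]; omega
    refine Fin.lastCases ?_ (fun i => ?_) i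
    · have : {j : Fin (k + 1) | j ≤ Fin.last k} = Set.univ := Set.eq_univ_of_forall Fin.le_last
      rw [this, Set.image_univ, hspan']
      exact hW γ (hV1.1 (hV2.1 hγ)) _ (heW' _)
    · rw [Fin.snoc_castSucc]
      refine Submodule.span_mono ?_ (hinv γ hγ i)
      rintro _ ⟨j, hj, rfl⟩
      exact ⟨j.castSucc, Fin.castSucc_le_castSucc_iff.2 hj, Fin.snoc_castSucc ..⟩

/-- A solvable group acting cocompactly on vector-covector pairs is virtually conjugate to a real
triangular group. -/
theorem exists_triangular {Γ : Subgroup (SLR n)} (hn : 0 < n) (hs : Group.IsSolvable Γ)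
    (hP : VecCoc Γ) :
    ∃ Γ1, VFin Γ1 Γ ∧ ∃ A : SLR n, ∀ γ ∈ Γ1, UT (A⁻¹ * γ * A) := by
  classical
  obtain ⟨Γ1, hV, e, he, -, hinv⟩ := exists_flag n hs hP ⊤ (fun _ _ _ _ => trivial) (by simp)
  let M : Matrix (Fin n) (Fin n) ℝ := Matrix.of fun i j => e j i
  have hM : M.det ≠ 0 := by
    have : LinearIndependent ℝ M.col := he
    rw [Matrix.linearIndependent_cols_iff_isUnit] at this
    exact ((Matrix.isUnit_iff_isUnit_det _).1 this).ne_zero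
  let i0 : Fin n := ⟨0, hn⟩
  let A : SLR n := ⟨M.updateCol i0 (M.det⁻¹ • e i0), by
    rw [Matrix.det_updateCol_smul]
    have : M.updateCol i0 (e i0) = M := by
      ext i j
      rw [Matrix.updateCol_apply]
      split_ifs with h
      · rw [h]; rfl
      · rfl
    rw [this, inv_mul_cancel₀ hM]⟩
  have hA : ∀ j, ∃ c : ℝ, c ≠ 0 ∧ A.1.col j = c • e j := by
    intro j
    by_cases h : j = i0
    · refine ⟨M.det⁻¹, inv_ne_zero hM, ?_⟩
      ext i
      change M.updateCol i0 (M.det⁻¹ • e i0) i j = _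
      rw [h, Matrix.updateCol_self]
    · refine ⟨1, one_ne_zero, ?_⟩
      ext i
      change M.updateCol i0 (M.det⁻¹ • e i0) i j = _
      rw [Matrix.updateCol_ne h, one_smul]
      rfl
  refine ⟨Γ1, hV, A, fun γ hγ i j hij => ?_⟩
  let φ : (Fin n → ℝ) →ₗ[ℝ] ℝ := LinearMap.proj i ∘ₗ Matrix.mulVecLin (A⁻¹).1
  have hφ : ∀ l, φ (A.1.col l) = (1 : Matrix (Fin n) (Fin n) ℝ) i l := by
    intro l
    rw [← val_inv_mul A]
    rfl
  have hker : Submodule.span ℝ (e '' {l | l ≤ j}) ≤ LinearMap.ker φ := by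
    rw [Submodule.span_le]
    rintro _ ⟨l, hl, rfl⟩
    obtain ⟨c, hc, h⟩ := hA l
    have h1 := hφ l
    rw [h, map_smul, Matrix.one_apply_ne ((show l ≤ j from hl).trans_lt hij).ne'] at h1
    exact (smul_eq_zero.1 h1).resolve_left hc
  obtain ⟨c, hc, h⟩ := hA j
  have h2 : φ (γ.1.mulVec (A.1.col j)) = 0 := by
    rw [h, Matrix.mulVec_smul, map_smul, LinearMap.mem_ker.1 (hker (hinv γ hγ j)), smul_zero]
  have h3 : (A⁻¹ * γ * A).1 i j = φ (γ.1.mulVec (A.1.col j)) := by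
    rw [mul_assoc]; rfl
  rw [h3, h2]

end Triangularization

/-! ### Conjugation and exchange of indices -/

section Conj
variable {n : ℕ}

/-- The conjugate `A⁻¹ Γ A`. -/
def conjSub (A : SLR n) (Γ : Subgroup (SLR n)) : Subgroup (SLR n) where
  carrier := {δ | A * δ * A⁻¹ ∈ Γ}
  one_mem' := by simp [Γ.one_mem]
  mul_mem' := by
    intro a b ha hb
    have := Γ.mul_mem ha hb
    change A * (a * b) * A⁻¹ ∈ Γ
    convert this using 1
    group
  inv_mem' := by
    intro a ha
    have := Γ.inv_mem ha
    change A * a⁻¹ * A⁻¹ ∈ Γ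
    convert this using 1
    group

theorem mem_conjSub (A : SLR n) (Γ : Subgroup (SLR n)) {γ : SLR n} (hγ : γ ∈ Γ) :
    A⁻¹ * γ * A ∈ conjSub A Γ := by
  change A * (A⁻¹ * γ * A) * A⁻¹ ∈ Γ
  convert hγ using 1
  group

theorem Coc.conj {J : Set (Fin n)} {Γ : Subgroup (SLR n)} (h : Coc J Γ) (A : SLR n) :
    Coc J (conjSub A Γ) := by
  obtain ⟨R, hR⟩ := h
  obtain ⟨a, ha⟩ := exists_EB A
  obtain ⟨a', ha'⟩ := exists_EB A⁻¹
  refine ⟨max (n * a' * R) (n * R * a), fun g => ?_⟩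
  obtain ⟨γ, hγ, hq⟩ := hR (A * g)
  refine ⟨A⁻¹ * γ * A, mem_conjSub A Γ hγ, ?_⟩
  have := QB.mul_left ha' (by rwa [inv_inv]) hq
  simpa only [mul_assoc] using this

theorem Prp.conj {J : Set (Fin n)} {Γ : Subgroup (SLR n)} (h : Prp J Γ) (A : SLR n) :
    Prp J (conjSub A Γ) := by
  intro R
  obtain ⟨a, ha⟩ := exists_EB A
  obtain ⟨a', ha'⟩ := exists_EB A⁻¹
  obtain ⟨C, hC⟩ := h (max (n * a * R) (n * R * a'))
  refine ⟨n * (n * a' * C) * a, fun γ hγ g h1 h2 => ?_⟩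
  have := hC _ hγ (A * g) (QB.mul_left ha ha' h1) (by
    have := QB.mul_left ha ha' h2
    simpa [mul_assoc] using this)
  have := (ha'.mul this).mul ha
  simpa [mul_assoc] using this

theorem VecCoc.conj {Γ : Subgroup (SLR n)} (h : VecCoc Γ) (A : SLR n) :
    VecCoc (conjSub A Γ) := by
  obtain ⟨R, hR⟩ := h
  obtain ⟨a, ha⟩ := exists_EB A
  obtain ⟨a', ha'⟩ := exists_EB A⁻¹
  refine ⟨max (n * a' * R) (n * R * a), fun v f hvf => ?_⟩
  obtain ⟨γ, hγ, h1, h2⟩ := hR (A.1.mulVec v) (Matrix.vecMul f (A⁻¹).1) (by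
    rw [Matrix.dotProduct_mulVec, Matrix.vecMul_vecMul, val_inv_mul, Matrix.vecMul_one, hvf])
  refine ⟨A⁻¹ * γ * A, mem_conjSub A Γ hγ, fun i => ?_, fun i => ?_⟩
  · have : (A⁻¹ * γ * A).1.mulVec v = (A⁻¹).1.mulVec (γ.1.mulVec (A.1.mulVec v)) := by
      rw [Matrix.mulVec_mulVec, Matrix.mulVec_mulVec]; rfl
    rw [this]
    exact (abs_sum_mul_le _ _ _ _ (ha' i) h1).trans (le_max_left _ _)
  · have : Matrix.vecMul f ((A⁻¹ * γ * A)⁻¹).1 =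
        Matrix.vecMul (Matrix.vecMul (Matrix.vecMul f (A⁻¹).1) (γ⁻¹).1) A.1 := by
      rw [Matrix.vecMul_vecMul, Matrix.vecMul_vecMul, mul_inv_rev, mul_inv_rev, inv_inv,
        ← Matrix.mul_assoc]
      simp only [← mul_assoc]
      rfl
    rw [this]
    exact (abs_sum_mul_le _ _ _ _ h2 fun l => ha l i).trans (le_max_right _ _)

/-- Right multiplication by `P` turns the index set `J` of `QB` into `J'`. -/
def Exch (J J' : Set (Fin n)) (P : SLR n) : Prop := ∀ R g, QB J' R (g * P) ↔ QB J R g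

theorem Exch.coc {J J' : Set (Fin n)} {P : SLR n} (h : Exch J J' P) {Γ : Subgroup (SLR n)}
    (hC : Coc J Γ) : Coc J' Γ := by
  obtain ⟨R, hR⟩ := hC
  refine ⟨R, fun g => ?_⟩
  obtain ⟨γ, hγ, hq⟩ := hR (g * P⁻¹)
  exact ⟨γ, hγ, by simpa [mul_assoc] using (h _ _).2 hq⟩

theorem Exch.prp {J J' : Set (Fin n)} {P : SLR n} (h : Exch J J' P) {Γ : Subgroup (SLR n)}
    (hC : Prp J Γ) : Prp J' Γ := by
  intro R
  obtain ⟨C, hC⟩ := hC R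
  refine ⟨C, fun γ hγ g h1 h2 => hC γ hγ (g * P⁻¹) ((h _ _).1 ?_) ((h _ _).1 ?_)⟩
  · simpa [mul_assoc] using h1
  · simpa [mul_assoc] using h2

/-- A transposition of the index set is realized by a signed permutation matrix of determinant one. -/
theorem exists_exch (a b : Fin n) (hab : a ≠ b) (J : Set (Fin n)) :
    ∃ P : SLR n, Exch J (Equiv.swap a b ⁻¹' J) P := by
  classical
  let σ : Equiv.Perm (Fin n) := Equiv.swap a b
  let s : Fin n → ℝ := fun j => if j = a then -1 else 1
  have hs : ∀ j, s j * s j = 1 := by intro j; simp only [s]; split_ifs <;> norm_num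
  have hs' : ∀ j, |s j| = 1 := by intro j; simp only [s]; split_ifs <;> norm_num
  let S : Matrix (Fin n) (Fin n) ℝ := Equiv.Perm.permMatrix ℝ σ
  have hSS : S * S = 1 := by
    change Equiv.Perm.permMatrix ℝ σ * Equiv.Perm.permMatrix ℝ σ = 1
    rw [← Matrix.permMatrix_mul, Equiv.swap_mul_self, Matrix.permMatrix_one]
  have hdet : (S * Matrix.diagonal s).det = 1 := by
    rw [Matrix.det_mul, Matrix.det_permutation, Matrix.det_diagonal, Equiv.Perm.sign_swap hab,
      Finset.prod_ite_eq' ]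
    simp
  let P : SLR n := ⟨_, hdet⟩
  have hPinv : (P⁻¹).1 = Matrix.diagonal s * S := by
    rw [coe_inv_eq]
    refine Matrix.inv_eq_left_inv ?_
    change Matrix.diagonal s * S * (S * Matrix.diagonal s) = 1
    rw [Matrix.mul_assoc, ← Matrix.mul_assoc S, hSS, Matrix.one_mul, Matrix.diagonal_mul_diagonal]
    simp_rw [hs]
    exact Matrix.diagonal_one
  have e1 : ∀ (g : SLR n) i j, |(g * P).1 i j| = |g.1 i (σ j)| := by
    intro g i j
    change |(g.1 * (S * Matrix.diagonal s)) i j| = _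
    rw [← Matrix.mul_assoc, Matrix.mul_diagonal, abs_mul, hs', mul_one]
    change |(g.1 * (σ.toPEquiv.toMatrix : Matrix (Fin n) (Fin n) ℝ)) i j| = _
    rw [PEquiv.mul_toMatrix_toPEquiv]
    rfl
  have e2 : ∀ (g : SLR n) i j, |((g * P)⁻¹).1 j i| = |(g⁻¹).1 (σ j) i| := by
    intro g i j
    rw [mul_inv_rev]
    change |((P⁻¹).1 * (g⁻¹).1) j i| = _
    rw [hPinv, Matrix.mul_assoc, Matrix.diagonal_mul, abs_mul, hs', one_mul]
    change |((σ.toPEquiv.toMatrix : Matrix (Fin n) (Fin n) ℝ) * (g⁻¹).1) j i| = _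
    rw [PEquiv.toMatrix_toPEquiv_mul]
    rfl
  refine ⟨P, fun R g => ⟨fun h j hj i => ?_, fun h j hj i => ?_⟩⟩
  · have := h (σ j) (by change σ (σ j) ∈ J; rwa [Equiv.swap_apply_self]) i
    rw [e1, e2, Equiv.swap_apply_self] at this
    exact this
  · rw [e1, e2]
    exact h _ hj i

end Conj

/-! ### From bounded data to cosets -/

section Completion
variable {n : ℕ}

/-- Dual systems of vectors and covectors are part of a matrix of determinant one and of its inverse,
and the size of that matrix is controlled by that of the systems. The missing columns form an
orthonormal system in the common kernel of the covectors; the first of them is rescaled to correct the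
determinant. The inverse of that determinant is the determinant of the matrix of covectors, which
bounds the rescaling. -/
theorem exists_completion (R : ℝ) : ∃ C : ℝ, ∀ (k : ℕ), 0 < k → k ≤ n →
    ∀ v f : Fin n → (Fin n → ℝ),
    (∀ i j : Fin n, k ≤ i → k ≤ j → f i ⬝ᵥ v j = if i = j then 1 else 0) →
    (∀ j : Fin n, k ≤ j → ∀ i, |v j i| ≤ R ∧ |f j i| ≤ R) →
    ∃ M : SLR n, EB C M ∧ ∀ j : Fin n, k ≤ j → ∀ i, M.1 i j = v j i ∧ (M⁻¹).1 j i = f j i := by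
  classical
  let Q := max R 1
  let D : ℝ := n.factorial * Q ^ n
  have hQ : 1 ≤ Q := le_max_right _ _
  have hD : 1 ≤ D := by
    have h1 : (1 : ℝ) ≤ n.factorial := by exact_mod_cast n.factorial_pos
    have h2 : 1 ≤ Q ^ n := one_le_pow₀ hQ
    exact one_le_mul_of_one_le_of_one_le h1 h2
  refine ⟨D * Q, fun k hk hkn v f hvf hR => ?_⟩
  -- an orthonormal system in the common kernel of the covectors
  obtain ⟨w, hw1, hw2, hw3⟩ : ∃ w : Fin n → (Fin n → ℝ),
      (∀ i j : Fin n, (i : ℕ) < k → (j : ℕ) < k → w i ⬝ᵥ w j = if i = j then 1 else 0) ∧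
      (∀ i j : Fin n, k ≤ i → (j : ℕ) < k → f i ⬝ᵥ w j = 0) ∧
      (∀ i j : Fin n, (j : ℕ) < k → |w j i| ≤ 1) := by
    let L : EuclideanSpace ℝ (Fin n) →ₗ[ℝ] ({i : Fin n // k ≤ (i : ℕ)} → ℝ) :=
      { toFun := fun x i => f i ⬝ᵥ x.ofLp
        map_add' := fun x y => by ext i; simp [dotProduct_add]
        map_smul' := fun c x => by ext i; simp [dotProduct_smul] }
    have hker : k ≤ Module.finrank ℝ L.ker := by
      have h1 := L.finrank_range_add_finrank_ker
      have h2 := L.range.finrank_le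
      rw [Module.finrank_fintype_fun_eq_card] at h2
      have h3 : Fintype.card {i : Fin n // k ≤ (i : ℕ)} + k = n := by
        have : Fintype.card {i : Fin n // ¬ k ≤ (i : ℕ)} = k := by
          rw [Fintype.card_subtype]
          simp only [not_le]
          rw [Fin.card_filter_val_lt, min_eq_right hkn]
        have h := Fintype.card_subtype_compl fun i : Fin n => k ≤ (i : ℕ)
        rw [this, Fintype.card_fin] at h
        have := Fintype.card_subtype_le fun i : Fin n => k ≤ (i : ℕ)
        rw [Fintype.card_fin] at this
        omega
      rw [finrank_euclideanSpace, Fintype.card_fin] at h1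
      omega
    let b := stdOrthonormalBasis ℝ L.ker
    refine ⟨fun j => if h : (j : ℕ) < k then (b ⟨j, h.trans_le hker⟩).1.ofLp else 0, ?_, ?_, ?_⟩
    · intro i j hi hj
      beta_reduce
      rw [dif_pos hi, dif_pos hj]
      have := b.inner_eq_ite ⟨j, hj.trans_le hker⟩ ⟨i, hi.trans_le hker⟩
      rw [Submodule.coe_inner, EuclideanSpace.inner_eq_star_dotProduct] at this
      simp only [star_trivial, Fin.mk.injEq, ← Fin.ext_iff] at this
      rw [this]
      simp only [eq_comm]
    · intro i j hi hj
      beta_reduce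
      rw [dif_pos hj]
      exact congrFun (LinearMap.mem_ker.1 (b ⟨j, hj.trans_le hker⟩).2) ⟨i, hi⟩
    · intro i j hj
      beta_reduce
      rw [dif_pos hj]
      have h1 := PiLp.norm_apply_le (b ⟨j, hj.trans_le hker⟩).1 i
      have h2 := b.orthonormal.1 ⟨j, hj.trans_le hker⟩
      rw [← Submodule.coe_norm] at h1
      rw [h2] at h1
      exact h1
  let M : Matrix (Fin n) (Fin n) ℝ := Matrix.of fun i j => if (j : ℕ) < k then w j i else v j i
  let F : Matrix (Fin n) (Fin n) ℝ := Matrix.of fun i j => if (i : ℕ) < k then w i j else f i j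
  have hFM : ∀ i j, (F * M) i j =
      (if (i : ℕ) < k then w i else f i) ⬝ᵥ (if (j : ℕ) < k then w j else v j) := by
    intro i j
    rw [Matrix.mul_apply]
    refine Finset.sum_congr rfl fun l _ => ?_
    simp only [M, F, Matrix.of_apply]
    congr 1 <;> split_ifs <;> rfl
  have hdet : F.det * M.det = 1 := by
    rw [← Matrix.det_mul]
    refine det_unitriangular _ (fun i j hij => ?_) fun i => ?_
    · rw [hFM]
      rw [Fin.lt_def] at hij
      by_cases hi : (i : ℕ) < k
      · rw [if_pos hi, if_pos (hij.trans hi), hw1 i j hi (hij.trans hi), if_neg]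
        rintro rfl; omega
      · by_cases hj : (j : ℕ) < k
        · rw [if_neg hi, if_pos hj, hw2 i j (by omega) hj]
        · rw [if_neg hi, if_neg hj, hvf i j (by omega) (by omega), if_neg]
          rintro rfl; omega
    · rw [hFM]
      by_cases hi : (i : ℕ) < k
      · rw [if_pos hi, if_pos hi, hw1 i i hi hi, if_pos rfl]
      · rw [if_neg hi, if_neg hi, hvf i i (by omega) (by omega), if_pos rfl]
  have hFD : |F.det| ≤ D := by
    have := Matrix.det_le (A := F) (abv := AbsoluteValue.abs) (x := Q) (by
      intro i j
      change |if (i : ℕ) < k then w i j else f i j| ≤ Q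
      split_ifs with h
      · exact (hw3 j i h).trans hQ
      · exact (hR i (by omega) j).2.trans (le_max_left _ _))
    simpa using this
  let i0 : Fin n := ⟨0, by omega⟩
  let A : SLR n := ⟨M.updateCol i0 (F.det • M.col i0), by
    rw [Matrix.det_updateCol_smul]
    have : M.updateCol i0 (M.col i0) = M := by
      ext i j
      rw [Matrix.updateCol_apply]
      split_ifs with h
      · rw [h]; rfl
      · rfl
    rw [this, hdet]⟩
  have hAv : ∀ j : Fin n, k ≤ j → ∀ i, A.1 i j = v j i := by
    intro j hj i
    change M.updateCol i0 (F.det • M.col i0) i j = _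
    rw [Matrix.updateCol_ne]
    · simp only [M, Matrix.of_apply]
      rw [if_neg (by omega)]
    · rintro rfl
      simp only [i0] at hj
      omega
  refine ⟨A, ?_, fun j hj => ?_⟩
  · intro i j
    have hM : |M i j| ≤ Q := by
      change |if (j : ℕ) < k then w j i else v j i| ≤ Q
      split_ifs with h
      · exact (hw3 i j h).trans hQ
      · exact (hR j (by omega) i).1.trans (le_max_left _ _)
    change |M.updateCol i0 (F.det • M.col i0) i j| ≤ _
    rw [Matrix.updateCol_apply]
    split_ifs with h
    · subst h
      change |F.det * M i i0| ≤ _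
      rw [abs_mul]
      exact mul_le_mul hFD hM (abs_nonneg _) (by linarith)
    · nlinarith
  · have h1 : Matrix.vecMul (f j) A.1 = Pi.single j 1 := by
      ext l
      change f j ⬝ᵥ A.1.col l = _
      by_cases hl : (l : ℕ) < k
      · have hjl : l ≠ j := by rintro rfl; omega
        have hz : f j ⬝ᵥ M.col l = 0 := by
          have : M.col l = w l := by
            ext i
            simp only [M, Matrix.col_apply, Matrix.of_apply, if_pos hl]
          rw [this, hw2 j l hj hl]
        rw [Pi.single_eq_of_ne hjl]
        by_cases h0 : l = i0
        · have : A.1.col l = F.det • M.col l := by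
            ext i
            change M.updateCol i0 (F.det • M.col i0) i l = _
            rw [h0, Matrix.updateCol_self]
          rw [this, dotProduct_smul, hz, smul_zero]
        · have : A.1.col l = M.col l := by
            ext i
            change M.updateCol i0 (F.det • M.col i0) i l = _
            rw [Matrix.updateCol_ne h0]; rfl
          rw [this, hz]
      · have : A.1.col l = v l := by
          ext i; exact hAv l (by omega) i
        rw [this, hvf j l hj (by omega), Pi.single_apply]
        simp only [eq_comm]
    have h2 : f j = Matrix.vecMul (Pi.single j 1) (A⁻¹).1 := by
      rw [← h1, Matrix.vecMul_vecMul, val_mul_inv, Matrix.vecMul_one]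
    intro i
    refine ⟨hAv j hj i, ?_⟩
    rw [h2, Matrix.single_one_vecMul]
    rfl

end Completion

section Reduction
variable {n : ℕ}

theorem isTopologicalGroup_SLR : IsTopologicalGroup (SLR n) :=
  Matrix.SpecialLinearGroup.topologicalGroup

theorem continuous_entry (i j : Fin n) : Continuous fun g : SLR n => g.1 i j :=
  (continuous_apply_apply i j).comp continuous_induced_dom

theorem isCompact_EB (R : ℝ) : IsCompact {g : SLR n | EB R g} := by
  have hcl : IsClosed {M : Matrix (Fin n) (Fin n) ℝ | M.det = 1} :=
    isClosed_eq (by fun_prop) continuous_const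
  have hemb : Topology.IsClosedEmbedding (fun g : SLR n => g.1) :=
    hcl.isClosedEmbedding_subtypeVal
  have hK : IsCompact (Set.pi Set.univ fun _ : Fin n => Set.pi Set.univ fun _ : Fin n =>
      Set.Icc (-R) R) := isCompact_univ_pi fun _ => isCompact_univ_pi fun _ => isCompact_Icc
  have := hemb.isCompact_preimage (K := Set.pi Set.univ fun _ : Fin n => Set.pi Set.univ
    fun _ : Fin n => Set.Icc (-R) R) hK
  convert this using 1
  ext g
  simp only [EB, abs_le, Set.mem_ofPred_eq]
  exact ⟨fun h i _ j _ => h i j, fun h i j => h i trivial j trivial⟩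

theorem exists_EB_of_isCompact {S : Set (SLR n)} (hS : IsCompact S) : ∃ C, ∀ g ∈ S, EB C g := by
  choose C hC using fun i j => hS.exists_bound_of_continuousOn (continuous_entry (n := n) i j).continuousOn
  refine ⟨∑ i, ∑ j, |C i j|, fun g hg i j => (hC i j g hg).trans ((le_abs_self _).trans ?_)⟩
  calc |C i j| ≤ ∑ j, |C i j| :=
        Finset.single_le_sum (f := fun j => |C i j|) (fun _ _ => abs_nonneg _) (Finset.mem_univ j)
    _ ≤ _ := Finset.single_le_sum (f := fun i => ∑ j, |C i j|)
        (fun _ _ => Finset.sum_nonneg fun _ _ => abs_nonneg _) (Finset.mem_univ i)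

variable {m : ℕ} {H : Subgroup (SLR n)}

/-- The columns and rows of `h` with index at least `m` are those of the identity matrix. -/
def Block (m : ℕ) (h : SLR n) : Prop :=
  ∀ j : Fin n, m ≤ j → ∀ i, (h.1 i j = if i = j then 1 else 0) ∧ h.1 j i = if j = i then 1 else 0

theorem mem_H_of_block (hmn : m < n)
    (hH : (H : Set (SLR n)) = {g : SLR n | ∃ A : Matrix.SpecialLinearGroup (Fin m) ℝ,
        ∀ i j : Fin n, (g : Matrix (Fin n) (Fin n) ℝ) i j =
          if hi : (i : ℕ) < m then
            (if hj : (j : ℕ) < m then (A : Matrix (Fin m) (Fin m) ℝ) ⟨i, hi⟩ ⟨j, hj⟩ else 0)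
          else (if (i : ℕ) = (j : ℕ) then 1 else 0)})
    {h : SLR n} (hb : Block m h) : h ∈ H := by
  classical
  have h1 : ∀ j : Fin n, m ≤ j → ∀ i, h.1 i j = if i = j then 1 else 0 :=
    fun j hj i => (hb j hj i).1
  have h2 : ∀ i : Fin n, m ≤ i → ∀ j, h.1 i j = if i = j then 1 else 0 :=
    fun i hi j => (hb i hi j).2
  rw [← SetLike.mem_coe, hH]
  let p : Fin n → Prop := fun i => (i : ℕ) < m
  let e : Fin m ≃ {i : Fin n // p i} :=
    ⟨fun i => ⟨⟨i, i.2.trans hmn⟩, i.2⟩, fun i => ⟨i.1, i.2⟩, fun _ => rfl, fun _ => rfl⟩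
  have hdet := Matrix.twoBlockTriangular_det h.1 p fun i hi j hj => by
    rw [h2 i (not_lt.1 hi), if_neg]
    rintro rfl
    exact hi hj
  have hone : h.1.toSquareBlockProp (fun i => ¬ p i) = 1 := by
    ext i j
    rw [Matrix.toSquareBlockProp_def]
    change h.1 i.1 j.1 = _
    rw [h2 _ (not_lt.1 i.2), Matrix.one_apply]
    simp only [Subtype.ext_iff]
  rw [hone, Matrix.det_one, mul_one, h.2, ← Matrix.det_submatrix_equiv_self e] at hdet
  refine ⟨⟨_, hdet.symm⟩, fun i j => ?_⟩
  by_cases hi : (i : ℕ) < m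
  · rw [dif_pos hi]
    by_cases hj : (j : ℕ) < m
    · rw [dif_pos hj]; rfl
    · rw [dif_neg hj, h1 j (not_lt.1 hj), if_neg]
      rintro rfl
      exact hj hi
  · rw [dif_neg hi, h2 i (not_lt.1 hi)]
    simp only [Fin.ext_iff]

theorem block_of_mem_H
    (hH : (H : Set (SLR n)) = {g : SLR n | ∃ A : Matrix.SpecialLinearGroup (Fin m) ℝ,
        ∀ i j : Fin n, (g : Matrix (Fin n) (Fin n) ℝ) i j =
          if hi : (i : ℕ) < m then
            (if hj : (j : ℕ) < m then (A : Matrix (Fin m) (Fin m) ℝ) ⟨i, hi⟩ ⟨j, hj⟩ else 0)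
          else (if (i : ℕ) = (j : ℕ) then 1 else 0)})
    {h : SLR n} (hh : h ∈ H) : Block m h := by
  rw [← SetLike.mem_coe, hH] at hh
  obtain ⟨A, hA⟩ := hh
  refine fun j hj i => ⟨?_, ?_⟩
  · rw [hA]
    by_cases hi : (i : ℕ) < m
    · rw [dif_pos hi, dif_neg (by omega), if_neg]
      rintro rfl; omega
    · rw [dif_neg hi]; simp only [Fin.ext_iff]
  · rw [hA, dif_neg (by omega)]; simp only [Fin.ext_iff]

theorem dual_columns (g : SLR n) (i j : Fin n) :
    (g⁻¹).1 i ⬝ᵥ (fun l => g.1 l j) = if i = j then 1 else 0 := by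
  change ((g⁻¹).1 * g.1) i j = _
  rw [val_inv_mul, Matrix.one_apply]

/-- Two matrices with the same data outside the `m`-block are in the same coset. -/
theorem coset_eq_of_data
    (hH : ∀ h, h ∈ H ↔ Block m h)
    {g M : SLR n} (h : ∀ j : Fin n, m ≤ j → ∀ i, M.1 i j = g.1 i j ∧ (M⁻¹).1 j i = (g⁻¹).1 j i) :
    (M : SLR n ⧸ H) = g := by
  rw [QuotientGroup.eq]
  refine (hH _).2 fun j hj i => ⟨?_, ?_⟩
  · rw [mul_entry, ← dual_columns M i j]
    exact Finset.sum_congr rfl fun l _ => by beta_reduce; rw [(h j hj l).1]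
  · rw [mul_entry, ← dual_columns g j i]
    exact Finset.sum_congr rfl fun l _ => by rw [(h j hj l).2]

theorem QB_mul_H
    (hH : ∀ h, h ∈ H ↔ Block m h)
    {R : ℝ} {g h : SLR n} (hh : h ∈ H) (hg : QB {j : Fin n | m ≤ (j : ℕ)} R g) :
    QB {j : Fin n | m ≤ (j : ℕ)} R (g * h) := by
  intro j hj i
  have h1 := fun i => ((hH _).1 hh j hj i).1
  have h2 := fun i => ((hH _).1 (H.inv_mem hh) j hj i).2
  constructor
  · rw [mul_entry]
    simp only [h1, mul_ite, mul_one, mul_zero, Finset.sum_ite_eq', Finset.mem_univ, if_true]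
    exact (hg j hj i).1
  · rw [mul_inv_rev, mul_entry]
    simp only [h2, ite_mul, one_mul, zero_mul, Finset.sum_ite_eq, Finset.mem_univ, if_true]
    exact (hg j hj i).2

/-- Cosets with bounded data are represented by bounded matrices, and so form a compact set. -/
theorem prp_of_proper (hm : 0 < m) (hmn : m < n)
    (hH : ∀ h, h ∈ H ↔ Block m h)
    {Γ : Subgroup (SLR n)}
    (hproper : ∀ C : Set (SLR n ⧸ H), IsCompact C →
      IsCompact (closure {γ : SLR n | γ ∈ Γ ∧ ∃ x ∈ C, γ • x ∈ C})) :
    Prp {j : Fin n | m ≤ (j : ℕ)} Γ := by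
  intro R
  obtain ⟨C, hC⟩ := exists_completion (n := n) R
  have hK : IsCompact ((fun g : SLR n => (g : SLR n ⧸ H)) '' {g | EB C g}) :=
    (isCompact_EB C).image continuous_quotient_mk'
  have key : ∀ g : SLR n, QB {j : Fin n | m ≤ (j : ℕ)} R g →
      (g : SLR n ⧸ H) ∈ (fun g : SLR n => (g : SLR n ⧸ H)) '' {g | EB C g} := by
    intro g hg
    obtain ⟨M, hM, h⟩ := hC m hm hmn.le (fun j i => g.1 i j) (fun j i => (g⁻¹).1 j i)
      (fun i j _ _ => dual_columns g i j) (fun j hj i => hg j hj i)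
    exact ⟨M, hM, coset_eq_of_data hH h⟩
  obtain ⟨B, hB⟩ := exists_EB_of_isCompact (hproper _ hK)
  exact ⟨B, fun γ hγ g h1 h2 => hB γ (subset_closure ⟨hγ, g, key g h1, key (γ * g) h2⟩)⟩

/-- The quotient is the increasing union of the open images of bounded sets. -/
theorem coc_of_compact
    (hH : ∀ h, h ∈ H ↔ Block m h)
    {Γ : Subgroup (SLR n)}
    (hcomp : CompactSpace (Quotient (MulAction.orbitRel Γ (SLR n ⧸ H)))) :
    Coc {j : Fin n | m ≤ (j : ℕ)} Γ := by
  have := isTopologicalGroup_SLR (n := n)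
  have : ContinuousConstSMul Γ (SLR n ⧸ H) := ⟨fun γ => continuous_const_smul γ.1⟩
  let π : SLR n → Quotient (MulAction.orbitRel Γ (SLR n ⧸ H)) :=
    fun g => Quotient.mk _ (g : SLR n ⧸ H)
  have hπ : IsOpenMap π := (isOpenMap_quotient_mk'_mul (Γ := Γ) (T := SLR n ⧸ H)).comp
    QuotientGroup.isOpenMap_coe
  let U : ℕ → Set (SLR n) := fun k =>
    ⋂ i : Fin n, ⋂ j : Fin n, {g | |g.1 i j| < k} ∩ {g | |(g⁻¹).1 j i| < k}
  have hU : ∀ k, IsOpen (U k) := fun k => isOpen_iInter_of_finite fun i =>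
    isOpen_iInter_of_finite fun j =>
      (isOpen_lt (continuous_entry i j).abs continuous_const).inter
        (isOpen_lt ((continuous_entry j i).comp continuous_inv).abs continuous_const)
  have hUmono : Monotone U := by
    intro k l hkl g hg
    simp only [U, Set.mem_iInter, Set.mem_inter_iff] at hg ⊢
    intro i j
    have hkl' : (k : ℝ) ≤ l := by exact_mod_cast hkl
    exact ⟨(hg i j).1.trans_le hkl', (hg i j).2.trans_le hkl'⟩
  obtain ⟨k, hk⟩ := isCompact_univ.elim_directed_cover (fun k => π '' U k) (fun k => hπ _ (hU k))
    (by
      intro q _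
      obtain ⟨x, rfl⟩ := Quotient.exists_rep q
      obtain ⟨g, rfl⟩ := QuotientGroup.mk_surjective x
      obtain ⟨A, hA⟩ := exists_EB g
      obtain ⟨A', hA'⟩ := exists_EB g⁻¹
      obtain ⟨k, hk⟩ := exists_nat_gt (max A A')
      refine Set.mem_iUnion.2 ⟨k, g, ?_, rfl⟩
      simp only [U, Set.mem_iInter, Set.mem_inter_iff]
      exact fun i j => ⟨((hA i j).trans (le_max_left _ _)).trans_lt hk,
        ((hA' j i).trans (le_max_right _ _)).trans_lt hk⟩)
    (Monotone.directed_le fun k l hkl => Set.image_mono (hUmono hkl))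
  refine ⟨k, fun g => ?_⟩
  obtain ⟨g', hg', he⟩ := hk (Set.mem_univ (π g))
  obtain ⟨γ, hγ⟩ := MulAction.orbitRel_apply.1 (Quotient.exact he)
  have hγ' : ((γ.1 * g : SLR n) : SLR n ⧸ H) = g' := hγ
  rw [eq_comm, QuotientGroup.eq] at hγ'
  refine ⟨γ.1, γ.2, ?_⟩
  have hq : QB {j : Fin n | m ≤ (j : ℕ)} k g' := by
    intro j _ i
    simp only [U, Set.mem_iInter, Set.mem_inter_iff] at hg'
    exact ⟨(hg' i j).1.le, (hg' i j).2.le⟩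
  have := QB_mul_H hH hγ' hq
  rwa [mul_inv_cancel_left] at this

/-- A pair with `f v = 1` is the last column of a matrix and the last row of its inverse. -/
theorem vecCoc_of_coc (hm : 0 < m) (hmn : m < n) {Γ : Subgroup (SLR n)}
    (h : Coc {j : Fin n | m ≤ (j : ℕ)} Γ) : VecCoc Γ := by
  obtain ⟨R, hR⟩ := h
  refine ⟨R, fun v f hvf => ?_⟩
  let l : Fin n := ⟨n - 1, by omega⟩
  have hl : ∀ i : Fin n, n - 1 ≤ i → i = l := fun i hi => Fin.ext (by simp only [l]; omega)
  obtain ⟨C, hC⟩ := exists_completion (n := n) (∑ i, (|v i| + |f i|))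
  obtain ⟨M, -, hM⟩ := hC (n - 1) (by omega) (by omega) (fun _ => v) (fun _ => f)
    (fun i j hi hj => by rw [hl i hi, hl j hj, if_pos rfl, hvf]) (fun j _ i => by
      have := Finset.single_le_sum (f := fun i => |v i| + |f i|)
        (fun i _ => add_nonneg (abs_nonneg _) (abs_nonneg _)) (Finset.mem_univ i)
      have := abs_nonneg (v i)
      have := abs_nonneg (f i)
      constructor <;> linarith)
  have hM := hM l le_rfl
  obtain ⟨γ, hγ, hq⟩ := hR M
  have hq := hq l (by change m ≤ n - 1; omega)
  refine ⟨γ, hγ, fun i => ?_, fun i => ?_⟩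
  · have := (hq i).1
    rw [mul_entry] at this
    simp only [(hM _).1] at this
    exact this
  · have := (hq i).2
    rw [mul_inv_rev, mul_entry] at this
    simp only [(hM _).2] at this
    exact this

end Reduction

/-- If `n > m > 1`, `H ≤ SL(n,ℝ)` is the image of the standard top-left-corner embedding of
`SL(m,ℝ)`, and `Γ` is a virtually solvable subgroup of `SL(n,ℝ)` acting properly on
`SL(n,ℝ)/H` by left translations, then `Γ \ SL(n,ℝ)/H` is not compact. -/
theorem solvable_subgroup_proper_action_on_SL_quotient_SL_not_cocompact
    (n m : ℕ) (hm : 1 < m) (hmn : m < n)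
    (H : Subgroup (Matrix.SpecialLinearGroup (Fin n) ℝ))
    (hH : (H : Set (Matrix.SpecialLinearGroup (Fin n) ℝ)) =
      {g : Matrix.SpecialLinearGroup (Fin n) ℝ | ∃ A : Matrix.SpecialLinearGroup (Fin m) ℝ,
        ∀ i j : Fin n, (g : Matrix (Fin n) (Fin n) ℝ) i j =
          if hi : (i : ℕ) < m then
            (if hj : (j : ℕ) < m then (A : Matrix (Fin m) (Fin m) ℝ) ⟨i, hi⟩ ⟨j, hj⟩ else 0)
          else (if (i : ℕ) = (j : ℕ) then 1 else 0)})
    (Γ : Subgroup (Matrix.SpecialLinearGroup (Fin n) ℝ))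
    (hΓsolv : ∃ Γ' : Subgroup ↥Γ, Γ'.FiniteIndex ∧ IsSolvable ↥Γ')
    (hproper : ∀ C : Set (Matrix.SpecialLinearGroup (Fin n) ℝ ⧸ H), IsCompact C →
      IsCompact (closure
        {γ : Matrix.SpecialLinearGroup (Fin n) ℝ | γ ∈ Γ ∧ ∃ x ∈ C, γ • x ∈ C})) :
    ¬ CompactSpace
      (Quotient (MulAction.orbitRel ↥Γ (Matrix.SpecialLinearGroup (Fin n) ℝ ⧸ H))) := by
  intro hcomp
  have hB : ∀ h, h ∈ H ↔ Block m h := fun h => ⟨block_of_mem_H hH, mem_H_of_block hmn hH⟩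
  have hC := coc_of_compact hB hcomp
  have hp := prp_of_proper (by omega) hmn hB hproper
  have hP := vecCoc_of_coc (by omega) hmn hC
  -- a solvable subgroup of finite index, virtually conjugate to a triangular group
  obtain ⟨G, hG, hGs⟩ := hΓsolv
  have hV1 := VFin.of_finiteIndex G hG
  have hGs' : Group.IsSolvable G := hGs
  have hs : Group.IsSolvable (G.map Γ.subtype) :=
    Group.isSolvable_of_surjective (f := (G.equivMapOfInjective Γ.subtype
      Γ.subtype_injective).toMonoidHom) (G.equivMapOfInjective Γ.subtype
      Γ.subtype_injective).surjective
  obtain ⟨Γ1, hV2, A, hA⟩ := exists_triangular (by omega) hs (hV1.vecCoc hP)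
  have hV := hV2.trans hV1
  have hC0 := (hV.coc hC).conj A
  have hp0 := (hp.subgroup hV.1).conj A
  have hP0 := (hV.vecCoc hP).conj A
  have hT : ∀ δ ∈ conjSub A Γ1, UT δ := by
    intro δ hδ
    have := hA _ hδ
    simpa [mul_assoc] using this
  -- exchanging the indices `m - 1` and `m` gives the second slice
  let a0 : Fin n := ⟨m - 1, by omega⟩
  let a1 : Fin n := ⟨m, hmn⟩
  obtain ⟨P, hE⟩ := exists_exch a0 a1 (by simp only [a0, a1, ne_eq, Fin.mk.injEq]; omega)
    {j : Fin n | m ≤ (j : ℕ)}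
  have hJ : Equiv.swap a0 a1 ⁻¹' {j : Fin n | m ≤ (j : ℕ)} = (slice1 n m hm).J := by
    ext j
    change m ≤ ((Equiv.swap a0 a1 j : Fin n) : ℕ) ↔ m < (j : ℕ) ∨ (j : ℕ) + 1 = m
    rw [Equiv.swap_apply_def]
    split_ifs with h1 h2
    · subst h1; simp only [a0, a1]; omega
    · subst h2; simp only [a0, a1]; omega
    · simp only [Fin.ext_iff, a0, a1] at h1 h2; omega
  rw [hJ] at hE
  exact triangular_false hm hmn hT hP0 hC0 hp0 (hE.coc hC0) (hE.prp hp0)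
end

section
/- (Jacobson–Morozov) Let 𝔤 be a finite-dimensional semisimple Lie algebra over ℝ and let X ∈ 𝔤 be a nonzero nilpotent element, i.e., the adjoint endomorphism ad X : 𝔤 → 𝔤 is nilpotent. Then there exist H, Y ∈ 𝔤 such that (H, X, Y) is an 𝔰𝔩₂-triple: [H, X] = 2X, [H, Y] = −2Y, and [X, Y] = H. -/
/-!
Semisimplicity makes the Killing form `κ` nondegenerate (Cartan's criterion). Write `A = ad X`.

* **The neutral element.** `A ^ 2` is self-adjoint for `κ`, so its range is the `κ`-orthogonal
  complement of its kernel. If `A ^ 2` kills `Z` then `C = [A, ad Z]` commutes with `A`, and the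
  nilpotency of `A` forces `A * ad Z` to be nilpotent (`isNilpotent_mul_of_commute_commutator`), so
  `κ(X, Z) = tr (A * ad Z) = 0`. Hence `X` lies in the range of `A ^ 2`, and there is `W` such that
  `H = [X, W]` satisfies `[H, X] = 2X`.
* **Correcting `W`.** `[H, W] + 2W` lies in the centralizer `ker A`, which is stable under `ad H`.
  The operator `ad H + 2` is injective on `ker A`, because `ad H - i` maps
  `ker A ∩ range (A ^ i)` into `range (A ^ (i + 1))` and `A` is nilpotent
  (`eq_zero_of_apply_eq_neg_two_smul`); so it is surjective there by finite dimensionality. Adding to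
  `W` a suitable element of `ker A` yields `Y`.
-/

section Ring

variable {R : Type*} [Ring R] {A B C : R}

/-- `[Aⁿ⁺¹, B] = (n + 1) C Aⁿ` when `C = [A, B]` commutes with `A`. -/
lemma pow_succ_mul_eq_of_commute_commutator (hC : A * B = B * A + C) (hAC : Commute A C) (n : ℕ) :
    A ^ (n + 1) * B = B * A ^ (n + 1) + (n + 1 : ℕ) • (C * A ^ n) := by
  induction n with
  | zero => simp [hC]
  | succ n ih =>
    rw [pow_succ' A (n + 1), mul_assoc, ih, mul_add, ← mul_assoc, hC, mul_smul_comm, ← mul_assoc A C,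
      hAC.eq, mul_assoc C A, ← pow_succ', add_mul, mul_assoc B, ← pow_succ', succ_nsmul _ (n + 1)]
    abel

/-- If `A` is nilpotent and commutes with `C = [A, B]`, then `C` is nilpotent. The exponent of `A`
in a relation `A ^ k * C ^ m = 0` is lowered one step at a time, by multiplying
`A ^ k * B = B * A ^ k + k C A ^ (k - 1)` by `C ^ m` on both sides. -/
lemma isNilpotent_commutator [IsAddTorsionFree R] (hC : A * B = B * A + C) (hAC : Commute A C)
    (hA : IsNilpotent A) : IsNilpotent C := by
  obtain ⟨n, hn⟩ := hA
  have key : ∀ k m : ℕ, A ^ k * C ^ m = 0 → IsNilpotent C := by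
    intro k
    induction k with
    | zero => exact fun m h ↦ ⟨m, by simpa using h⟩
    | succ k ih =>
      intro m h
      have h' : C ^ m * A ^ (k + 1) = 0 := by rw [← (hAC.pow_pow (k + 1) m).eq, h]
      have e := congrArg (fun t ↦ C ^ m * t * C ^ m)
        (pow_succ_mul_eq_of_commute_commutator hC hAC k)
      simp only [mul_add, add_mul, ← mul_assoc, h', zero_mul] at e
      rw [mul_assoc (C ^ m * B), h, mul_zero, zero_add, mul_smul_comm, smul_mul_assoc, eq_comm,
        smul_eq_zero_iff_right (Nat.succ_ne_zero k)] at e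
      refine ih (m + 1 + m) ?_
      rw [(hAC.pow_pow k (m + 1 + m)).eq, pow_add, mul_assoc, ← (hAC.pow_pow k m).eq, ← mul_assoc,
        ← e, pow_succ]
      simp only [mul_assoc]
  exact key n 0 (by simp [hn])

/-- If `A` is nilpotent and commutes with `C = [A, B]`, then `A * B` is nilpotent. Modulo the left
ideal generated by `A ^ (i + 1)`, one has `A ^ i * (A * B) ^ m = (i + 1) ^ m C ^ m A ^ i`, and `C` is
nilpotent. -/
lemma isNilpotent_mul_of_commute_commutator [IsAddTorsionFree R] (hC : A * B = B * A + C)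
    (hAC : Commute A C) (hA : IsNilpotent A) : IsNilpotent (A * B) := by
  obtain ⟨m, hm⟩ := isNilpotent_commutator hC hAC hA
  obtain ⟨n, hn⟩ := hA
  have step (i : ℕ) : A ^ i * (A * B) = B * A ^ (i + 1) + (i + 1 : ℕ) • (C * A ^ i) := by
    rw [← mul_assoc, ← pow_succ, pow_succ_mul_eq_of_commute_commutator hC hAC]
  have expand (i j : ℕ) : ∃ Q : R,
      A ^ i * (A * B) ^ j = Q * A ^ (i + 1) + ((i + 1) ^ j : ℕ) • (C ^ j * A ^ i) := by
    induction j with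
    | zero => exact ⟨0, by simp⟩
    | succ j ih =>
      obtain ⟨Q, hQ⟩ := ih
      refine ⟨Q * (B * A) + (i + 2 : ℕ) • (Q * C) + ((i + 1) ^ j : ℕ) • (C ^ j * B), ?_⟩
      rw [pow_succ, ← mul_assoc, hQ, add_mul, mul_assoc Q, step (i + 1), smul_mul_assoc,
        mul_assoc (C ^ j), step i, pow_succ' A (i + 1), pow_succ C j, pow_succ (i + 1) j, mul_smul]
      simp only [mul_add, add_mul, smul_add, mul_smul_comm, smul_mul_assoc, mul_assoc]
      abel
  have key : ∀ k i : ℕ, i + k = n → ∃ r, A ^ i * (A * B) ^ r = 0 := by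
    intro k
    induction k with
    | zero => exact fun i hi ↦ ⟨0, by simp [show i = n from hi, hn]⟩
    | succ k ih =>
      intro i hi
      obtain ⟨r, hr⟩ := ih (i + 1) (by omega)
      obtain ⟨Q, hQ⟩ := expand i m
      refine ⟨m + r, ?_⟩
      rw [pow_add, ← mul_assoc, hQ, hm, zero_mul, smul_zero, add_zero, mul_assoc, hr, mul_zero]
  obtain ⟨r, hr⟩ := key n 0 (by simp)
  exact ⟨r, by simpa using hr⟩

end Ring

section EndLemmas

variable {V : Type*} [AddCommGroup V] [Module ℝ V]

/-- If `[A, w] = h` and `[h, A] = 2A`, then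
`[A ^ (i + 1), w] = (i + 1) (h - i) A ^ i`. -/
lemma pow_succ_apply_of_sl2_relations {A h w : Module.End ℝ V}
    (hw : ∀ v, A (w v) = w (A v) + h v) (hh : ∀ v, h (A v) = A (h v) + (2 : ℝ) • A v)
    (i : ℕ) (v : V) :
    (A ^ (i + 1)) (w v) =
      w ((A ^ (i + 1)) v) + ((i : ℝ) + 1) • (h ((A ^ i) v) - (i : ℝ) • (A ^ i) v) := by
  induction i with
  | zero => simp [hw]
  | succ i ih =>
    have e : A (h ((A ^ i) v)) = h ((A ^ (i + 1)) v) - (2 : ℝ) • (A ^ (i + 1)) v := by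
      rw [pow_succ', Module.End.mul_apply, hh]; simp
    have e' : A ((A ^ i) v) = (A ^ (i + 1)) v := by rw [pow_succ', Module.End.mul_apply]
    rw [pow_succ' A (i + 1), Module.End.mul_apply, ih, map_add, hw, map_smul, map_sub, map_smul,
      e, e', Module.End.mul_apply]
    push_cast
    module

/-- On `ker A`, the eigenvalue `-2` of `h` does not occur: a `-2`-eigenvector in `ker A` would lie
in `range (A ^ i)` for every `i`. -/
lemma eq_zero_of_apply_eq_neg_two_smul {A h w : Module.End ℝ V}
    (hw : ∀ v, A (w v) = w (A v) + h v) (hh : ∀ v, h (A v) = A (h v) + (2 : ℝ) • A v)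
    (hA : IsNilpotent A) {v : V} (hv : A v = 0) (hv2 : h v = (-2 : ℝ) • v) : v = 0 := by
  have key (i : ℕ) : ∃ u, (A ^ i) u = v := by
    induction i with
    | zero => exact ⟨v, by simp⟩
    | succ i ih =>
      obtain ⟨u, hu⟩ := ih
      have e := pow_succ_apply_of_sl2_relations hw hh i u
      rw [pow_succ' A i, Module.End.mul_apply A, Module.End.mul_apply, hu, hv, map_zero, zero_add,
        hv2] at e
      have hne : ((i : ℝ) + 1) * (-2 - i) ≠ 0 :=
        mul_ne_zero (by positivity) (by have : (0 : ℝ) ≤ i := by positivity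
                                        linarith)
      refine ⟨(((i : ℝ) + 1) * (-2 - i))⁻¹ • w u, ?_⟩
      rw [map_smul, pow_succ', Module.End.mul_apply, e, inv_smul_eq_iff₀ hne]
      module
  obtain ⟨n, hn⟩ := hA
  obtain ⟨u, hu⟩ := key n
  rw [← hu, hn, LinearMap.zero_apply]

end EndLemmas

section Lie

variable {L : Type*} [LieRing L] [LieAlgebra ℝ L] [FiniteDimensional ℝ L]

/-- If `(ad X) ^ 2` kills `Z`, then `Z` is orthogonal to the nilpotent element `X`. -/
lemma killingForm_eq_zero_of_lie_lie_eq_zero {X Z : L}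
    (hnil : IsNilpotent (LieAlgebra.ad ℝ L X)) (hZ : ⁅X, ⁅X, Z⁆⁆ = 0) :
    killingForm ℝ L X Z = 0 := by
  have : IsAddTorsionFree (Module.End ℝ L) :=
    letI : Module ℚ (Module.End ℝ L) := Module.compHom _ (algebraMap ℚ ℝ)
    .of_module_rat _
  rw [LieModule.traceForm_apply_apply]
  refine (LinearMap.isNilpotent_trace_of_isNilpotent (f := LieAlgebra.ad ℝ L X * LieAlgebra.ad ℝ L Z)
    (isNilpotent_mul_of_commute_commutator (C := LieAlgebra.ad ℝ L ⁅X, Z⁆) ?_ ?_ hnil)).eq_zero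
  · ext v; simp
  · ext v
    simp only [Module.End.mul_apply, LieAlgebra.ad_apply]
    rw [leibniz_lie X, hZ, zero_lie, zero_add]

/-- A nilpotent `X` lies in the range of `(ad X) ^ 2`. -/
lemma exists_lie_lie_eq_of_isNilpotent [LieAlgebra.IsKilling ℝ L] {X : L}
    (hnil : IsNilpotent (LieAlgebra.ad ℝ L X)) : ∃ W : L, ⁅X, ⁅X, W⁆⁆ = X := by
  have hnd := LieAlgebra.IsKilling.killingForm_nondegenerate ℝ L
  have hrefl := (LieModule.traceForm_isSymm ℝ L L).isRefl
  let T : L →ₗ[ℝ] L := LieAlgebra.ad ℝ L X ∘ₗ LieAlgebra.ad ℝ L X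
  suffices X ∈ LinearMap.range T from this
  rw [← LinearMap.BilinForm.orthogonal_orthogonal hnd hrefl (LinearMap.range T),
    LinearMap.BilinForm.mem_orthogonal_iff]
  intro Z hZ
  rw [LinearMap.BilinForm.mem_orthogonal_iff] at hZ
  refine hrefl _ _ (killingForm_eq_zero_of_lie_lie_eq_zero hnil (hnd.1 _ fun y ↦ ?_))
  have := hZ (T y) ⟨y, rfl⟩
  simp only [T, LinearMap.comp_apply, LieAlgebra.ad_apply] at this
  rw [LieModule.traceForm_comm, ← this]
  -- both applications of `ad X` move across `κ`, with two cancelling signs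
  rw [← lie_skew X ⁅X, y⁆, map_neg, LinearMap.neg_apply, LieModule.traceForm_apply_lie_apply,
    ← lie_skew X y, map_neg, LinearMap.neg_apply, neg_neg, LieModule.traceForm_apply_lie_apply]

end Lie

/-- Jacobson–Morozov: in a finite-dimensional real semisimple Lie algebra, every nonzero
nilpotent element `X` is part of an `𝔰𝔩₂`-triple `(H, X, Y)`. -/
theorem jacobson_morozov
    {L : Type*} [LieRing L] [LieAlgebra ℝ L] [FiniteDimensional ℝ L]
    [LieAlgebra.IsSemisimple ℝ L]
    (X : L) (hX : X ≠ 0) (hnil : IsNilpotent (LieAlgebra.ad ℝ L X)) :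
    ∃ H Y : L, ⁅H, X⁆ = (2 : ℝ) • X ∧ ⁅H, Y⁆ = (-2 : ℝ) • Y ∧ ⁅X, Y⁆ = H := by
  obtain ⟨W₀, hW₀⟩ := exists_lie_lie_eq_of_isNilpotent hnil
  obtain ⟨W, hW⟩ : ∃ W : L, ⁅X, ⁅X, W⁆⁆ = (-2 : ℝ) • X :=
    ⟨(-2 : ℝ) • W₀, by rw [lie_smul, lie_smul, hW₀]⟩
  obtain ⟨H, hH⟩ : ∃ H : L, ⁅X, W⁆ = H := ⟨_, rfl⟩
  rw [hH] at hW
  have hHX : ⁅H, X⁆ = (2 : ℝ) • X := by rw [← lie_skew, hW]; module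
  -- `K` is the centralizer of `X`, and `T` is `ad H + 2`, which preserves it.
  let K : Submodule ℝ L := LinearMap.ker (LieAlgebra.ad ℝ L X)
  let T : L →ₗ[ℝ] L := LieAlgebra.ad ℝ L H + (2 : ℝ) • LinearMap.id
  have hT (v : L) : T v = ⁅H, v⁆ + (2 : ℝ) • v := rfl
  have hK (v : L) : v ∈ K ↔ ⁅X, v⁆ = 0 := Iff.rfl
  have hXH (v : L) : ⁅X, ⁅H, v⁆⁆ = (-2 : ℝ) • ⁅X, v⁆ + ⁅H, ⁅X, v⁆⁆ := by
    rw [leibniz_lie, hW, smul_lie]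
  have hTK : ∀ v ∈ K, T v ∈ K := by
    intro v hv
    rw [hK] at hv ⊢
    rw [hT, lie_add, lie_smul, hXH, hv]
    simp
  have hinj : Function.Injective (T.restrict hTK) := by
    rw [← LinearMap.ker_eq_bot, LinearMap.ker_eq_bot']
    rintro ⟨v, hv⟩ h0
    have h0' : ⁅H, v⁆ + (2 : ℝ) • v = 0 := congrArg Subtype.val h0
    refine Subtype.ext (eq_zero_of_apply_eq_neg_two_smul (A := LieAlgebra.ad ℝ L X)
      (h := LieAlgebra.ad ℝ L H) (w := LieAlgebra.ad ℝ L W) (fun u ↦ ?_) (fun u ↦ ?_) hnil hv ?_)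
    · simp only [LieAlgebra.ad_apply]
      rw [leibniz_lie, hH, add_comm]
    · simp only [LieAlgebra.ad_apply]
      rw [hXH]
      module
    · rw [LieAlgebra.ad_apply, eq_neg_of_add_eq_zero_left h0', neg_smul]
  have hWK : T W ∈ K := by
    rw [hK, hT, lie_add, lie_smul, hXH, hH, lie_self]
    module
  obtain ⟨⟨Z, hZ⟩, hZW⟩ := LinearMap.injective_iff_surjective.mp hinj ⟨T W, hWK⟩
  have hZW' : ⁅H, Z⁆ + (2 : ℝ) • Z = ⁅H, W⁆ + (2 : ℝ) • W := congrArg Subtype.val hZW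
  refine ⟨H, W - Z, hHX, ?_, ?_⟩
  · rw [lie_sub, eq_sub_of_add_eq hZW']
    module
  · rw [lie_sub, hH, (hK Z).mp hZ, sub_zero]
end

section
/- Let Δ be a finite root system in a finite-dimensional real inner product space V (a finite set of nonzero vectors such that for every α ∈ Δ the orthogonal reflection s_α in the hyperplane α^⊥ maps Δ onto Δ). Fix x ∈ V, set Δ_h = {α ∈ Δ : ⟨α, x⟩ = 0} and Δ_x⁺ = {α ∈ Δ : ⟨α, x⟩ > 0}, and let W_h be the subgroup of the orthogonal group of V generated by the reflections s_α with α ∈ Δ_h. Let a : Δ → ℝ be a function satisfying a(wα) = a(α) for all w ∈ W_h and α ∈ Δ. Then the vector ξ = Σ_{α ∈ Δ_x⁺} a(α)·α is fixed by every element of W_h; consequently ⟨ξ, β⟩ = 0 for every β ∈ Δ_h. -/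
/-!
A reflection `s_β` with `⟪β, x⟫ = 0` fixes `x`, so, being an isometry, it preserves the value
`⟪·, x⟫`; as it also permutes `Δ`, it permutes `Δ_x⁺`. Since `a` is `W_h`-invariant,
applying `s_β` merely reorders the terms of `ξ`. Hence the generators of `W_h`, and so all of
`W_h`, fix `ξ`. Finally `s_β ξ = ξ` and `s_β β = -β` give `⟪ξ, β⟫ = -⟪ξ, β⟫`.
-/

open scoped RealInnerProductSpace

/-- Let `Δ` be a finite root system in a real inner product space `V`, `x ∈ V`,
`Δ_h = {α ∈ Δ | ⟪α,x⟫ = 0}`, `Δ_x⁺ = {α ∈ Δ | ⟪α,x⟫ > 0}`, and let `W_h` be the group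
generated by the reflections `s_α`, `α ∈ Δ_h`. If `a : Δ → ℝ` is `W_h`-invariant, then
`ξ = Σ_{α ∈ Δ_x⁺} a(α)·α` is fixed by `W_h`; consequently `⟪ξ, β⟫ = 0` for all `β ∈ Δ_h`. -/
theorem weyl_invariant_vector_perpendicular
    {V : Type*} [NormedAddCommGroup V] [InnerProductSpace ℝ V] [FiniteDimensional ℝ V]
    (Δ : Set V) (hfin : Δ.Finite) (h0 : (0 : V) ∉ Δ)
    (r : V → (V ≃ₗᵢ[ℝ] V))
    (hr : ∀ α ∈ Δ, ∀ v : V, r α v = v - (2 * ⟪v, α⟫ / ⟪α, α⟫) • α)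
    (hroot : ∀ α ∈ Δ, (⇑(r α)) '' Δ = Δ)
    (x : V)
    (a : V → ℝ)
    (ha : ∀ w ∈ Subgroup.closure {g : V ≃ₗᵢ[ℝ] V | ∃ α ∈ Δ, ⟪α, x⟫ = 0 ∧ g = r α},
      ∀ α ∈ Δ, a (w α) = a α) :
    (∀ w ∈ Subgroup.closure {g : V ≃ₗᵢ[ℝ] V | ∃ α ∈ Δ, ⟪α, x⟫ = 0 ∧ g = r α},
      w (∑ᶠ α ∈ {β ∈ Δ | 0 < ⟪β, x⟫}, a α • α) = ∑ᶠ α ∈ {β ∈ Δ | 0 < ⟪β, x⟫}, a α • α) ∧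
    (∀ β ∈ Δ, ⟪β, x⟫ = 0 → ⟪∑ᶠ α ∈ {β ∈ Δ | 0 < ⟪β, x⟫}, a α • α, β⟫ = 0) := by
  have gen : ∀ β ∈ Δ, ⟪β, x⟫ = 0 →
      r β (∑ᶠ α ∈ {β ∈ Δ | 0 < ⟪β, x⟫}, a α • α) = ∑ᶠ α ∈ {β ∈ Δ | 0 < ⟪β, x⟫}, a α • α := by
    intro β hβ hβx
    have hx : r β x = x := by
      rw [hr β hβ, real_inner_comm, hβx]; simp
    have hinner : ∀ v, ⟪r β v, x⟫ = ⟪v, x⟫ := fun v => by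
      conv_lhs => rw [← hx]
      exact (r β).inner_map_map v x
    have hbij : Set.BijOn (r β) {β ∈ Δ | 0 < ⟪β, x⟫} {β ∈ Δ | 0 < ⟪β, x⟫} := by
      refine ⟨fun v hv => ⟨hroot β hβ ▸ Set.mem_image_of_mem _ hv.1, ?_⟩,
        (r β).injective.injOn, fun v hv => ?_⟩
      · rw [hinner]; exact hv.2
      · obtain ⟨u, hu, rfl⟩ := (hroot β hβ).symm ▸ hv.1
        exact ⟨u, ⟨hu, hinner u ▸ hv.2⟩, rfl⟩
    have hfin' : {β ∈ Δ | 0 < ⟪β, x⟫}.Finite := hfin.subset fun _ h => h.1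
    have hmap := (r β).toLinearEquiv.toLinearMap.toAddMonoidHom.map_finsum_mem
      (fun α => a α • α) hfin'
    refine hmap.trans (finsum_mem_eq_of_bijOn (r β) hbij fun α hα => ?_)
    rw [ha (r β) (Subgroup.subset_closure ⟨β, hβ, hβx, rfl⟩) α hα.1]
    exact (r β).map_smul (a α) α
  refine ⟨fun w hw => ?_, fun β hβ hβx => ?_⟩
  · induction hw using Subgroup.closure_induction with
    | mem g hg => obtain ⟨α, hα, hαx, rfl⟩ := hg; exact gen α hα hαx
    | one => rfl
    | mul g h _ _ hg hh => exact (congrArg g hh).trans hg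
    | inv g _ hg => exact g.symm_apply_eq.mpr hg.symm
  · have hββ : ⟪β, β⟫ ≠ 0 := inner_self_ne_zero.mpr fun h => h0 (h ▸ hβ)
    have hneg : r β β = -β := by
      rw [hr β hβ, mul_div_assoc, div_self hββ, mul_one, two_smul]; abel
    have h := (r β).inner_map_map (∑ᶠ α ∈ {β ∈ Δ | 0 < ⟪β, x⟫}, a α • α) β
    rw [gen β hβ hβx, hneg, inner_neg_right] at h
    linarith
end
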